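/- arXiv:2109.02835 — 2 statements merged into one kernel-verified Lean document; each statement's English description precedes it below -/
import Mathlib

section
/- Let A, 𝔤(A), L, the scalar pairs (X_e, Y_e), the space V[L], the operators x_i·, y_i·, h_i·, and the notions 'A-structured', 'diamond relations', 'crossing relations' be as in the context. Then the following are equivalent: (a) L is A-structured and the scalar pairs satisfy all diamond relations and all crossing relations; (b) there exists a Lie algebra homomorphism φ from 𝔤(A) to the endomorphism algebra of V[L] such that for every i ∈ {1,…,n}, φ(x_i), φ(y_i), φ(h_i) are, respectively, the operators x_i·, y_i·, h_i· (equivalently, these operators make V[L] a 𝔤(A)-module for which {v_t} is a weight basis and L with its scalar pairs is the representation diagram). -/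
noncomputable section

attribute [local instance] Classical.propDecidable

namespace CL

/-- Generators `x_i, y_i, h_i` for the Serre presentation. -/
inductive SGen (I : Type) : Type
  | X : I → SGen I
  | Y : I → SGen I
  | H : I → SGen I

variable {I : Type}

/-- The generator `x_i` in the free Lie algebra. -/
def gx (i : I) : FreeLieAlgebra ℂ (SGen I) := FreeLieAlgebra.of ℂ (SGen.X i)

/-- The generator `y_i` in the free Lie algebra. -/
def gy (i : I) : FreeLieAlgebra ℂ (SGen I) := FreeLieAlgebra.of ℂ (SGen.Y i)

/-- The generator `h_i` in the free Lie algebra. -/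
def gh (i : I) : FreeLieAlgebra ℂ (SGen I) := FreeLieAlgebra.of ℂ (SGen.H i)

/-- The Serre relations determined by the matrix `A`:
`[h_i,h_j] = 0`; `[x_i,y_i] = h_i` and `[x_i,y_j] = 0` for `i ≠ j`;
`[h_i,x_j] = A_{j,i}·x_j`; `[h_i,y_j] = −A_{j,i}·y_j`; and
`ad(x_i)^{1−A_{j,i}}(x_j) = 0 = ad(y_i)^{1−A_{j,i}}(y_j)` for `i ≠ j`. -/
def serreSet (A : I → I → ℤ) : Set (FreeLieAlgebra ℂ (SGen I)) :=
  {z | ∃ i j : I, z = ⁅gh i, gh j⁆} ∪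
  {z | ∃ i : I, z = ⁅gx i, gy i⁆ - gh i} ∪
  {z | ∃ i j : I, i ≠ j ∧ z = ⁅gx i, gy j⁆} ∪
  {z | ∃ i j : I, z = ⁅gh i, gx j⁆ - (A j i) • gx j} ∪
  {z | ∃ i j : I, z = ⁅gh i, gy j⁆ + (A j i) • gy j} ∪
  {z | ∃ i j : I, i ≠ j ∧
    z = ((LieAlgebra.ad ℂ (FreeLieAlgebra ℂ (SGen I)) (gx i)) ^ (1 - A j i).toNat) (gx j)} ∪
  {z | ∃ i j : I, i ≠ j ∧
    z = ((LieAlgebra.ad ℂ (FreeLieAlgebra ℂ (SGen I)) (gy i)) ^ (1 - A j i).toNat) (gy j)}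

/-- The Lie ideal generated by the Serre relations. -/
def serreIdeal (A : I → I → ℤ) : LieIdeal ℂ (FreeLieAlgebra ℂ (SGen I)) :=
  LieSubmodule.lieSpan ℂ _ (serreSet A)

/-- The Lie algebra `𝔤(A)` presented by generators `x_i, y_i, h_i` subject to
the Serre relations determined by `A`. -/
abbrev gLie (A : I → I → ℤ) : Type := FreeLieAlgebra ℂ (SGen I) ⧸ serreIdeal A

/-- The image of `x_i` in `𝔤(A)`. -/
def px (A : I → I → ℤ) (i : I) : gLie A := LieSubmodule.Quotient.mk (N := serreIdeal A) (gx i)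

/-- The image of `y_i` in `𝔤(A)`. -/
def py (A : I → I → ℤ) (i : I) : gLie A := LieSubmodule.Quotient.mk (N := serreIdeal A) (gy i)

/-- The image of `h_i` in `𝔤(A)`. -/
def ph (A : I → I → ℤ) (i : I) : gLie A := LieSubmodule.Quotient.mk (N := serreIdeal A) (gh i)

end CL

/-- `A` is the Cartan matrix of (a base of) a finite reduced crystallographic root system
in an `n`-dimensional real inner product space. -/
def IsCartanMatrixOfRootSystem (n : ℕ) (A : Fin n → Fin n → ℤ) : Prop :=
  ∃ (Φ : Finset (EuclideanSpace ℝ (Fin n))) (α : Fin n → EuclideanSpace ℝ (Fin n)),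
    (0 : EuclideanSpace ℝ (Fin n)) ∉ Φ ∧
    Submodule.span ℝ (Φ : Set (EuclideanSpace ℝ (Fin n))) = ⊤ ∧
    (∀ β ∈ Φ, ∀ c : ℝ, c • β ∈ Φ → c = 1 ∨ c = -1) ∧
    (∀ β ∈ Φ, ∀ δ ∈ Φ, ∃ z : ℤ,
      2 * (inner ℝ β δ : ℝ) = (z : ℝ) * (inner ℝ δ δ : ℝ)) ∧
    (∀ β ∈ Φ, ∀ δ ∈ Φ,
      δ - (2 * (inner ℝ δ β : ℝ) / (inner ℝ β β : ℝ)) • β ∈ Φ) ∧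
    (∀ i, α i ∈ Φ) ∧ LinearIndependent ℝ α ∧
    (∀ β ∈ Φ, ∃ cf : Fin n → ℤ, ((∀ i, 0 ≤ cf i) ∨ (∀ i, cf i ≤ 0)) ∧
      β = ∑ i, (cf i : ℝ) • α i) ∧
    (∀ i j, (A i j : ℝ) * (inner ℝ (α j) (α j) : ℝ) = 2 * (inner ℝ (α i) (α j) : ℝ))

namespace EL

variable {n : ℕ} {L : Type} [Fintype L] [Lattice L]

/-- The color-`i` covering edges of the edge-colored lattice `(L, γ)`. -/
def ced (γ : L → L → Fin n) (i : Fin n) (r s : L) : Prop := r ⋖ s ∧ γ r s = i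

/-- The connected component of `t` in the graph of color-`i` covering edges. -/
def comp (γ : L → L → Fin n) (i : Fin n) (t : L) : Set L :=
  {s | Relation.ReflTransGen (fun a b => ced γ i a b ∨ ced γ i b a) t s}

/-- The integer `m_i(t) = (ρ(t) − min ρ on comp_i(t)) − (max ρ on comp_i(t) − ρ(t))`. -/
def mwt (γ : L → L → Fin n) (ρ : L → ℕ) (i : Fin n) (t : L) : ℤ :=
  ((ρ t : ℤ) - ((sInf (ρ '' comp γ i t) : ℕ) : ℤ)) -
    (((sSup (ρ '' comp γ i t) : ℕ) : ℤ) - (ρ t : ℤ))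

/-- The raising operator `x_i·` on `V[L]` determined by the edge coefficients `X`. -/
def opX (γ : L → L → Fin n) (X : L → L → ℂ) (i : Fin n) : Module.End ℂ (L → ℂ) :=
  Matrix.mulVecLin fun s r => if ced γ i r s then X r s else 0

/-- The lowering operator `y_i·` on `V[L]` determined by the edge coefficients `Y`. -/
def opY (γ : L → L → Fin n) (Y : L → L → ℂ) (i : Fin n) : Module.End ℂ (L → ℂ) :=
  Matrix.mulVecLin fun r s => if ced γ i r s then Y r s else 0

/-- The diagonal operator `h_i·` on `V[L]`, acting on `v_t` by the eigenvalue `m_i(t)`. -/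
def opH (γ : L → L → Fin n) (ρ : L → ℕ) (i : Fin n) : Module.End ℂ (L → ℂ) :=
  Matrix.mulVecLin (Matrix.diagonal fun t => ((mwt γ ρ i t : ℤ) : ℂ))

end EL

attribute [local instance 100] LieRing.ofAssociativeRing

/-!
The weight relations `[h, x]` and `[h, y]` say, edge by edge, that weights change along an edge by a
row of `A`. The matrix of `[x_i, y_j]` has nonzero off-diagonal entries only at pairs of elements
with a common lower cover or a common upper cover; in a modular lattice such pairs are the middles
of diamonds, where the entry is the defect of a diamond relation, while the diagonal entries give
the crossing relations. The remaining relations `ad(x_i)^{1 - A_{j,i}}(x_j) = 0` come for free: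
`x_j` is a lowest weight vector for the `sl₂`-triple of index `i` acting on the finite-dimensional
space of endomorphisms.
-/

namespace CL

section Presentation

variable {R F K : Type*} [CommRing R] [LieRing F] [LieAlgebra R F] [LieRing K] [LieAlgebra R K]

theorem map_ad_pow (f : F →ₗ⁅R⁆ K) (a b : F) (k : ℕ) :
    f ((LieAlgebra.ad R F a ^ k) b) = (LieAlgebra.ad R K (f a) ^ k) (f b) := by
  have h : LieAlgebra.ad R K (f a) ∘ₗ f.toLinearMap = f.toLinearMap ∘ₗ LieAlgebra.ad R F a := by
    ext
    simp
  exact (LinearMap.congr_fun (Module.End.commute_pow_left_of_commute h k) b).symm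

theorem exists_quotient_lieSpan_lieHom_iff (s : Set F) (f : F →ₗ⁅R⁆ K) :
    (∃ φ : (F ⧸ LieSubmodule.lieSpan R F s) →ₗ⁅R⁆ K,
      ∀ a, φ (LieSubmodule.Quotient.mk a) = f a) ↔ ∀ z ∈ s, f z = 0 := by
  constructor
  · rintro ⟨φ, hφ⟩ z hz
    rw [← hφ, LieSubmodule.Quotient.mk_eq_zero'.2 (LieSubmodule.subset_lieSpan hz), map_zero]
  · intro hs
    have hker : LieSubmodule.lieSpan R F s ≤ f.ker := LieSubmodule.lieSpan_le.2 hs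
    refine ⟨{ (LieSubmodule.lieSpan R F s).toSubmodule.liftQ f.toLinearMap hker with
      map_lie' := fun {a b} => ?_ }, fun _ => rfl⟩
    induction a using Submodule.Quotient.induction_on with | _ a
    induction b using Submodule.Quotient.induction_on with | _ b
    exact f.map_lie a b

end Presentation

section Sl2

variable {𝕜 K M : Type*} [Field 𝕜] [CharZero 𝕜] [LieRing K] [LieAlgebra 𝕜 K]
  [AddCommGroup M] [Module 𝕜 M] [LieRingModule K M] [LieModule 𝕜 K M] [FiniteDimensional 𝕜 M]

theorem toEnd_pow_toNat_eq_zero_of_lowest_weight {x y h : K} {v : M} {c : ℤ} (hxy : ⁅x, y⁆ = h)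
    (hx : ⁅h, x⁆ = (2 : ℤ) • x) (hy : ⁅h, y⁆ = -((2 : ℤ) • y)) (hyv : ⁅y, v⁆ = 0)
    (hv : ⁅h, v⁆ = c • v) : (LieModule.toEnd 𝕜 K M x ^ (1 - c).toNat) v = 0 := by
  rcases eq_or_ne v 0 with rfl | hv0
  · exact map_zero _
  rcases eq_or_ne h 0 with rfl | hh
  · have hx0 : x = 0 := by
      rw [zero_lie, ← Int.cast_smul_eq_zsmul 𝕜, eq_comm] at hx
      simpa using hx
    have hc : c = 0 := by
      rw [zero_lie, ← Int.cast_smul_eq_zsmul 𝕜, eq_comm] at hv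
      simpa [hv0] using hv
    simp [hx0, hc]
  · have triple : IsSl2Triple h x y := ⟨hh, hxy, mod_cast hx, mod_cast hy⟩
    have primitive : triple.symm.HasPrimitiveVectorWith v ((-c : ℤ) : 𝕜) :=
      ⟨hv0, by rw [neg_lie, hv, Int.cast_smul_eq_zsmul, neg_smul], hyv⟩
    obtain ⟨k, hk⟩ := primitive.exists_nat
    have hck : -c = k := mod_cast hk
    rw [show (1 - c).toNat = k + 1 by lia]
    exact primitive.pow_toEnd_f_eq_zero_of_eq_nat hk

end Sl2

variable {I : Type} {A : I → I → ℤ}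

/-- The relations of Serre's presentation of `𝔤(A)` other than those on powers of `ad (x i)` and
`ad (y i)`, for families `x`, `y`, `h` of elements of a Lie ring. -/
structure ChevalleyRelations {K : Type*} [LieRing K] (A : I → I → ℤ) (x y h : I → K) : Prop where
  lie_h_h : ∀ i j, ⁅h i, h j⁆ = 0
  lie_x_y_self : ∀ i, ⁅x i, y i⁆ = h i
  lie_x_y_of_ne : ∀ i j, i ≠ j → ⁅x i, y j⁆ = 0
  lie_h_x : ∀ i j, ⁅h i, x j⁆ = A j i • x j
  lie_h_y : ∀ i j, ⁅h i, y j⁆ = -(A j i • y j)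

namespace ChevalleyRelations

section Ring

variable {K : Type*} [LieRing K] {x y h : I → K}

theorem symm (S : ChevalleyRelations A x y h) : ChevalleyRelations A y x (-h) where
  lie_h_h i j := by simp [S.lie_h_h]
  lie_x_y_self i := by rw [← lie_skew, S.lie_x_y_self, Pi.neg_apply]
  lie_x_y_of_ne i j hij := by rw [← lie_skew, S.lie_x_y_of_ne j i hij.symm, neg_zero]
  lie_h_x i j := by rw [Pi.neg_apply, neg_lie, S.lie_h_y, neg_neg]
  lie_h_y i j := by rw [Pi.neg_apply, neg_lie, S.lie_h_x]

theorem map_iff {R K' : Type*} [CommRing R] [LieAlgebra R K] [LieRing K'] [LieAlgebra R K']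
    {f : K →ₗ⁅R⁆ K'} (hf : Function.Injective f) :
    ChevalleyRelations A (fun i => f (x i)) (fun i => f (y i)) (fun i => f (h i)) ↔
      ChevalleyRelations A x y h := by
  constructor <;> rintro ⟨hh, hxy, hxy', hhx, hhy⟩
  · simp only [← LieHom.map_lie, ← map_zsmul, ← map_neg, hf.eq_iff, map_eq_zero_iff f hf]
      at hh hxy hxy' hhx hhy
    exact ⟨hh, hxy, hxy', hhx, hhy⟩
  · constructor <;>
      simpa only [← LieHom.map_lie, ← map_zsmul, ← map_neg, hf.eq_iff, map_eq_zero_iff f hf]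

end Ring

variable {𝕜 K : Type*} [Field 𝕜] [CharZero 𝕜] [LieRing K] [LieAlgebra 𝕜 K]
  [FiniteDimensional 𝕜 K] {x y h : I → K}

theorem ad_pow_eq_zero (hA : ∀ i, A i i = 2) (S : ChevalleyRelations A x y h) {i j : I}
    (hij : i ≠ j) : (LieAlgebra.ad 𝕜 K (x i) ^ (1 - A j i).toNat) (x j) = 0 :=
  toEnd_pow_toNat_eq_zero_of_lowest_weight (S.lie_x_y_self i) (by rw [S.lie_h_x, hA])
    (by rw [S.lie_h_y, hA]) (S.symm.lie_x_y_of_ne i j hij) (S.lie_h_x i j)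

end ChevalleyRelations

section UniversalProperty

theorem forall_mem_serreSet_iff {p : FreeLieAlgebra ℂ (SGen I) → Prop} :
    (∀ z ∈ serreSet A, p z) ↔
      (∀ i j : I, p ⁅gh i, gh j⁆) ∧
      (∀ i : I, p (⁅gx i, gy i⁆ - gh i)) ∧
      (∀ i j : I, i ≠ j → p ⁅gx i, gy j⁆) ∧
      (∀ i j : I, p (⁅gh i, gx j⁆ - A j i • gx j)) ∧
      (∀ i j : I, p (⁅gh i, gy j⁆ + A j i • gy j)) ∧
      (∀ i j : I, i ≠ j →
        p ((LieAlgebra.ad ℂ (FreeLieAlgebra ℂ (SGen I)) (gx i) ^ (1 - A j i).toNat) (gx j))) ∧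
      ∀ i j : I, i ≠ j →
        p ((LieAlgebra.ad ℂ (FreeLieAlgebra ℂ (SGen I)) (gy i) ^ (1 - A j i).toNat) (gy j)) := by
  simp only [serreSet, Set.mem_union, Set.mem_ofPred_eq, or_imp, forall_and, and_assoc,
    forall_exists_index, and_imp, @forall_comm (FreeLieAlgebra ℂ (SGen I)), forall_eq]

variable {K : Type*} [LieRing K] [LieAlgebra ℂ K]

/-- The homomorphism from the free Lie algebra on the Serre generators that sends `x_i`, `y_i`,
`h_i` to the given elements `x i`, `y i`, `h i`. -/
def freeLift (x y h : I → K) : FreeLieAlgebra ℂ (SGen I) →ₗ⁅ℂ⁆ K :=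
  FreeLieAlgebra.lift ℂ fun
    | .X i => x i
    | .Y i => y i
    | .H i => h i

variable (x y h : I → K)

@[simp]
theorem freeLift_gx (i : I) : freeLift x y h (gx i) = x i :=
  FreeLieAlgebra.lift_of_apply ..

@[simp]
theorem freeLift_gy (i : I) : freeLift x y h (gy i) = y i :=
  FreeLieAlgebra.lift_of_apply ..

@[simp]
theorem freeLift_gh (i : I) : freeLift x y h (gh i) = h i :=
  FreeLieAlgebra.lift_of_apply ..

variable {x y h}

theorem lieHom_gens_eq_iff (φ : gLie A →ₗ⁅ℂ⁆ K) :
    (∀ i, φ (px A i) = x i ∧ φ (py A i) = y i ∧ φ (ph A i) = h i) ↔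
      ∀ a, φ (LieSubmodule.Quotient.mk a) = freeLift x y h a := by
  constructor
  · intro hφ
    let π : FreeLieAlgebra ℂ (SGen I) →ₗ⁅ℂ⁆ gLie A :=
      { (serreIdeal A).toSubmodule.mkQ with map_lie' := rfl }
    refine LieHom.congr_fun (f := φ.comp π) (FreeLieAlgebra.hom_ext ?_)
    rintro (i | i | i)
    · exact (hφ i).1.trans (freeLift_gx x y h i).symm
    · exact (hφ i).2.1.trans (freeLift_gy x y h i).symm
    · exact (hφ i).2.2.trans (freeLift_gh x y h i).symm
  · intro hφ i
    exact ⟨(hφ _).trans (freeLift_gx ..), (hφ _).trans (freeLift_gy ..),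
      (hφ _).trans (freeLift_gh ..)⟩

theorem forall_mem_serreSet_freeLift_eq_zero_iff :
    (∀ z ∈ serreSet A, freeLift x y h z = 0) ↔ ChevalleyRelations A x y h ∧
      (∀ i j, i ≠ j → (LieAlgebra.ad ℂ K (x i) ^ (1 - A j i).toNat) (x j) = 0) ∧
      ∀ i j, i ≠ j → (LieAlgebra.ad ℂ K (y i) ^ (1 - A j i).toNat) (y j) = 0 := by
  simp only [forall_mem_serreSet_iff, map_sub, map_add, map_zsmul, LieHom.map_lie, map_ad_pow,
    freeLift_gx, freeLift_gy, freeLift_gh, sub_eq_zero, add_eq_zero_iff_eq_neg]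
  exact ⟨fun ⟨hh, hxy, hxy', hhx, hhy, sx, sy⟩ => ⟨⟨hh, hxy, hxy', hhx, hhy⟩, sx, sy⟩,
    fun ⟨⟨hh, hxy, hxy', hhx, hhy⟩, sx, sy⟩ => ⟨hh, hxy, hxy', hhx, hhy, sx, sy⟩⟩

theorem exists_lieHom_iff_chevalleyRelations [FiniteDimensional ℂ K] (hA : ∀ i, A i i = 2) :
    (∃ φ : gLie A →ₗ⁅ℂ⁆ K, ∀ i, φ (px A i) = x i ∧ φ (py A i) = y i ∧ φ (ph A i) = h i) ↔
      ChevalleyRelations A x y h := by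
  simp only [lieHom_gens_eq_iff]
  refine (exists_quotient_lieSpan_lieHom_iff (serreSet A) (freeLift x y h)).trans ?_
  rw [forall_mem_serreSet_freeLift_eq_zero_iff, and_iff_left_iff_imp]
  exact fun S => ⟨fun _ _ => S.ad_pow_eq_zero hA, fun _ _ => S.symm.ad_pow_eq_zero hA⟩

end UniversalProperty

end CL

theorem IsCartanMatrixOfRootSystem.apply_self {n : ℕ} {A : Fin n → Fin n → ℤ}
    (hA : IsCartanMatrixOfRootSystem n A) (i : Fin n) : A i i = 2 := by
  obtain ⟨-, α, -, -, -, -, -, -, hα, -, h⟩ := hA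
  have hi : (inner ℝ (α i) (α i) : ℝ) ≠ 0 := inner_self_ne_zero.2 (hα.ne_zero i)
  exact_mod_cast mul_right_cancel₀ hi (h i i)

namespace EL

open Matrix CL

section Definitions

variable {I L R : Type*} [Preorder L]

/-- The covering relations of colour `i`; `EL.ced` with an arbitrary type of colours. -/
def ColoredCovBy (γ : L → L → I) (i : I) (r s : L) : Prop := r ⋖ s ∧ γ r s = i

/-- Opposite edges of every diamond have the same colour. -/
def IsDiamondColored (γ : L → L → I) : Prop :=
  ∀ q r s t : L, q ⋖ r → q ⋖ s → r ⋖ t → s ⋖ t → r ≠ s → γ q r = γ s t ∧ γ q s = γ r t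

/-- `A`-structuredness with respect to a weight function `m`, which need not be `EL.mwt`. -/
def IsStructured (A : I → I → ℤ) (γ : L → L → I) (m : I → L → ℤ) : Prop :=
  ∀ r s : L, r ⋖ s → ∀ j, m j s = m j r + A (γ r s) j

/-- The diamond relations for the scalar pairs `(X r s, Y r s)`. -/
def DiamondRelations [Mul R] (X Y : L → L → R) : Prop :=
  ∀ q r s t : L, q ⋖ r → q ⋖ s → r ⋖ t → s ⋖ t → r ≠ s → Y s t * X r t = X q s * Y q r

/-- The crossing relations for the scalar pairs `(X r s, Y r s)`, with respect to a weight
function `m`. -/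
def CrossingRelations [Fintype L] [Ring R] (γ : L → L → I) (m : I → L → ℤ) (X Y : L → L → R) :
    Prop :=
  ∀ (i : I) (t : L), (m i t : R) =
    (∑ q : L, if ColoredCovBy γ i q t then X q t * Y q t else 0) -
    (∑ s : L, if ColoredCovBy γ i t s then X t s * Y t s else 0)

/-- The matrix supported on the edges of colour `i` with entry `Z r s` at the edge `r ⋖ s`. On
column vectors `edgeMatrix γ Y i` is the lowering operator given by `Y`, and the transpose of
`edgeMatrix γ X i` is the raising operator given by `X`. -/
def edgeMatrix [Zero R] (γ : L → L → I) (Z : L → L → R) (i : I) : Matrix L L R :=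
  fun r s => if ColoredCovBy γ i r s then Z r s else 0

theorem edgeMatrix_apply [Zero R] (γ : L → L → I) (Z : L → L → R) (i : I) (r s : L) :
    edgeMatrix γ Z i r s = if ColoredCovBy γ i r s then Z r s else 0 :=
  rfl

theorem edgeMatrix_apply_of_not_covBy [Zero R] (γ : L → L → I) (Z : L → L → R) (i : I) {r s : L}
    (h : ¬r ⋖ s) : edgeMatrix γ Z i r s = 0 :=
  if_neg fun hrs => h hrs.1

end Definitions

section Weights

variable {I L R : Type*} [Preorder L] [Fintype L] [CommRing R] {γ : L → L → I}

theorem lie_diagonal_edgeMatrix_iff [NoZeroDivisors R] {d : L → R} {Z : L → L → R} {c : R}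
    {j : I} : ⁅diagonal d, edgeMatrix γ Z j⁆ = c • edgeMatrix γ Z j ↔
      ∀ r s, ColoredCovBy γ j r s → Z r s ≠ 0 → d r - d s = c := by
  simp only [← Matrix.ext_iff, Ring.lie_def, Matrix.sub_apply, diagonal_mul, mul_diagonal,
    Matrix.smul_apply, smul_eq_mul]
  refine forall₂_congr fun r s => ?_
  rw [mul_comm _ (d s), ← sub_mul, mul_eq_mul_right_iff, edgeMatrix_apply]
  split_ifs <;> simp_all [or_iff_not_imp_right]

theorem lie_diagonal_edgeMatrix_transpose_iff {d : L → R} {Z : L → L → R} {c : R} {j : I} :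
    ⁅diagonal d, (edgeMatrix γ Z j)ᵀ⁆ = c • (edgeMatrix γ Z j)ᵀ ↔
      ⁅diagonal d, edgeMatrix γ Z j⁆ = -c • edgeMatrix γ Z j := by
  rw [← transpose_inj, neg_smul, ← neg_eq_iff_eq_neg, lie_skew]
  simp only [Ring.lie_def, transpose_sub, transpose_mul, transpose_smul, transpose_transpose,
    diagonal_transpose]

theorem lie_diagonal_edgeMatrix_iff_isStructured [NoZeroDivisors R] [CharZero R] {A : I → I → ℤ}
    {m : I → L → ℤ} {X Y : L → L → R} (hXY : ∀ r s : L, r ⋖ s → ¬(X r s = 0 ∧ Y r s = 0)) :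
    ((∀ i j, ⁅diagonal fun t => (m i t : R), (edgeMatrix γ X j)ᵀ⁆ =
        A j i • (edgeMatrix γ X j)ᵀ) ∧
      ∀ i j, ⁅diagonal fun t => (m i t : R), edgeMatrix γ Y j⁆ = -(A j i • edgeMatrix γ Y j)) ↔
      IsStructured A γ m := by
  have weight_iff (i j : I) (r s : L) :
      (m i r : R) - m i s = -(A j i : R) ↔ m i s = m i r + A j i := by
    norm_cast
    constructor <;> intro h <;> linarith
  simp only [← Int.cast_smul_eq_zsmul R, ← neg_smul, lie_diagonal_edgeMatrix_transpose_iff,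
    lie_diagonal_edgeMatrix_iff, weight_iff]
  constructor
  · rintro ⟨hX, hY⟩ r s hrs j
    by_cases hX0 : X r s = 0
    · exact hY j _ r s ⟨hrs, rfl⟩ fun hY0 => hXY r s hrs ⟨hX0, hY0⟩
    · exact hX j _ r s ⟨hrs, rfl⟩ hX0
  · intro h
    constructor <;> rintro i _ r s ⟨hrs, rfl⟩ - <;> exact h r s hrs i

end Weights

section Commutators

variable {I L R : Type*} [Fintype L] [CommRing R]

section Diagonal

variable [Preorder L] (γ : L → L → I) (X Y : L → L → R)

theorem lie_edgeMatrix_apply_self (i : I) (t : L) :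
    ⁅(edgeMatrix γ X i)ᵀ, edgeMatrix γ Y i⁆ t t =
      (∑ q : L, if ColoredCovBy γ i q t then X q t * Y q t else 0) -
      (∑ s : L, if ColoredCovBy γ i t s then X t s * Y t s else 0) := by
  simp only [Ring.lie_def, Matrix.sub_apply, Matrix.mul_apply, transpose_apply, edgeMatrix_apply,
    ite_zero_mul_ite_zero, and_self, mul_comm]

theorem lie_edgeMatrix_apply_self_of_ne {i j : I} (hij : i ≠ j) (t : L) :
    ⁅(edgeMatrix γ X i)ᵀ, edgeMatrix γ Y j⁆ t t = 0 := by
  have not_both (r s : L) : ¬(ColoredCovBy γ i r s ∧ ColoredCovBy γ j r s) :=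
    fun ⟨hi, hj⟩ => hij (hi.2.symm.trans hj.2)
  have not_both' (r s : L) : ¬(ColoredCovBy γ j r s ∧ ColoredCovBy γ i r s) :=
    fun h => not_both r s h.symm
  simp only [Ring.lie_def, Matrix.sub_apply, Matrix.mul_apply, transpose_apply, edgeMatrix_apply,
    ite_zero_mul_ite_zero, not_both, not_both', if_false, Finset.sum_const_zero, sub_zero]

end Diagonal

variable [Lattice L] {γ : L → L → I}

section Products

variable (γ) (X Y : L → L → R) (i j : I) {r s : L}

theorem edgeMatrix_transpose_mul_apply_of_ne (hrs : r ≠ s) :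
    ((edgeMatrix γ X i)ᵀ * edgeMatrix γ Y j) s r =
      edgeMatrix γ X i (r ⊓ s) s * edgeMatrix γ Y j (r ⊓ s) r := by
  rw [Matrix.mul_apply]
  refine Finset.sum_eq_single_of_mem _ (Finset.mem_univ _) fun q _ hq => ?_
  by_cases hqs : q ⋖ s
  · have hqr : ¬q ⋖ r := fun hqr => hq (hqr.wcovBy.inf_eq hqs.wcovBy hrs).symm
    rw [edgeMatrix_apply_of_not_covBy γ Y j hqr, mul_zero]
  · rw [transpose_apply, edgeMatrix_apply_of_not_covBy γ X i hqs, zero_mul]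

theorem edgeMatrix_mul_transpose_apply_of_ne (hrs : r ≠ s) :
    (edgeMatrix γ Y j * (edgeMatrix γ X i)ᵀ) s r =
      edgeMatrix γ Y j s (r ⊔ s) * edgeMatrix γ X i r (r ⊔ s) := by
  rw [Matrix.mul_apply]
  refine Finset.sum_eq_single_of_mem _ (Finset.mem_univ _) fun t _ ht => ?_
  by_cases hst : s ⋖ t
  · have hrt : ¬r ⋖ t := fun hrt => ht (hrt.wcovBy.sup_eq hst.wcovBy hrs).symm
    rw [transpose_apply, edgeMatrix_apply_of_not_covBy γ X i hrt, mul_zero]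
  · rw [edgeMatrix_apply_of_not_covBy γ Y j hst, zero_mul]

end Products

theorem lie_edgeMatrix_apply_of_ne (X Y : L → L → R) (i j : I) {r s : L} (hrs : r ≠ s) :
    ⁅(edgeMatrix γ X i)ᵀ, edgeMatrix γ Y j⁆ s r =
      edgeMatrix γ X i (r ⊓ s) s * edgeMatrix γ Y j (r ⊓ s) r -
        edgeMatrix γ Y j s (r ⊔ s) * edgeMatrix γ X i r (r ⊔ s) := by
  rw [Ring.lie_def, Matrix.sub_apply, edgeMatrix_transpose_mul_apply_of_ne γ X Y i j hrs,
    edgeMatrix_mul_transpose_apply_of_ne γ X Y i j hrs]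

theorem lie_edgeMatrix_apply_of_diamond (hγ : IsDiamondColored γ) (X Y : L → L → R) (i j : I)
    {q r s t : L} (hqr : q ⋖ r) (hqs : q ⋖ s) (hrt : r ⋖ t) (hst : s ⋖ t) (hrs : r ≠ s) :
    ⁅(edgeMatrix γ X i)ᵀ, edgeMatrix γ Y j⁆ s r =
      if γ q s = i ∧ γ q r = j then X q s * Y q r - Y s t * X r t else 0 := by
  obtain ⟨hcolor, hcolor'⟩ := hγ q r s t hqr hqs hrt hst hrs
  rw [lie_edgeMatrix_apply_of_ne X Y i j hrs, hqr.wcovBy.inf_eq hqs.wcovBy hrs,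
    hrt.wcovBy.sup_eq hst.wcovBy hrs]
  simp only [edgeMatrix_apply, ColoredCovBy, hqr, hqs, hrt, hst, true_and, ← hcolor, ← hcolor']
  split_ifs <;> simp_all

variable [IsWeakLowerModularLattice L]

theorem lie_edgeMatrix_apply_eq_zero (X Y : L → L → R) (i j : I) {r s : L} (hrs : r ≠ s)
    (h : ¬(r ⊓ s ⋖ r ∧ r ⊓ s ⋖ s)) : ⁅(edgeMatrix γ X i)ᵀ, edgeMatrix γ Y j⁆ s r = 0 := by
  have h' : ¬(r ⋖ r ⊔ s ∧ s ⋖ r ⊔ s) := fun ⟨hr, hs⟩ =>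
    h ⟨hr.inf_of_sup_of_sup_left hs, hr.inf_of_sup_of_sup_right hs⟩
  rw [lie_edgeMatrix_apply_of_ne X Y i j hrs, sub_eq_zero]
  trans 0
  · rcases not_and_or.1 h with hr | hs
    · rw [edgeMatrix_apply_of_not_covBy γ Y j hr, mul_zero]
    · rw [edgeMatrix_apply_of_not_covBy γ X i hs, zero_mul]
  · rcases not_and_or.1 h' with hr | hs
    · rw [edgeMatrix_apply_of_not_covBy γ X i hr, mul_zero]
    · rw [edgeMatrix_apply_of_not_covBy γ Y j hs, zero_mul]

variable [IsWeakUpperModularLattice L]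

theorem forall_lie_edgeMatrix_apply_eq_zero_iff (hγ : IsDiamondColored γ) {X Y : L → L → R} :
    (∀ i j r s, r ≠ s → ⁅(edgeMatrix γ X i)ᵀ, edgeMatrix γ Y j⁆ s r = 0) ↔
      DiamondRelations X Y := by
  constructor
  · intro h q r s t hqr hqs hrt hst hrs
    have hentry := h (γ q s) (γ q r) r s hrs
    rw [lie_edgeMatrix_apply_of_diamond hγ X Y _ _ hqr hqs hrt hst hrs, if_pos ⟨rfl, rfl⟩,
      sub_eq_zero] at hentry
    exact hentry.symm
  · intro h i j r s hrs
    by_cases hcov : r ⊓ s ⋖ r ∧ r ⊓ s ⋖ s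
    · obtain ⟨hr, hs⟩ := hcov
      have hr' : r ⋖ r ⊔ s := hr.sup_of_inf_of_inf_left hs
      have hs' : s ⋖ r ⊔ s := hr.sup_of_inf_of_inf_right hs
      rw [lie_edgeMatrix_apply_of_diamond hγ X Y i j hr hs hr' hs' hrs,
        h _ _ _ _ hr hs hr' hs' hrs, sub_self, ite_self]
    · exact lie_edgeMatrix_apply_eq_zero X Y i j hrs hcov

theorem lie_edgeMatrix_iff_diamond_crossing (hγ : IsDiamondColored γ) {m : I → L → ℤ}
    {X Y : L → L → R} :
    ((∀ i, ⁅(edgeMatrix γ X i)ᵀ, edgeMatrix γ Y i⁆ = diagonal fun t => (m i t : R)) ∧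
      ∀ i j, i ≠ j → ⁅(edgeMatrix γ X i)ᵀ, edgeMatrix γ Y j⁆ = 0) ↔
      DiamondRelations X Y ∧ CrossingRelations γ m X Y := by
  rw [← forall_lie_edgeMatrix_apply_eq_zero_iff hγ]
  constructor
  · rintro ⟨hself, hne⟩
    refine ⟨fun i j r s hrs => ?_, fun i t => ?_⟩
    · rcases eq_or_ne i j with rfl | hij
      · rw [hself, diagonal_apply_ne _ hrs.symm]
      · rw [hne i j hij, Matrix.zero_apply]
    · rw [← lie_edgeMatrix_apply_self, hself, diagonal_apply_eq]
  · rintro ⟨hoff, hcross⟩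
    refine ⟨fun i => ?_, fun i j hij => ?_⟩ <;> ext s r <;> rcases eq_or_ne r s with rfl | hrs
    · rw [lie_edgeMatrix_apply_self, diagonal_apply_eq, hcross]
    · rw [hoff i i r s hrs, diagonal_apply_ne _ hrs.symm]
    · rw [lie_edgeMatrix_apply_self_of_ne γ X Y hij, Matrix.zero_apply]
    · rw [hoff i j r s hrs, Matrix.zero_apply]

end Commutators

theorem chevalleyRelations_edgeMatrix_iff {I : Type} {L R : Type*} [Fintype L] [Lattice L]
    [IsWeakUpperModularLattice L] [IsWeakLowerModularLattice L] [CommRing R] [NoZeroDivisors R]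
    [CharZero R] {A : I → I → ℤ} {γ : L → L → I} (hγ : IsDiamondColored γ) {m : I → L → ℤ}
    {X Y : L → L → R} (hXY : ∀ r s : L, r ⋖ s → ¬(X r s = 0 ∧ Y r s = 0)) :
    ChevalleyRelations A (fun i => (edgeMatrix γ X i)ᵀ) (edgeMatrix γ Y)
        (fun i => diagonal fun t => (m i t : R)) ↔
      IsStructured A γ m ∧ DiamondRelations X Y ∧ CrossingRelations γ m X Y := by
  rw [← lie_diagonal_edgeMatrix_iff_isStructured hXY, ← lie_edgeMatrix_iff_diamond_crossing hγ]
  constructor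
  · rintro ⟨-, hxy, hxy', hhx, hhy⟩
    exact ⟨⟨hhx, hhy⟩, hxy, hxy'⟩
  · rintro ⟨⟨hhx, hhy⟩, hxy, hxy'⟩
    exact ⟨fun i j => (commute_diagonal _ _).lie_eq, hxy, hxy', hhx, hhy⟩

end EL

open EL Matrix in
theorem statement_0_general {I : Type} {L : Type*} [Fintype L] [Lattice L]
    [IsWeakUpperModularLattice L] [IsWeakLowerModularLattice L] {A : I → I → ℤ}
    (hA : ∀ i, A i i = 2) {γ : L → L → I} (hγ : IsDiamondColored γ) (m : I → L → ℤ)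
    {X Y : L → L → ℂ} (hXY : ∀ r s : L, r ⋖ s → ¬(X r s = 0 ∧ Y r s = 0)) :
    (IsStructured A γ m ∧ DiamondRelations X Y ∧ CrossingRelations γ m X Y) ↔
      ∃ φ : CL.gLie A →ₗ⁅ℂ⁆ Module.End ℂ (L → ℂ), ∀ i,
        φ (CL.px A i) = toLin' (edgeMatrix γ X i)ᵀ ∧
        φ (CL.py A i) = toLin' (edgeMatrix γ Y i) ∧
        φ (CL.ph A i) = toLin' (diagonal fun t => (m i t : ℂ)) := by
  rw [CL.exists_lieHom_iff_chevalleyRelations hA, ← chevalleyRelations_edgeMatrix_iff hγ hXY]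
  exact (CL.ChevalleyRelations.map_iff
    (f := (lieEquivMatrix' (R := ℂ) (n := L)).symm.toLieHom) lieEquivMatrix'.symm.injective).symm

/-- Proposition 2.1 of Donnelly–Dunkum–White: the combinatorial conditions
(`A`-structured + diamond relations + crossing relations) hold if and only if the prescribed
operators extend to a representation of the Serre-presented Lie algebra `𝔤(A)` on `V[L]`. -/
theorem statement_0 {n : ℕ} (hn : 1 ≤ n) (A : Fin n → Fin n → ℤ)
    (hA : IsCartanMatrixOfRootSystem n A)
    (L : Type) [Fintype L] [Lattice L] [IsModularLattice L]
    (γ : L → L → Fin n)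
    (hdc : ∀ q r s t : L, q ⋖ r → q ⋖ s → r ⋖ t → s ⋖ t → r ≠ s →
      γ q r = γ s t ∧ γ q s = γ r t)
    (ρ : L → ℕ) (hρ : ∀ r s : L, r ⋖ s → ρ s = ρ r + 1)
    (X Y : L → L → ℂ) (hXY : ∀ r s : L, r ⋖ s → ¬(X r s = 0 ∧ Y r s = 0)) :
    ((∀ r s : L, r ⋖ s → ∀ j : Fin n, EL.mwt γ ρ j s = EL.mwt γ ρ j r + A (γ r s) j) ∧
      (∀ q r s t : L, q ⋖ r → q ⋖ s → r ⋖ t → s ⋖ t → r ≠ s →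
        Y s t * X r t = X q s * Y q r) ∧
      (∀ (i : Fin n) (t : L), ((EL.mwt γ ρ i t : ℤ) : ℂ) =
        (∑ q : L, if EL.ced γ i q t then X q t * Y q t else 0) -
        (∑ s : L, if EL.ced γ i t s then X t s * Y t s else 0))) ↔
    (∃ φ : CL.gLie A →ₗ⁅ℂ⁆ Module.End ℂ (L → ℂ),
      ∀ i : Fin n, φ (CL.px A i) = EL.opX γ X i ∧ φ (CL.py A i) = EL.opY γ Y i ∧
        φ (CL.ph A i) = EL.opH γ ρ i) :=
  statement_0_general hA.apply_self hdc (EL.mwt γ ρ) hXY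

end
end

section
/- With all hypotheses and definitions as in the context, assume the equivalent conditions of Proposition 2.1 hold (L is A-structured and the diamond and crossing relations are satisfied, so that V[L] is a 𝔤(A)-module via the defined operators). Let t_max be the maximal element of L and λ := wt(t_max). Then W is a finite group, and the 𝔤(A)-module V[L] is irreducible (it has no 𝔤(A)-invariant subspace other than 0 and V[L]) if and only if 𝒜(Z^ϱ) · WGF(L;Z) = 𝒜(Z^{λ+ϱ}) in the group algebra ℤ[ℤ^n]. -/
noncomputable section

attribute [local instance] Classical.propDecidable

namespace CL

variable {N : Type} [DecidableEq N] [Fintype N]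

/-- The matrix of the simple reflection `S_i : μ ↦ μ − μ_i·(row i of A)`, acting via `mulVec`. -/
def refl (A : N → N → ℤ) (i : N) : Matrix N N ℤ :=
  fun j l => (if j = l then 1 else 0) - (if l = i then A i j else 0)

/-- The Weyl group: the group of integer matrices generated by the simple reflections
(each `S_i` is an involution, so the generated submonoid is a group). -/
def weyl (A : N → N → ℤ) : Submonoid (Matrix N N ℤ) :=
  Submonoid.closure (Set.range (refl A))

/-- The alternant `𝒜(Z^ν) = Σ_{w∈W} det(w)·Z^{w(ν)}` in the group algebra `ℤ[ℤ^N]`. -/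
def alt (A : N → N → ℤ) (ν : N → ℤ) : AddMonoidAlgebra ℤ (N → ℤ) :=
  ∑ᶠ w ∈ (weyl A : Set (Matrix N N ℤ)),
    AddMonoidAlgebra.single (Matrix.mulVec w ν) (Matrix.det w)

end CL

/-!
A finite-dimensional weight module with a cyclic highest weight vector of weight `λ` obeys the Weyl
character formula. The operators `exp xᵢ · exp (-yᵢ) · exp xᵢ` lift the Weyl group to the module, so
every root `α` has root vectors `e α`, `f α` conjugate to some `xᵢ`, `yᵢ`, and its root space in the
Lie algebra of operators is a line. Hence the Casimir operator commutes with the `yᵢ` and is the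
scalar `(λ, λ + 2ϱ)`. Taking traces on weight spaces gives Freudenthal's identity, which says that
the product of the character with the Weyl denominator `Z^ϱ ∏ (1 - Z^{-α}) = 𝒜(Z^ϱ)` is an
eigenvector of the Laplacian of the group algebra. Every dominant weight `μ` of this alternating
product then satisfies `(μ, μ) = (λ + ϱ, λ + ϱ)`, and only `μ = λ + ϱ` can, so the product is
`𝒜(Z^{λ+ϱ})`.

If `V[L]` is irreducible it is cyclic on `v_{t_max}`, and the formula holds. Conversely the formula
determines the dimension, so the submodule generated by `v_{t_max}` is all of `V[L]`; and for a
proper submodule `U` the quotient `V[L] / U` is again cyclic of highest weight `λ`, hence of the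
same dimension, so that `U = 0`.
-/

namespace WeylCharacter

open Matrix

variable {n : ℕ}

/-- The orbit of the simple roots under the Weyl group: all roots, written in the basis of
fundamental weights. -/
def roots (A : Fin n → Fin n → ℤ) : Set (Fin n → ℤ) := {β | ∃ w ∈ CL.weyl A, ∃ i, w *ᵥ A i = β}

/-- A finite root system with Cartan matrix `A`, realised inside its weight lattice `ℤⁿ` together
with a Weyl group invariant inner product. The simple roots are the rows of `A`, and the element of
the root lattice with coordinates `k` in the simple roots is `k ᵥ* of A`. -/
structure RootGeometry (A : Fin n → Fin n → ℤ) where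
  form : (Fin n → ℤ) →+ (Fin n → ℤ) →+ ℝ
  form_comm : ∀ μ ν, form μ ν = form ν μ
  form_self_pos : ∀ μ, μ ≠ 0 → 0 < form μ μ
  form_simple : ∀ μ j, 2 * form μ (A j) = μ j * form (A j) (A j)
  linearIndependent : LinearIndependent ℤ A
  finite_roots : (roots A).Finite
  exists_signed_coordinates : ∀ β ∈ roots A, ∃ k : Fin n → ℤ, (0 ≤ k ∨ k ≤ 0) ∧ β = k ᵥ* of A
  reduced : ∀ (k : ℤ) i, k • A i ∈ roots A → k = 1 ∨ k = -1

section Weyl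

variable {A : Fin n → Fin n → ℤ}

lemma refl_mulVec (i : Fin n) (μ : Fin n → ℤ) : CL.refl A i *ᵥ μ = μ - μ i • A i := by
  ext j
  simp only [CL.refl, Matrix.mulVec, dotProduct, sub_mul, Finset.sum_sub_distrib, ite_mul, one_mul,
    zero_mul, Finset.sum_ite_eq, Finset.sum_ite_eq', Finset.mem_univ, if_true, Pi.sub_apply,
    Pi.smul_apply, smul_eq_mul]
  ring

lemma refl_mem_weyl (i : Fin n) : CL.refl A i ∈ CL.weyl A := Submonoid.subset_closure ⟨i, rfl⟩

lemma weyl_induction {p : ∀ w, w ∈ CL.weyl A → Prop} (one : p 1 (one_mem _))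
    (refl_mul : ∀ i w hw, p w hw → p (CL.refl A i * w) (mul_mem (refl_mem_weyl i) hw)) {w}
    (hw : w ∈ CL.weyl A) : p w hw := by
  induction hw using Submonoid.closure_induction_left with
  | one => exact one
  | mul_left _ hx w hw ih => obtain ⟨i, rfl⟩ := hx; exact refl_mul i w hw ih

lemma simple_mem_roots (i : Fin n) : A i ∈ roots A := ⟨1, one_mem _, i, one_mulVec _⟩

lemma mulVec_mem_roots {w} (hw : w ∈ CL.weyl A) {β} (hβ : β ∈ roots A) : w *ᵥ β ∈ roots A := by
  obtain ⟨v, hv, i, rfl⟩ := hβ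
  exact ⟨w * v, mul_mem hw hv, i, (mulVec_mulVec ..).symm⟩

lemma refl_refl_mulVec {i : Fin n} (h : A i i = 2) (μ : Fin n → ℤ) :
    CL.refl A i *ᵥ (CL.refl A i *ᵥ μ) = μ := by
  have hi : (μ - μ i • A i) i = -μ i := by simp [h]; ring
  rw [refl_mulVec, refl_mulVec, hi]
  module

lemma refl_mul_refl {i : Fin n} (h : A i i = 2) :
    CL.refl A i * CL.refl A i = 1 :=
  Matrix.ext_of_mulVec_single fun j => by
    rw [← mulVec_mulVec, refl_refl_mulVec h, one_mulVec]

lemma refl_mulVec_simple {i : Fin n} (h : A i i = 2) :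
    CL.refl A i *ᵥ A i = -A i := by
  rw [refl_mulVec, h]
  module

lemma det_refl {i : Fin n} (h : A i i = 2) : (CL.refl A i).det = -1 := by
  have hrank : CL.refl A i =
      1 + replicateCol Unit (-A i) * replicateRow Unit (Pi.single i (1 : ℤ)) := by
    ext j l
    simp only [CL.refl, Matrix.add_apply, one_apply, mul_apply, replicateCol_apply,
      replicateRow_apply, Pi.single_apply, Pi.neg_apply]
    split_ifs <;> simp; ring
  rw [hrank, det_one_add_replicateCol_mul_replicateRow]
  simp [h]

/-- The product of simple reflections along a word in the indices. -/
def weylWord (A : Fin n → Fin n → ℤ) (l : List (Fin n)) : Matrix (Fin n) (Fin n) ℤ :=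
  (l.map (CL.refl A)).prod

lemma weylWord_cons (i : Fin n) (l : List (Fin n)) :
    weylWord A (i :: l) = CL.refl A i * weylWord A l := List.prod_cons

lemma weylWord_concat (l : List (Fin n)) (i : Fin n) :
    weylWord A (l ++ [i]) = weylWord A l * CL.refl A i := by
  simp [weylWord]

lemma weylWord_mem (l : List (Fin n)) : weylWord A l ∈ CL.weyl A :=
  Submonoid.list_prod_mem _ (List.forall_mem_map.mpr fun i _ => refl_mem_weyl i)

lemma exists_weylWord_eq {w} (hw : w ∈ CL.weyl A) : ∃ l, weylWord A l = w := by
  induction hw using weyl_induction with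
  | one => exact ⟨[], rfl⟩
  | refl_mul i w _ ih => obtain ⟨l, rfl⟩ := ih; exact ⟨i :: l, weylWord_cons i l⟩

end Weyl

section Embedding

open scoped RealInnerProductSpace

variable {E : Type*} [NormedAddCommGroup E] [InnerProductSpace ℝ E] {α : Fin n → E}

lemma exists_coroot_dual (hα : LinearIndependent ℝ α) (hspan : Submodule.span ℝ (Set.range α) = ⊤) :
    ∃ ι : (Fin n → ℤ) →+ E, ∀ μ j, 2 * ⟪ι μ, α j⟫ = μ j * ⟪α j, α j⟫ := by
  let b := Module.Basis.mk hα hspan.ge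
  have hsep : (innerₗ E).Nondegenerate :=
    ⟨fun v hv => inner_self_eq_zero.mp (hv v), fun v hv => inner_self_eq_zero.mp (hv v)⟩
  have : Module.Finite ℝ E := .of_basis b
  let d := LinearMap.BilinForm.dualBasis (innerₗ E) hsep b
  refine ⟨AddMonoidHom.mk' (fun μ => ∑ i, ((μ i : ℝ) * (⟪α i, α i⟫ / 2)) • d i) fun μ ν => ?_,
    fun μ j => ?_⟩
  · simp only [Pi.add_apply, Int.cast_add, add_mul, add_smul, Finset.sum_add_distrib]
  · have hd (i) : ⟪d i, α j⟫ = if j = i then 1 else 0 := by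
      simpa [b] using LinearMap.BilinForm.apply_dualBasis_left hsep b i j
    simp only [AddMonoidHom.mk'_apply, sum_inner, real_inner_smul_left, hd, mul_ite, mul_one,
      mul_zero, Finset.sum_ite_eq, Finset.mem_univ, if_true]
    ring

variable {ι : (Fin n → ℤ) →+ E} {A : Fin n → Fin n → ℤ}

lemma coroot_dual_injective (hα : ∀ j, α j ≠ 0) (hι : ∀ μ j, 2 * ⟪ι μ, α j⟫ = μ j * ⟪α j, α j⟫) :
    Function.Injective ι := by
  intro μ ν h
  ext j
  have hj := (hι μ j).symm.trans (h ▸ hι ν j)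
  exact_mod_cast mul_right_cancel₀ (inner_self_ne_zero.mpr (hα j)) hj

lemma coroot_dual_simple (hα : LinearIndependent ℝ α)
    (hspan : Submodule.span ℝ (Set.range α) = ⊤)
    (hι : ∀ μ j, 2 * ⟪ι μ, α j⟫ = μ j * ⟪α j, α j⟫)
    (hA : ∀ i j, A i j * ⟪α j, α j⟫ = 2 * ⟪α i, α j⟫) (i : Fin n) : ι (A i) = α i := by
  refine InnerProductSpace.ext_inner_right_basis (.mk hα hspan.ge) fun j => ?_
  rw [Module.Basis.mk_apply]
  linarith [hι (A i) j, hA i j]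

lemma coroot_dual_refl (hα : ∀ j, α j ≠ 0) (hι : ∀ μ j, 2 * ⟪ι μ, α j⟫ = μ j * ⟪α j, α j⟫)
    (hιA : ∀ i, ι (A i) = α i) (i : Fin n) (μ : Fin n → ℤ) :
    ι (CL.refl A i *ᵥ μ) = ι μ - (2 * ⟪ι μ, α i⟫ / ⟪α i, α i⟫) • α i := by
  rw [refl_mulVec, map_sub, map_zsmul, hιA, hι,
    mul_div_cancel_right₀ _ (inner_self_ne_zero.mpr (hα i)), Int.cast_smul_eq_zsmul]

lemma coroot_dual_mem_of_mem_roots {Φ : Set E} (hα : ∀ j, α j ≠ 0)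
    (hι : ∀ μ j, 2 * ⟪ι μ, α j⟫ = μ j * ⟪α j, α j⟫) (hιA : ∀ i, ι (A i) = α i)
    (hΦ : ∀ β ∈ Φ, ∀ δ ∈ Φ, δ - (2 * ⟪δ, β⟫ / ⟪β, β⟫) • β ∈ Φ) (hαΦ : ∀ i, α i ∈ Φ) {β}
    (hβ : β ∈ roots A) : ι β ∈ Φ := by
  obtain ⟨w, hw, i, rfl⟩ := hβ
  induction hw using weyl_induction with
  | one => rw [one_mulVec, hιA]; exact hαΦ i
  | refl_mul j w _ ih =>
    rw [← mulVec_mulVec, coroot_dual_refl hα hι hιA]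
    exact hΦ _ (hαΦ j) _ ih

lemma exists_rootGeometry (hA : IsCartanMatrixOfRootSystem n A) : Nonempty (RootGeometry A) := by
  obtain ⟨Φ, α, -, -, hred, -, hΦ, hαΦ, hα, hsign, hcartan⟩ := hA
  have hspan : Submodule.span ℝ (Set.range α) = ⊤ :=
    hα.span_eq_top_of_card_eq_finrank' (by simp)
  obtain ⟨ι, hι⟩ := exists_coroot_dual hα hspan
  have hinj := coroot_dual_injective hα.ne_zero hι
  have hιA := coroot_dual_simple hα hspan hι hcartan
  have hmem : ∀ β ∈ roots A, ι β ∈ Φ := fun β hβ =>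
    coroot_dual_mem_of_mem_roots (Φ := (Φ : Set _)) hα.ne_zero hι hιA hΦ hαΦ hβ
  have hι_vecMul (k : Fin n → ℤ) : ι (k ᵥ* of A) = ∑ i, (k i : ℝ) • α i := by
    simp only [vecMul_eq_sum, map_sum, map_zsmul, Int.cast_smul_eq_zsmul]
    exact Finset.sum_congr rfl fun i _ => congrArg _ (hιA i)
  exact ⟨{
    form := .mk' (fun μ => (innerₗ _ (ι μ)).toAddMonoidHom.comp ι) fun μ ν => by
      ext; simp
    form_comm := fun μ ν => real_inner_comm (ι ν) (ι μ)
    form_self_pos := fun μ hμ =>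
      real_inner_self_pos.mpr ((map_ne_zero_iff ι hinj).mpr hμ)
    form_simple := fun μ j => by simpa [hιA] using hι μ j
    linearIndependent := Fintype.linearIndependent_iff.mpr fun k hk i => by
      have h := hι_vecMul k
      rw [vecMul_eq_sum, show ∑ i, k i • of A i = 0 from hk, map_zero] at h
      exact_mod_cast Fintype.linearIndependent_iff.mp hα _ h.symm i
    finite_roots := (Φ.finite_toSet.preimage hinj.injOn).subset hmem
    exists_signed_coordinates := fun β hβ => by
      obtain ⟨k, hk, hβk⟩ := hsign _ (hmem β hβ)
      exact ⟨k, hk, hinj (hβk.trans (hι_vecMul k).symm)⟩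
    reduced := fun k i hk => by
      have h := hmem _ hk
      rw [map_zsmul, hιA, ← Int.cast_smul_eq_zsmul ℝ] at h
      exact_mod_cast hred _ (hαΦ i) _ h }⟩

end Embedding

namespace RootGeometry

variable {A : Fin n → Fin n → ℤ} (D : RootGeometry A)

section Roots

include D in
lemma vecMul_injective : Function.Injective fun k : Fin n → ℤ => k ᵥ* of A :=
  Matrix.vecMul_injective_iff.mpr D.linearIndependent

lemma form_simple_self_pos (i : Fin n) : 0 < D.form (A i) (A i) :=
  D.form_self_pos _ (D.linearIndependent.ne_zero i)

include D in
lemma diag (i : Fin n) : A i i = 2 := by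
  exact_mod_cast (mul_right_cancel₀ (D.form_simple_self_pos i).ne' (D.form_simple (A i) i)).symm

include D in
lemma zero_notMem_roots : (0 : Fin n → ℤ) ∉ roots A := by
  intro h
  have ⟨_, _, i, _⟩ := h
  have := D.reduced 0 i (by rwa [zero_smul])
  omega

include D in
lemma neg_mem_roots {β} (hβ : β ∈ roots A) : -β ∈ roots A := by
  obtain ⟨w, hw, i, rfl⟩ := hβ
  rw [← mulVec_neg, ← refl_mulVec_simple (D.diag i)]
  exact mulVec_mem_roots hw (mulVec_mem_roots (refl_mem_weyl i) (simple_mem_roots i))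

/-- The set of positive roots. -/
def posRoots : Finset (Fin n → ℤ) :=
  D.finite_roots.toFinset.filter fun β => ∃ k, 0 ≤ k ∧ β = k ᵥ* of A

lemma mem_posRoots {β} : β ∈ D.posRoots ↔ β ∈ roots A ∧ ∃ k, 0 ≤ k ∧ β = k ᵥ* of A := by
  simp [posRoots]

lemma simple_mem_posRoots (i : Fin n) : A i ∈ D.posRoots :=
  D.mem_posRoots.mpr ⟨simple_mem_roots i, Pi.single i 1, Pi.single_nonneg.mpr zero_le_one,
    (single_one_vecMul i _).symm⟩

lemma mem_posRoots_or_neg_mem {β} (hβ : β ∈ roots A) : β ∈ D.posRoots ∨ -β ∈ D.posRoots := by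
  obtain ⟨k, hk | hk, rfl⟩ := D.exists_signed_coordinates β hβ
  · exact .inl (D.mem_posRoots.mpr ⟨hβ, k, hk, rfl⟩)
  · exact .inr (D.mem_posRoots.mpr
      ⟨D.neg_mem_roots hβ, -k, neg_nonneg.mpr hk, (neg_vecMul ..).symm⟩)

lemma neg_notMem_posRoots {β} (hβ : β ∈ D.posRoots) : -β ∉ D.posRoots := by
  intro hβ'
  obtain ⟨hroot, k, hk, rfl⟩ := D.mem_posRoots.mp hβ
  obtain ⟨-, l, hl, hkl⟩ := D.mem_posRoots.mp hβ'
  rw [← neg_vecMul] at hkl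
  obtain rfl := D.vecMul_injective hkl
  obtain rfl : k = 0 := le_antisymm (neg_nonneg.mp hl) hk
  exact D.zero_notMem_roots (zero_vecMul (of A) ▸ hroot)

lemma mem_posRoots_of_coordinate_pos {k : Fin n → ℤ} (h : k ᵥ* of A ∈ roots A) {j}
    (hj : 0 < k j) : k ᵥ* of A ∈ D.posRoots := by
  obtain ⟨l, hl, hkl⟩ := D.exists_signed_coordinates _ h
  obtain rfl := D.vecMul_injective hkl
  exact D.mem_posRoots.mpr ⟨h, k, hl.resolve_right fun hk => (hk j).not_gt hj, rfl⟩

include D in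
lemma exists_coordinate_pos_of_ne_simple {k : Fin n → ℤ} (hk : 0 ≤ k) (h : k ᵥ* of A ∈ roots A)
    {i} (hi : k ᵥ* of A ≠ A i) : ∃ j, j ≠ i ∧ 0 < k j := by
  by_contra! hcon
  have hsingle : k = Pi.single i (k i) := by
    ext j
    by_cases hj : j = i
    · rw [hj, Pi.single_eq_same]
    · rw [Pi.single_eq_of_ne hj]; exact le_antisymm (hcon j hj) (hk j)
  rw [hsingle, single_vecMul] at h hi
  rcases D.reduced (k i) i h with h1 | h1
  · exact hi (by rw [h1, one_smul]; rfl)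
  · have := hk i; simp [h1] at this

lemma refl_mem_posRoots {β} (hβ : β ∈ D.posRoots) {i} (hi : β ≠ A i) :
    CL.refl A i *ᵥ β ∈ D.posRoots := by
  obtain ⟨hroot, k, hk, rfl⟩ := D.mem_posRoots.mp hβ
  obtain ⟨j, hji, hj⟩ := D.exists_coordinate_pos_of_ne_simple hk hroot hi
  have hrefl (c : ℤ) : k ᵥ* of A - c • A i = (k - Pi.single i c) ᵥ* of A := by
    rw [sub_vecMul, single_vecMul]; rfl
  have hmem := mulVec_mem_roots (refl_mem_weyl i) hroot
  rw [refl_mulVec, hrefl] at hmem ⊢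
  exact D.mem_posRoots_of_coordinate_pos hmem (j := j) (by simpa [Pi.single_eq_of_ne hji] using hj)

lemma refl_mulVec_ne_simple {β} (hβ : β ∈ D.posRoots) (i : Fin n) : CL.refl A i *ᵥ β ≠ A i := by
  intro h
  have hneg : -β = A i := by
    rw [← refl_refl_mulVec (D.diag i) β, h, refl_mulVec_simple (D.diag i), neg_neg]
  exact D.neg_notMem_posRoots hβ (hneg ▸ D.simple_mem_posRoots i)

lemma add_mem_erase_simple {α} (hα : α ∈ D.posRoots) {β i} (hβ : β ∈ D.posRoots.erase (A i))
    (h : α + β ∈ roots A) : α + β ∈ D.posRoots.erase (A i) := by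
  obtain ⟨hβi, hβ⟩ := Finset.mem_erase.mp hβ
  obtain ⟨-, k, hk, rfl⟩ := D.mem_posRoots.mp hα
  obtain ⟨hβ, l, hl, rfl⟩ := D.mem_posRoots.mp hβ
  obtain ⟨j, hji, hj⟩ := D.exists_coordinate_pos_of_ne_simple hl hβ hβi
  have hkl : 0 < (k + l) j := add_pos_of_nonneg_of_pos (hk j) hj
  rw [← add_vecMul] at h ⊢
  refine Finset.mem_erase.mpr ⟨fun heq => ?_, D.mem_posRoots_of_coordinate_pos h hkl⟩
  have heq := D.vecMul_injective (heq.trans (single_one_vecMul i (of A)).symm)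
  exact hkl.ne' (by rw [heq, Pi.single_eq_of_ne hji])

lemma sub_simple_mem_erase_simple {β i} (hβ : β ∈ D.posRoots.erase (A i))
    (h : β - A i ∈ roots A) : β - A i ∈ D.posRoots.erase (A i) := by
  obtain ⟨hβi, hβ⟩ := Finset.mem_erase.mp hβ
  obtain ⟨hβ, k, hk, rfl⟩ := D.mem_posRoots.mp hβ
  obtain ⟨j, hji, hj⟩ := D.exists_coordinate_pos_of_ne_simple hk hβ hβi
  have hkj : 0 < (k - Pi.single i 1 : Fin n → ℤ) j := by simpa [Pi.single_eq_of_ne hji] using hj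
  have hsub : k ᵥ* of A - A i = (k - Pi.single i 1) ᵥ* of A := by
    rw [sub_vecMul, single_one_vecMul]; rfl
  rw [hsub] at h ⊢
  refine Finset.mem_erase.mpr ⟨fun heq => ?_, D.mem_posRoots_of_coordinate_pos h hkj⟩
  have heq := D.vecMul_injective (heq.trans (single_one_vecMul i (of A)).symm)
  exact hkj.ne' (by rw [heq, Pi.single_eq_of_ne hji])

@[to_additive]
lemma prod_erase_simple_comp_refl {M : Type*} [CommMonoid M] (f : (Fin n → ℤ) → M) (i : Fin n) :
    ∏ β ∈ D.posRoots.erase (A i), f (CL.refl A i *ᵥ β) = ∏ β ∈ D.posRoots.erase (A i), f β := by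
  have hmaps : ∀ β ∈ D.posRoots.erase (A i), CL.refl A i *ᵥ β ∈ D.posRoots.erase (A i) :=
    fun β hβ => by
      rw [Finset.mem_erase] at hβ ⊢
      exact ⟨D.refl_mulVec_ne_simple hβ.2 i, D.refl_mem_posRoots hβ.2 hβ.1⟩
  exact Finset.prod_nbij' (CL.refl A i *ᵥ ·) (CL.refl A i *ᵥ ·) hmaps hmaps
    (fun β _ => refl_refl_mulVec (D.diag i) β) (fun β _ => refl_refl_mulVec (D.diag i) β)
    fun _ _ => rfl

lemma sum_posRoots : ∑ β ∈ D.posRoots, β = 2 := by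
  ext i
  rw [← Finset.add_sum_erase _ _ (D.simple_mem_posRoots i), Pi.add_apply, D.diag i]
  have h := D.sum_erase_simple_comp_refl id i
  simp only [id_eq, refl_mulVec, Finset.sum_sub_distrib, ← Finset.sum_smul] at h
  have h' := congrFun (sub_eq_self.mp h) i
  rw [Pi.smul_apply, D.diag i, ← Finset.sum_apply] at h'
  simpa using h'

end Roots

section Form

lemma form_zsmul_left (c : ℤ) (μ ν : Fin n → ℤ) : D.form (c • μ) ν = c * D.form μ ν := by
  rw [map_zsmul, AddMonoidHom.smul_apply, zsmul_eq_mul]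

lemma form_zsmul_right (c : ℤ) (μ ν : Fin n → ℤ) : D.form μ (c • ν) = c * D.form μ ν := by
  rw [map_zsmul, zsmul_eq_mul]

lemma form_refl_refl (μ ν : Fin n → ℤ) (i : Fin n) :
    D.form (CL.refl A i *ᵥ μ) (CL.refl A i *ᵥ ν) = D.form μ ν := by
  have hμ := D.form_simple μ i
  have hν := D.form_simple ν i
  simp only [refl_mulVec, map_sub, AddMonoidHom.sub_apply, form_zsmul_left, form_zsmul_right]
  rw [D.form_comm (A i) ν]
  linear_combination (-(ν i : ℝ) / 2) * hμ + (-(μ i : ℝ) / 2) * hν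

lemma form_mulVec_mulVec {w} (hw : w ∈ CL.weyl A) (μ ν : Fin n → ℤ) :
    D.form (w *ᵥ μ) (w *ᵥ ν) = D.form μ ν := by
  induction hw using weyl_induction with
  | one => simp only [one_mulVec]
  | refl_mul i w _ ih => rw [← mulVec_mulVec, ← mulVec_mulVec, form_refl_refl, ih]

lemma form_vecMul (μ k : Fin n → ℤ) :
    D.form μ (k ᵥ* of A) = ∑ i, k i * (μ i * (D.form (A i) (A i) / 2)) := by
  rw [vecMul_eq_sum, map_sum]
  refine Finset.sum_congr rfl fun i _ => ?_
  rw [form_zsmul_right, ← mul_div_assoc, ← D.form_simple μ i, mul_div_cancel_left₀ _ two_ne_zero]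
  rfl

lemma form_vecMul_nonneg {μ k : Fin n → ℤ} (hμ : 0 ≤ μ) (hk : 0 ≤ k) :
    0 ≤ D.form μ (k ᵥ* of A) := by
  rw [form_vecMul]
  refine Finset.sum_nonneg fun i _ => ?_
  have hi := D.form_simple_self_pos i
  have hμi : (0 : ℝ) ≤ μ i := mod_cast hμ i
  have hki : (0 : ℝ) ≤ k i := mod_cast hk i
  positivity

lemma form_vecMul_pos {μ k : Fin n → ℤ} (hμ : ∀ i, 0 < μ i) (hk : 0 ≤ k) (hk0 : k ≠ 0) :
    0 < D.form μ (k ᵥ* of A) := by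
  rw [form_vecMul]
  have hfactor i : (0 : ℝ) < μ i * (D.form (A i) (A i) / 2) :=
    mul_pos (mod_cast hμ i) (half_pos (D.form_simple_self_pos i))
  obtain ⟨j, hj⟩ := Function.ne_iff.mp hk0
  exact Finset.sum_pos' (fun i _ => mul_nonneg (mod_cast hk i) (hfactor i).le)
    ⟨j, Finset.mem_univ j, mul_pos (mod_cast (hk j).lt_of_ne' hj) (hfactor j)⟩

include D in
lemma exists_coordinate_pos {k : Fin n → ℤ} (hk : 0 ≤ k) (hk0 : k ≠ 0) :
    ∃ i, 0 < k i ∧ 0 < (k ᵥ* of A) i := by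
  have h0 : k ᵥ* of A ≠ 0 := fun h =>
    hk0 (D.vecMul_injective (h.trans (zero_vecMul (of A)).symm))
  have hpos := D.form_self_pos _ h0
  rw [form_vecMul] at hpos
  obtain ⟨i, -, hi⟩ := Finset.exists_lt_of_sum_lt (Finset.sum_const_zero.trans_lt hpos)
  have hki : (0 : ℝ) ≤ k i := mod_cast hk i
  have hβi := pos_of_mul_pos_right hi hki
  refine ⟨i, Int.cast_pos.mp (pos_of_mul_pos_left hi hβi.le), ?_⟩
  exact Int.cast_pos.mp (pos_of_mul_pos_left hβi (half_pos (D.form_simple_self_pos i)).le)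

/-- Strict Cauchy–Schwarz, from the positivity of the form at `2 • β - β i • A i`. -/
lemma form_simple_sq_lt {β i} (hβ : β ∈ D.posRoots.erase (A i)) :
    D.form β (A i) ^ 2 < D.form β β * D.form (A i) (A i) := by
  obtain ⟨hβi, hβ⟩ := Finset.mem_erase.mp hβ
  obtain ⟨hβ, k, hk, rfl⟩ := D.mem_posRoots.mp hβ
  obtain ⟨j, hji, hj⟩ := D.exists_coordinate_pos_of_ne_simple hk hβ hβi
  set β := k ᵥ* of A
  have hne : (2 : ℤ) • β - β i • A i ≠ 0 := by
    intro h
    have hk : (2 : ℤ) • k = Pi.single i (β i) := D.vecMul_injective <| by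
      simp only [smul_vecMul, single_vecMul]
      exact sub_eq_zero.mp h
    have := congrFun hk j
    rw [Pi.single_eq_of_ne hji, Pi.smul_apply, smul_eq_mul] at this
    omega
  have hpos := mul_pos (D.form_self_pos _ hne) (D.form_simple_self_pos i)
  have hsimple := D.form_simple β i
  simp only [map_sub, AddMonoidHom.sub_apply, form_zsmul_left, form_zsmul_right,
    D.form_comm (A i) β] at hpos
  push_cast at hpos
  nlinarith [hpos, hsimple]

include D in
lemma mul_refl_of_mulVec_simple {w} (hw : w ∈ CL.weyl A) {i j} (h : w *ᵥ A i = A j) :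
    w * CL.refl A i = CL.refl A j * w := by
  refine Matrix.ext_of_mulVec_single fun l => ?_
  set μ : Fin n → ℤ := Pi.single l 1
  have hμ : ((w *ᵥ μ) j : ℝ) = μ i := by
    refine mul_right_cancel₀ (D.form_simple_self_pos j).ne' ?_
    rw [← D.form_simple, ← h, D.form_mulVec_mulVec hw, D.form_mulVec_mulVec hw, D.form_simple]
  rw [← mulVec_mulVec, ← mulVec_mulVec, refl_mulVec, refl_mulVec, mulVec_sub, mulVec_smul, h,
    Int.cast_injective hμ]

end Form

section WeylGroup

include D in
lemma mulVec_injective {w} (hw : w ∈ CL.weyl A) :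
    Function.Injective (w *ᵥ · : (Fin n → ℤ) → Fin n → ℤ) := by
  induction hw using weyl_induction with
  | one => exact fun μ ν h => by simpa using h
  | refl_mul i w _ ih =>
    simp only [← mulVec_mulVec]
    exact (Function.LeftInverse.injective (refl_refl_mulVec (D.diag i))).comp ih

include D in
lemma finite_weyl : (CL.weyl A : Set (Matrix (Fin n) (Fin n) ℤ)).Finite := by
  refine .of_finite_image (f := fun w i => w *ᵥ A i)
    ((Set.Finite.pi' fun _ : Fin n => D.finite_roots).subset ?_) fun w _ w' _ h => ?_
  · rintro _ ⟨w, hw, rfl⟩ i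
    exact mulVec_mem_roots hw (simple_mem_roots i)
  · have hreg : IsRightRegular (of A)ᵀ :=
      isRightRegular_iff_nonsingular.mpr (linearIndependent_col_iff.mp D.linearIndependent)
    refine hreg (Matrix.ext fun i j => ?_)
    simpa [mulVec, mul_apply, dotProduct] using congrFun (congrFun h j) i

lemma weylWord_exchange (l : List (Fin n)) (i : Fin n) (h : -(weylWord A l *ᵥ A i) ∈ D.posRoots) :
    ∃ l' : List (Fin n), l'.length < l.length ∧ weylWord A l * CL.refl A i = weylWord A l' := by
  induction l with
  | nil =>
    rw [weylWord, List.map_nil, List.prod_nil, one_mulVec] at h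
    exact absurd h (D.neg_notMem_posRoots (D.simple_mem_posRoots i))
  | cons j l ih =>
    by_cases hneg : -(weylWord A l *ᵥ A i) ∈ D.posRoots
    · obtain ⟨l', hlength, hl'⟩ := ih hneg
      exact ⟨j :: l', Nat.succ_lt_succ hlength, by
        rw [weylWord_cons, weylWord_cons, Matrix.mul_assoc, hl']⟩
    · have hpos : weylWord A l *ᵥ A i ∈ D.posRoots :=
        (D.mem_posRoots_or_neg_mem
          (mulVec_mem_roots (weylWord_mem l) (simple_mem_roots i))).resolve_right hneg
      have hij : weylWord A l *ᵥ A i = A j := by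
        by_contra hij
        rw [weylWord_cons, ← mulVec_mulVec] at h
        exact D.neg_notMem_posRoots (D.refl_mem_posRoots hpos hij) h
      refine ⟨l, Nat.lt_succ_self _, ?_⟩
      rw [weylWord_cons, Matrix.mul_assoc, D.mul_refl_of_mulVec_simple (weylWord_mem l) hij,
        ← Matrix.mul_assoc, refl_mul_refl (D.diag j), Matrix.one_mul]

lemma weylWord_eq_one (l : List (Fin n)) (h : ∀ i, weylWord A l *ᵥ A i ∈ D.posRoots) :
    weylWord A l = 1 := by
  induction hN : l.length using Nat.strong_induction_on generalizing l with
  | _ N ih =>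
    rcases List.eq_nil_or_concat' l with rfl | ⟨l, i, rfl⟩
    · rfl
    · have hi := h i
      rw [weylWord_concat, ← mulVec_mulVec, refl_mulVec_simple (D.diag i), mulVec_neg] at hi
      obtain ⟨l', hlength, hl'⟩ := D.weylWord_exchange l i hi
      rw [weylWord_concat, hl'] at h ⊢
      refine ih _ ?_ l' h rfl
      rw [← hN, List.length_append]
      omega

lemma eq_one_of_mulVec_simple_mem_posRoots {w} (hw : w ∈ CL.weyl A)
    (h : ∀ i, w *ᵥ A i ∈ D.posRoots) : w = 1 := by
  obtain ⟨l, rfl⟩ := exists_weylWord_eq hw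
  exact D.weylWord_eq_one l h

include D in
lemma eq_one_of_strictlyDominant {w} (hw : w ∈ CL.weyl A) {κ : Fin n → ℤ} (hκ : ∀ i, 0 < κ i)
    (hwκ : ∀ i, 0 < (w *ᵥ κ) i) : w = 1 := by
  refine D.eq_one_of_mulVec_simple_mem_posRoots hw fun i => ?_
  refine (D.mem_posRoots_or_neg_mem
    (mulVec_mem_roots hw (simple_mem_roots i))).resolve_right fun hneg => ?_
  obtain ⟨-, k, hk, hwk⟩ := D.mem_posRoots.mp hneg
  have hle := D.form_vecMul_nonneg (fun i => (hwκ i).le) hk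
  rw [← hwk, map_neg, D.form_mulVec_mulVec hw] at hle
  have hlt : (0 : ℝ) < κ i * D.form (A i) (A i) :=
    mul_pos (mod_cast hκ i) (D.form_simple_self_pos i)
  linarith [D.form_simple κ i]

end WeylGroup

section Alternant

open scoped AddMonoidAlgebra

/-- Elements of the group algebra on which every simple reflection acts by the sign `-1`. -/
def IsSkew (A : Fin n → Fin n → ℤ) (F : ℂ[Fin n → ℤ]) : Prop :=
  ∀ i μ, F.coeff (CL.refl A i *ᵥ μ) = -F.coeff μ

/-- The alternant `CL.alt A ν` with complex coefficients, as a sum over a finset. -/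
def alternant (ν : Fin n → ℤ) : ℂ[Fin n → ℤ] :=
  ∑ w ∈ D.finite_weyl.toFinset, AddMonoidAlgebra.single (w *ᵥ ν) (w.det : ℂ)

lemma coeff_alternant (ν μ : Fin n → ℤ) :
    (D.alternant ν).coeff μ =
      ∑ w ∈ D.finite_weyl.toFinset, if w *ᵥ ν = μ then (w.det : ℂ) else 0 := by
  simp [alternant, AddMonoidAlgebra.coeff_sum, Finsupp.finsetSum_apply, Finsupp.single_apply]

lemma isSkew_alternant (ν : Fin n → ℤ) : IsSkew A (D.alternant ν) := by
  intro i μ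
  rw [coeff_alternant, coeff_alternant, ← Finset.sum_neg_distrib]
  have hmem : ∀ w ∈ D.finite_weyl.toFinset, CL.refl A i * w ∈ D.finite_weyl.toFinset := by
    simp only [Set.Finite.mem_toFinset]
    exact fun w hw => mul_mem (refl_mem_weyl i) hw
  have hinv (w) : CL.refl A i * (CL.refl A i * w) = w := by
    rw [← Matrix.mul_assoc, refl_mul_refl (D.diag i), Matrix.one_mul]
  refine Finset.sum_nbij' (CL.refl A i * ·) (CL.refl A i * ·) hmem hmem (fun w _ => hinv w)
    (fun w _ => hinv w) fun w _ => ?_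
  have heq : (CL.refl A i * w) *ᵥ ν = μ ↔ w *ᵥ ν = CL.refl A i *ᵥ μ := by
    rw [← mulVec_mulVec]
    exact ⟨fun h => by rw [← h, refl_refl_mulVec (D.diag i)],
      fun h => by rw [h, refl_refl_mulVec (D.diag i)]⟩
  simp only [heq, det_mul, det_refl (D.diag i)]
  split_ifs <;> simp

lemma coeff_alternant_of_strictlyDominant {κ μ : Fin n → ℤ} (hκ : ∀ i, 0 < κ i)
    (hμ : ∀ i, 0 < μ i) : (D.alternant κ).coeff μ = if κ = μ then 1 else 0 := by
  rw [coeff_alternant, Finset.sum_eq_single 1]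
  · simp
  · intro w hw hw1
    refine if_neg fun h => hw1 ?_
    exact D.eq_one_of_strictlyDominant (D.finite_weyl.mem_toFinset.mp hw) hκ (h ▸ hμ)
  · exact fun h => absurd (D.finite_weyl.mem_toFinset.mpr (one_mem (CL.weyl A))) h

include D in
lemma coordinate_nonneg_of_form_refl_le {μ : Fin n → ℤ} {i : Fin n}
    (h : D.form (CL.refl A i *ᵥ μ) 1 ≤ D.form μ 1) : 0 ≤ μ i := by
  have hpos : 0 < D.form (A i) 1 := by
    have := D.form_simple 1 i
    rw [D.form_comm] at this
    have := D.form_simple_self_pos i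
    norm_num at *
    linarith
  rw [refl_mulVec, map_sub, AddMonoidHom.sub_apply, form_zsmul_left, sub_le_self_iff] at h
  exact_mod_cast nonneg_of_mul_nonneg_left h hpos

include D in
lemma IsSkew.eq_zero {F : ℂ[Fin n → ℤ]} (hF : IsSkew A F)
    (h : ∀ μ : Fin n → ℤ, (∀ i, 0 < μ i) → F.coeff μ = 0) : F = 0 := by
  by_contra hne
  have hs : F.coeff.support.Nonempty :=
    Finsupp.support_nonempty_iff.mpr fun h0 => hne (AddMonoidAlgebra.ext (by simpa using h0))
  obtain ⟨ν, hν, hmax⟩ := Finset.exists_max_image F.coeff.support (D.form · 1) hs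
  rw [Finsupp.mem_support_iff] at hν
  refine hν (h ν fun i => lt_of_le_of_ne ?_ fun hi => hν ?_)
  · refine D.coordinate_nonneg_of_form_refl_le (hmax _ (Finsupp.mem_support_iff.mpr ?_))
    rw [hF]
    exact neg_ne_zero.mpr hν
  · have hfix := hF i ν
    rw [refl_mulVec, ← hi, zero_smul, sub_zero] at hfix
    exact self_eq_neg.mp hfix

lemma IsSkew.eq_alternant {F : ℂ[Fin n → ℤ]} (hF : IsSkew A F) {κ : Fin n → ℤ}
    (hκ : ∀ i, 0 < κ i) (hone : F.coeff κ = 1)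
    (h : ∀ μ : Fin n → ℤ, (∀ i, 0 < μ i) → F.coeff μ ≠ 0 → μ = κ) : F = D.alternant κ := by
  have hskew : IsSkew A (F - D.alternant κ) := fun i μ => by
    simp only [AddMonoidAlgebra.coeff_sub, Finsupp.sub_apply, hF i μ, D.isSkew_alternant κ i μ]
    ring
  refine sub_eq_zero.mp (IsSkew.eq_zero D hskew fun μ hμ => ?_)
  rw [AddMonoidAlgebra.coeff_sub, Finsupp.sub_apply,
    D.coeff_alternant_of_strictlyDominant hκ hμ]
  split_ifs with hκμ
  · rw [← hκμ, hone, sub_self]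
  · rw [sub_zero]
    exact not_imp_comm.mp (h μ hμ) (Ne.symm hκμ)

end Alternant

end RootGeometry

section FormalCharacter

open AddMonoidAlgebra
open scoped AddMonoidAlgebra

/-- Multiplication of the coefficient of each `Z^μ` by `φ μ`. -/
def coeffMul {X : Type*} : (X → ℂ) →ₗ[ℂ] Module.End ℂ ℂ[X] :=
  ((AddMonoidAlgebra.basis X ℂ).constr ℂ).toLinearMap ∘ₗ
    LinearMap.pi fun μ => lsingle μ ∘ₗ LinearMap.proj μ

lemma coeffMul_single {X : Type*} (φ : X → ℂ) (μ c) :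
    coeffMul φ (single μ c) = single μ (φ μ * c) := by
  have hμ : single μ c = c • AddMonoidAlgebra.basis X ℂ μ := by simp [AddMonoidAlgebra.smul_single]
  rw [hμ, map_smul, coeffMul, LinearMap.comp_apply, LinearEquiv.coe_coe, Module.Basis.constr_basis]
  simp [AddMonoidAlgebra.smul_single, mul_comm]

lemma coeff_coeffMul {X : Type*} (φ : X → ℂ) (F : ℂ[X]) (μ) :
    (coeffMul φ F).coeff μ = φ μ * F.coeff μ := by
  induction F using induction_linear with
  | zero => simp
  | add F G hF hG => simp only [map_add, coeff_add, Finsupp.add_apply, hF, hG, mul_add]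
  | single ν c =>
    rw [coeffMul_single]
    obtain rfl | h := eq_or_ne ν μ <;> simp [*]

namespace RootGeometry

variable {A : Fin n → Fin n → ℤ} (D : RootGeometry A)

/-- The Laplacian of the form, for which `Z^μ` is an eigenvector of eigenvalue `(μ, μ)`. -/
def laplacian : Module.End ℂ ℂ[Fin n → ℤ] := coeffMul fun μ => (D.form μ μ : ℂ)

/-- The derivation in the direction `α`, for which `Z^μ` is an eigenvector of eigenvalue
`(μ, α)`. -/
def deriv (α : Fin n → ℤ) : Module.End ℂ ℂ[Fin n → ℤ] := coeffMul fun μ => (D.form μ α : ℂ)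

/-- The carré du champ of the Laplacian. -/
def carreDuChamp (F G : ℂ[Fin n → ℤ]) : ℂ[Fin n → ℤ] :=
  D.laplacian (F * G) - F * D.laplacian G - G * D.laplacian F

lemma deriv_add (α β F) : D.deriv (α + β) F = D.deriv α F + D.deriv β F := by
  rw [deriv, deriv, deriv, ← LinearMap.add_apply, ← map_add]
  congr 2
  ext μ
  simp

lemma deriv_neg (α F) : D.deriv (-α) F = -D.deriv α F := by
  rw [deriv, deriv, ← LinearMap.neg_apply, ← map_neg]
  congr 2
  ext μ
  simp

lemma sum_deriv {κ : Type*} (s : Finset κ) (α : κ → Fin n → ℤ) (F) :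
    ∑ i ∈ s, D.deriv (α i) F = D.deriv (∑ i ∈ s, α i) F := by
  simp only [deriv]
  rw [← LinearMap.sum_apply, ← map_sum]
  congr 2
  ext μ
  simp [Finset.sum_apply]

lemma carreDuChamp_single_single (α β : Fin n → ℤ) (a b : ℂ) :
    D.carreDuChamp (single α a) (single β b) = single (α + β) (2 * D.form β α * (a * b)) := by
  simp only [carreDuChamp, laplacian, coeffMul_single, single_mul_single, add_comm β α]
  rw [← AddMonoidAlgebra.single_sub, ← AddMonoidAlgebra.single_sub, map_add, map_add,
    AddMonoidHom.add_apply, AddMonoidHom.add_apply, D.form_comm α β]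
  congr 1
  push_cast
  ring

lemma carreDuChamp_single (α : Fin n → ℤ) (G) :
    D.carreDuChamp (single α 1) G = 2 * (single α 1 * D.deriv α G) := by
  induction G using induction_linear with
  | zero => simp [carreDuChamp]
  | add F G hF hG =>
    simp only [carreDuChamp, map_add, mul_add, add_mul] at *
    linear_combination hF + hG
  | single β b =>
    rw [carreDuChamp_single_single, deriv, coeffMul_single, single_mul_single,
      two_mul (AddMonoidAlgebra.single _ _), ← AddMonoidAlgebra.single_add]
    congr 1
    ring

lemma carreDuChamp_mul (F G H) :
    D.carreDuChamp (F * G) H = F * D.carreDuChamp G H + G * D.carreDuChamp F H := by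
  induction F using induction_linear with
  | zero => simp [carreDuChamp]
  | add F F' hF hF' =>
    simp only [carreDuChamp, map_add, mul_add, add_mul] at *
    linear_combination hF + hF'
  | single α a =>
  induction G using induction_linear with
  | zero => simp [carreDuChamp]
  | add G G' hG hG' =>
    simp only [carreDuChamp, map_add, mul_add, add_mul] at *
    linear_combination hG + hG'
  | single β b =>
  induction H using induction_linear with
  | zero => simp [carreDuChamp]
  | add H H' hH hH' =>
    simp only [carreDuChamp, map_add, mul_add, add_mul] at *
    linear_combination hH + hH'
  | single γ c =>
    simp only [single_mul_single, carreDuChamp_single_single, map_add]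
    rw [← add_assoc, ← add_assoc, add_comm β α, ← AddMonoidAlgebra.single_add]
    congr 1
    push_cast
    ring

lemma carreDuChamp_one_sub_single (α : Fin n → ℤ) (G) :
    D.carreDuChamp (1 - single (-α) 1) G = 2 * (single (-α) 1 * D.deriv α G) := by
  have hneg := D.carreDuChamp_single (-α) G
  have hone : D.laplacian 1 = 0 := by
    rw [one_def, laplacian, coeffMul_single]
    simp
  rw [deriv_neg] at hneg
  simp only [carreDuChamp, map_sub, sub_mul, one_mul] at *
  rw [hone]
  linear_combination -hneg

/-- The product `Z^κ ∏ (1 - Z^{-α})` over `α ∈ S`, a general form of the Weyl denominator. -/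
def denominator (κ : Fin n → ℤ) (S : Finset (Fin n → ℤ)) : ℂ[Fin n → ℤ] :=
  single κ 1 * ∏ α ∈ S, (1 - single (-α) 1)

lemma denominator_insert (κ) {S : Finset (Fin n → ℤ)} {β} (hβ : β ∉ S) :
    denominator κ (insert β S) = (1 - single (-β) 1) * denominator κ S := by
  rw [denominator, Finset.prod_insert hβ, denominator, mul_left_comm]

lemma carreDuChamp_denominator (κ) {S : Finset (Fin n → ℤ)} {χ : ℂ[Fin n → ℤ]}
    {N : (Fin n → ℤ) → ℂ[Fin n → ℤ]} (hN : ∀ α ∈ S, (1 - single (-α) 1) * N α = D.deriv α χ) :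
    D.carreDuChamp (denominator κ S) χ =
      denominator κ S * (2 * D.deriv κ χ + ∑ α ∈ S, 2 * (single (-α) 1 * N α)) := by
  induction S using Finset.induction_on with
  | empty =>
    simp only [denominator, Finset.prod_empty, mul_one, Finset.sum_empty, add_zero]
    rw [carreDuChamp_single, mul_left_comm]
  | insert β S hβ ih =>
    rw [denominator_insert κ hβ, carreDuChamp_mul,
      ih fun α hα => hN α (Finset.mem_insert_of_mem hα), carreDuChamp_one_sub_single,
      ← hN β (Finset.mem_insert_self _ _), Finset.sum_insert hβ]
    ring

/-- The element `F` is a combination of `Z^κ` and of terms lower in the order given by the root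
lattice, and `Z^κ` has coefficient `1`. -/
structure HasHighestTerm (A : Fin n → Fin n → ℤ) (κ : Fin n → ℤ) (F : ℂ[Fin n → ℤ]) : Prop where
  coeff_eq_one : F.coeff κ = 1
  exists_eq_sub : ∀ ν, F.coeff ν ≠ 0 → ∃ k, 0 ≤ k ∧ ν = κ - k ᵥ* of A

lemma hasHighestTerm_single (κ) : HasHighestTerm A κ (single κ 1) where
  coeff_eq_one := by simp
  exists_eq_sub ν hν := by
    obtain rfl : κ = ν := by
      by_contra h
      exact hν (by simp [h])
    exact ⟨0, le_rfl, by simp⟩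

include D in
lemma HasHighestTerm.mul {κ κ' F G} (hF : HasHighestTerm A κ F) (hG : HasHighestTerm A κ' G) :
    HasHighestTerm A (κ + κ') (F * G) where
  coeff_eq_one := by
    rw [coeff_mul_add_of_uniqueAdd, hF.coeff_eq_one, hG.coeff_eq_one, one_mul]
    intro a b ha hb hab
    obtain ⟨k, hk, rfl⟩ := hF.exists_eq_sub a (Finsupp.mem_support_iff.mp ha)
    obtain ⟨l, hl, rfl⟩ := hG.exists_eq_sub b (Finsupp.mem_support_iff.mp hb)
    have hkl : k + l = 0 := D.vecMul_injective <| by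
      simpa [sub_add_sub_comm, add_vecMul] using hab
    obtain ⟨rfl, rfl⟩ := (add_eq_zero_iff_of_nonneg hk hl).mp hkl
    simp
  exists_eq_sub ν hν := by
    have hsupp : ∃ a b, F.coeff a ≠ 0 ∧ G.coeff b ≠ 0 ∧ a + b = ν := by
      by_contra! hcon
      refine hν ?_
      rw [coeff_mul]
      exact Finset.sum_eq_zero fun a ha => Finset.sum_eq_zero fun b hb =>
        if_neg (hcon a b (Finsupp.mem_support_iff.mp ha) (Finsupp.mem_support_iff.mp hb))
    obtain ⟨a, b, ha, hb, rfl⟩ := hsupp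
    obtain ⟨k, hk, rfl⟩ := hF.exists_eq_sub a ha
    obtain ⟨l, hl, rfl⟩ := hG.exists_eq_sub b hb
    exact ⟨k + l, add_nonneg hk hl, by rw [add_vecMul, sub_add_sub_comm]⟩

lemma hasHighestTerm_one_sub_single {α} (hα : α ∈ D.posRoots) :
    HasHighestTerm A 0 (1 - single (-α) 1) := by
  obtain ⟨hroot, k, hk, hαk⟩ := D.mem_posRoots.mp hα
  have hα0 : -α ≠ 0 := neg_ne_zero.mpr fun h => D.zero_notMem_roots (h ▸ hroot)
  refine ⟨by simp [one_def, hα0.symm], fun ν hν => ?_⟩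
  obtain rfl | h0 := eq_or_ne ν 0
  · exact ⟨0, le_rfl, by simp⟩
  · refine ⟨k, hk, ?_⟩
    rw [zero_sub, ← hαk]
    by_contra h
    exact hν (by simp [one_def, h0, h])

lemma hasHighestTerm_denominator (κ) : HasHighestTerm A κ (denominator κ D.posRoots) := by
  have hprod : HasHighestTerm A 0 (∏ α ∈ D.posRoots, (1 - single (-α) 1)) :=
    Finset.prod_induction _ _ (fun F G hF hG => by simpa using hF.mul D hG)
      (hasHighestTerm_single 0) fun α hα => D.hasHighestTerm_one_sub_single hα
  simpa only [denominator, add_zero] using (hasHighestTerm_single κ).mul D hprod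

/-- The action of a simple reflection on the group algebra. -/
def reflHom (A : Fin n → Fin n → ℤ) (i : Fin n) : ℂ[Fin n → ℤ] →+* ℂ[Fin n → ℤ] :=
  mapDomainRingHom ℂ (CL.refl A i).mulVecLin.toAddMonoidHom

lemma reflHom_single (i : Fin n) (μ c) :
    reflHom A i (single μ c) = single (CL.refl A i *ᵥ μ) c := by
  simp [reflHom]

lemma coeff_reflHom {i : Fin n} (hi : A i i = 2) (F μ) :
    (reflHom A i F).coeff (CL.refl A i *ᵥ μ) = F.coeff μ :=
  Finsupp.mapDomain_apply (Function.LeftInverse.injective (refl_refl_mulVec hi)) F.coeff μ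

include D in
lemma isSkew_of_reflHom {F} (h : ∀ i, reflHom A i F = -F) : IsSkew A F := fun i μ => by
  rw [← coeff_reflHom (D.diag i) F μ, h, coeff_neg, Finsupp.neg_apply, neg_neg]

lemma reflHom_denominator (i : Fin n) :
    reflHom A i (denominator 1 D.posRoots) = -denominator 1 D.posRoots := by
  have hfactor (α) : reflHom A i (1 - single (-α) 1) = 1 - single (-(CL.refl A i *ᵥ α)) 1 := by
    rw [map_sub, map_one, reflHom_single, mulVec_neg]
  have hone : CL.refl A i *ᵥ 1 = 1 + -A i := by
    rw [refl_mulVec, Pi.one_apply, one_smul, sub_eq_add_neg]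
  have hcancel : (single (-A i) 1 * single (A i) 1 : ℂ[Fin n → ℤ]) = 1 := by
    rw [single_mul_single, neg_add_cancel, mul_one, one_def]
  rw [denominator, map_mul, reflHom_single, map_prod, hone,
    ← Finset.mul_prod_erase _ _ (D.simple_mem_posRoots i),
    ← Finset.mul_prod_erase _ _ (D.simple_mem_posRoots i)]
  simp only [hfactor]
  rw [D.prod_erase_simple_comp_refl fun α => 1 - single (-α) (1 : ℂ), refl_mulVec_simple (D.diag i),
    neg_neg, ← mul_one (1 : ℂ), ← single_mul_single, mul_one]
  linear_combination (-single 1 1 * ∏ α ∈ D.posRoots.erase (A i), (1 - single (-α) 1)) * hcancel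

lemma denominator_eq_alternant : denominator 1 D.posRoots = D.alternant 1 := by
  have hterm := D.hasHighestTerm_denominator 1
  refine IsSkew.eq_alternant D (isSkew_of_reflHom D D.reflHom_denominator) (fun _ => one_pos)
    hterm.coeff_eq_one fun μ hμ hne => ?_
  obtain ⟨k, hk, rfl⟩ := hterm.exists_eq_sub μ hne
  obtain rfl | hk0 := eq_or_ne k 0
  · simp
  have hneg : 0 ≤ -(k ᵥ* of A) := fun i => by
    have := hμ i
    simp only [Pi.sub_apply, Pi.one_apply, Pi.zero_apply, Pi.neg_apply] at this ⊢
    omega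
  have hnonneg := D.form_vecMul_nonneg hneg hk
  have hpos := D.form_self_pos (k ᵥ* of A) fun h => hk0 <| D.vecMul_injective (by simpa using h)
  rw [map_neg, AddMonoidHom.neg_apply] at hnonneg
  linarith

lemma laplacian_alternant (κ) :
    D.laplacian (D.alternant κ) = (D.form κ κ : ℂ) • D.alternant κ := by
  rw [alternant, map_sum, Finset.smul_sum]
  refine Finset.sum_congr rfl fun w hw => ?_
  rw [laplacian, coeffMul_single, D.form_mulVec_mulVec (D.finite_weyl.mem_toFinset.mp hw),
    AddMonoidAlgebra.smul_single, smul_eq_mul]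

lemma eq_of_form_self_eq {κ μ k : Fin n → ℤ} (hκ : ∀ i, 0 < κ i) (hμ : ∀ i, 0 < μ i) (hk : 0 ≤ k)
    (hμk : μ = κ - k ᵥ* of A) (h : D.form μ μ = D.form κ κ) : μ = κ := by
  obtain rfl | hk0 := eq_or_ne k 0
  · simpa using hμk
  have hκpos := D.form_vecMul_pos hκ hk hk0
  have hμpos := D.form_vecMul_pos hμ hk hk0
  have hκeq : κ = μ + k ᵥ* of A := (eq_sub_iff_add_eq.mp hμk).symm
  rw [hκeq] at h hκpos
  have hcomm := D.form_comm μ (k ᵥ* of A)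
  simp only [map_add, AddMonoidHom.add_apply] at h hκpos
  linarith

lemma laplacian_denominator_mul {lam : Fin n → ℤ} {χ : ℂ[Fin n → ℤ]}
    {N : (Fin n → ℤ) → ℂ[Fin n → ℤ]}
    (hN : ∀ α ∈ D.posRoots, (1 - single (-α) 1) * N α = D.deriv α χ)
    (hcas : D.laplacian χ + ∑ α ∈ D.posRoots, (1 + single (-α) 1) * N α =
      ((D.form lam lam + D.form lam 2 : ℝ) : ℂ) • χ) :
    D.laplacian (denominator 1 D.posRoots * χ) =
      (D.form (lam + 1) (lam + 1) : ℂ) • (denominator 1 D.posRoots * χ) := by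
  have hderiv : 2 * D.deriv 1 χ = ∑ α ∈ D.posRoots, (1 - single (-α) 1) * N α := by
    rw [Finset.sum_congr rfl hN, D.sum_deriv, D.sum_posRoots, ← one_add_one_eq_two (R := Fin n → ℤ),
      deriv_add, two_mul]
  have hΔ : D.laplacian (denominator 1 D.posRoots) =
      (D.form 1 1 : ℂ) • denominator 1 D.posRoots := by
    rw [denominator_eq_alternant, laplacian_alternant]
  have hgamma := D.carreDuChamp_denominator 1 hN
  have hsum : 2 * D.deriv 1 χ + ∑ α ∈ D.posRoots, 2 * (single (-α) 1 * N α) =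
      ∑ α ∈ D.posRoots, (1 + single (-α) 1) * N α := by
    rw [hderiv, ← Finset.sum_add_distrib]
    exact Finset.sum_congr rfl fun α _ => by ring
  have hform : D.form (lam + 1) (lam + 1) = D.form lam lam + D.form lam 2 + D.form 1 1 := by
    rw [← one_add_one_eq_two]
    simp only [map_add, AddMonoidHom.add_apply, D.form_comm 1 lam]
    ring
  rw [carreDuChamp, hsum, hΔ, sub_sub, sub_eq_iff_eq_add] at hgamma
  rw [hgamma, hform, Complex.ofReal_add _ (D.form 1 1), add_smul, ← mul_smul_comm, ← hcas,
    mul_smul_comm, mul_comm χ]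
  ring

/-- The Weyl character formula for an element `χ` of the group algebra that behaves like a
character: `N α` stands for the quotient `deriv α χ / (1 - Z^{-α})`, and `hcas` is Freudenthal's
formula. -/
theorem alternant_mul_eq {lam : Fin n → ℤ} {χ : ℂ[Fin n → ℤ]} (hlam : 0 ≤ lam)
    (hχ : HasHighestTerm A lam χ) (hrefl : ∀ i, reflHom A i χ = χ)
    {N : (Fin n → ℤ) → ℂ[Fin n → ℤ]}
    (hN : ∀ α ∈ D.posRoots, (1 - single (-α) 1) * N α = D.deriv α χ)
    (hcas : D.laplacian χ + ∑ α ∈ D.posRoots, (1 + single (-α) 1) * N α =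
      ((D.form lam lam + D.form lam 2 : ℝ) : ℂ) • χ) :
    D.alternant 1 * χ = D.alternant (lam + 1) := by
  have hpos : ∀ i, 0 < (lam + 1) i := fun i => Int.lt_add_one_of_le (hlam i)
  have hterm : HasHighestTerm A (lam + 1) (denominator 1 D.posRoots * χ) := by
    rw [add_comm]
    exact (D.hasHighestTerm_denominator 1).mul D hχ
  have hskew : IsSkew A (denominator 1 D.posRoots * χ) := isSkew_of_reflHom D fun i => by
    rw [map_mul, hrefl, reflHom_denominator, neg_mul]
  rw [← denominator_eq_alternant]
  refine hskew.eq_alternant D hpos hterm.coeff_eq_one fun μ hμ hne => ?_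
  obtain ⟨k, hk, hμk⟩ := hterm.exists_eq_sub μ hne
  refine D.eq_of_form_self_eq hpos hμ hk hμk ?_
  have hcoeff := congrArg (·.coeff μ) (D.laplacian_denominator_mul hN hcas)
  simp only [laplacian, coeff_coeffMul, coeff_smul, Finsupp.smul_apply, smul_eq_mul] at hcoeff
  exact_mod_cast mul_right_cancel₀ hne hcoeff

end RootGeometry

end FormalCharacter

attribute [local instance] LieRing.ofAssociativeRing

section Exponential

variable {K R : Type*} [Field K] [Ring R] [Algebra K R]

/-- The group of units of `R` under conjugation by which the subspace `G` is stable. -/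
def conjStabilizer (G : Submodule K R) : Subgroup Rˣ where
  carrier := {T | ∀ a : R, T * a * (T⁻¹ : Rˣ) ∈ G ↔ a ∈ G}
  one_mem' := by simp
  mul_mem' {T S} hT hS a := by
    rw [← hS a, ← hT (S * a * (S⁻¹ : Rˣ))]
    simp only [_root_.mul_inv_rev, Units.val_mul, mul_assoc]
  inv_mem' {T} hT a := by
    rw [← hT]
    simp only [inv_inv, mul_assoc, Units.mul_inv_cancel_left, Units.mul_inv, mul_one]

lemma conj_mem_iff {G : Submodule K R} {T : Rˣ} (hT : T ∈ conjStabilizer G) {a : R} :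
    T * a * (T⁻¹ : Rˣ) ∈ G ↔ a ∈ G :=
  hT a

lemma exp_mul_mul_exp_neg [Algebra ℚ R] {N : R} (hN : IsNilpotent N) (b : R) :
    IsNilpotent.exp N * b * IsNilpotent.exp (-N) = IsNilpotent.exp (LieAlgebra.ad ℚ R N) • b := by
  have hL := (LinearMap.isNilpotent_mulLeft_iff ℚ N).mpr hN
  have hR := (LinearMap.isNilpotent_mulRight_iff ℚ (-N)).mpr hN.neg
  have had : LieAlgebra.ad ℚ R N = LinearMap.mulLeft ℚ N + LinearMap.mulRight ℚ (-N) := by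
    ext a
    simp [Ring.lie_def, sub_eq_add_neg]
  have hexpL : IsNilpotent.exp (LinearMap.mulLeft ℚ N) =
      LinearMap.mulLeft ℚ (IsNilpotent.exp N) :=
    (IsNilpotent.map_exp hN (Algebra.lmul ℚ R)).symm
  have hexpR : IsNilpotent.exp (LinearMap.mulRight ℚ (-N)) =
      LinearMap.mulRight ℚ (IsNilpotent.exp (-N)) := by
    obtain ⟨k, hk⟩ := hN.neg
    rw [IsNilpotent.exp_eq_sum hk, IsNilpotent.exp_eq_sum (k := k) (by
      rw [LinearMap.pow_mulRight, hk, LinearMap.mulRight_zero_eq_zero])]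
    ext a
    simp [LinearMap.pow_mulRight, Finset.mul_sum]
  rw [had, IsNilpotent.exp_add_of_commute (LinearMap.commute_mulLeft_right _ _) hL hR, hexpL,
    hexpR, Module.End.smul_def, Module.End.mul_apply, LinearMap.mulRight_apply,
    LinearMap.mulLeft_apply, mul_assoc]

lemma exp_ad_smul_mem [Algebra ℚ R] {N : R} (hN : IsNilpotent N) {G : Submodule ℚ R}
    (hG : ∀ a ∈ G, ⁅N, a⁆ ∈ G) {a : R} (ha : a ∈ G) :
    IsNilpotent.exp (LieAlgebra.ad ℚ R N) • a ∈ G := by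
  have hpow (i : ℕ) : LieAlgebra.ad ℚ R N ^ i • a ∈ G := by
    induction i with
    | zero => simpa using ha
    | succ i ih =>
      rw [pow_succ', mul_smul, Module.End.smul_def, LieAlgebra.ad_apply]
      exact hG _ ih
  obtain ⟨k, hk⟩ := LieAlgebra.ad_nilpotent_of_nilpotent (R := ℚ) hN
  rw [IsNilpotent.exp_smul_eq_sum (k := k) (by rw [hk, zero_smul]) ⟨k, hk⟩]
  exact G.sum_mem fun i _ => G.smul_mem _ (hpow i)

lemma exists_unit_conj_of_isNilpotent [CharZero K] {N : R} (hN : IsNilpotent N) :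
    ∃ E : Rˣ,
      (∀ b : R, ⁅N, ⁅N, ⁅N, b⁆⁆⁆ = 0 → b * E = E * (b + ⁅b, N⁆ + (1 / 2 : K) • ⁅N, ⁅N, b⁆⁆)) ∧
      ∀ G : Submodule K R, (∀ a ∈ G, ⁅N, a⁆ ∈ G) → E ∈ conjStabilizer G := by
  let _ : Algebra ℚ R := Algebra.compHom R (algebraMap ℚ K)
  have : IsScalarTower ℚ K R := IsScalarTower.of_algebraMap_eq fun _ => rfl
  let E : Rˣ := ⟨IsNilpotent.exp N, IsNilpotent.exp (-N), IsNilpotent.exp_mul_exp_neg_self hN,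
    IsNilpotent.exp_neg_mul_exp_self hN⟩
  refine ⟨E, fun b hb => ?_, fun G hG a => ⟨fun ha => ?_, fun ha => ?_⟩⟩
  · have hconj := exp_mul_mul_exp_neg hN.neg b
    have hcube : LieAlgebra.ad ℚ R (-N) ^ 3 • b = 0 := by
      simp only [Module.End.smul_def, pow_succ, pow_zero, one_mul, Module.End.mul_apply,
        LieAlgebra.ad_apply, neg_lie, lie_neg, hb, neg_zero]
    have hhalf (r : R) : (2⁻¹ : ℚ) • r = (2⁻¹ : K) • r := by
      rw [← algebraMap_smul K (2⁻¹ : ℚ) r, map_inv₀, map_ofNat]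
    rw [neg_neg, IsNilpotent.exp_smul_eq_sum hcube
      (LieAlgebra.ad_nilpotent_of_nilpotent hN.neg)] at hconj
    simp only [map_neg, Module.End.smul_def, Finset.sum_range_succ, Finset.range_one,
      Finset.sum_singleton, Nat.factorial_zero, Nat.cast_one, inv_one, pow_zero,
      Module.End.one_apply, one_smul, Nat.factorial_one, pow_succ, mul_neg, one_mul,
      LinearMap.neg_apply, LieAlgebra.ad_apply, lie_skew, Nat.factorial_two, Nat.cast_ofNat,
      neg_mul, neg_neg, Module.End.mul_apply, hhalf] at hconj
    rw [one_div, ← hconj, mul_assoc]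
    exact (E.mul_inv_cancel_left (b * E)).symm
  · have hmem := exp_ad_smul_mem (G := G.restrictScalars ℚ) hN.neg
      (fun a ha => neg_lie N a ▸ G.neg_mem (hG a ha)) ha
    rw [← exp_mul_mul_exp_neg hN.neg, neg_neg] at hmem
    have hcancel : ((E⁻¹ : Rˣ) : R) * (E * a * (E⁻¹ : Rˣ)) * E = a := by
      simp only [mul_assoc, Units.inv_mul_cancel_left, Units.inv_mul, mul_one]
    exact hcancel ▸ hmem
  · exact exp_mul_mul_exp_neg hN a ▸ exp_ad_smul_mem (G := G.restrictScalars ℚ) hN hG ha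

end Exponential

/-- Operators satisfying the defining relations of the Lie algebra presented by `A`, apart from the
commutativity of the `h i` and the relations `ad(x i) ^ (1 - A j i) (x j) = 0` and
`ad(y i) ^ (1 - A j i) (y j) = 0`. -/
structure ChevalleyModule (A : Fin n → Fin n → ℤ) (V : Type*) [AddCommGroup V] [Module ℂ V] where
  x : Fin n → Module.End ℂ V
  y : Fin n → Module.End ℂ V
  h : Fin n → Module.End ℂ V
  lie_x_y : ∀ i j, ⁅x i, y j⁆ = if i = j then h i else 0
  lie_h_x : ∀ i j, ⁅h i, x j⁆ = (A j i : ℂ) • x j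
  lie_h_y : ∀ i j, ⁅h i, y j⁆ = -((A j i : ℂ) • y j)

/-- A `ChevalleyModule` in which a basis of weight vectors is fixed. -/
structure WeightModule (A : Fin n → Fin n → ℤ) (ι V : Type*) [AddCommGroup V] [Module ℂ V]
    extends ChevalleyModule A V where
  basis : Module.Basis ι ℂ V
  weight : ι → (Fin n → ℤ)
  h_basis : ∀ i k, h i (basis k) = (weight k i : ℂ) • basis k

namespace WeightModule

variable {A : Fin n → Fin n → ℤ} {ι V : Type*} [AddCommGroup V] [Module ℂ V]

section Homogeneous

variable (M : WeightModule A ι V)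

/-- The operator acting on the weight space of each weight `μ` as the scalar `φ μ`. -/
def diagonal : ((Fin n → ℤ) → ℂ) →ₐ[ℂ] Module.End ℂ V :=
  AlgHom.ofLinearMap
    { toFun := fun φ => M.basis.constr ℂ fun k => φ (M.weight k) • M.basis k
      map_add' := fun φ ψ => M.basis.ext fun k => by simp [add_smul]
      map_smul' := fun c φ => M.basis.ext fun k => by simp [mul_smul] }
    (M.basis.ext fun k => by simp)
    (fun φ ψ => M.basis.ext fun k => by simp [smul_smul, mul_comm])

@[simp]
lemma diagonal_basis (φ k) : M.diagonal φ (M.basis k) = φ (M.weight k) • M.basis k :=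
  M.basis.constr_basis ℂ _ k

lemma diagonal_eval (i : Fin n) : M.diagonal (fun μ => (μ i : ℂ)) = M.h i :=
  M.basis.ext fun k => by rw [M.h_basis, M.diagonal_basis]

lemma repr_diagonal (φ v k) :
    M.basis.repr (M.diagonal φ v) k = φ (M.weight k) * M.basis.repr v k := by
  have heq : M.basis.coord k ∘ₗ M.diagonal φ = φ (M.weight k) • M.basis.coord k :=
    M.basis.ext fun l => by
      obtain rfl | hl := eq_or_ne l k
      · simp
      · simp [Finsupp.single_eq_of_ne hl.symm]
  exact LinearMap.congr_fun heq v

/-- The vector `v`, possibly zero, has weight `μ`. -/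
def IsWeightVector (v : V) (μ : Fin n → ℤ) : Prop :=
  ∀ φ, M.diagonal φ v = φ μ • v

/-- The operator `a`, possibly zero, shifts weights by `β`. -/
def IsHomogeneous (a : Module.End ℂ V) (β : Fin n → ℤ) : Prop :=
  ∀ φ, M.diagonal φ * a = a * M.diagonal fun μ => φ (μ + β)

lemma isWeightVector_basis (k) : M.IsWeightVector (M.basis k) (M.weight k) :=
  fun φ => M.diagonal_basis φ k

variable {M}

lemma isWeightVector_of_h {v : V} {μ : Fin n → ℤ} (h : ∀ i, M.h i v = (μ i : ℂ) • v) :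
    M.IsWeightVector v μ := by
  refine fun φ => M.basis.ext_elem fun k => ?_
  rw [repr_diagonal, map_smul, Finsupp.smul_apply, smul_eq_mul]
  by_cases h0 : M.basis.repr v k = 0
  · rw [h0, mul_zero, mul_zero]
  congr 2
  ext i
  have hi := congrArg (M.basis.repr · k) (h i)
  simp only [← diagonal_eval, repr_diagonal, map_smul, Finsupp.smul_apply, smul_eq_mul] at hi
  exact_mod_cast mul_right_cancel₀ h0 hi

lemma IsWeightVector.weight_eq {v : V} {μ ν} (h : M.IsWeightVector v μ)
    (h' : M.IsWeightVector v ν) (hv : v ≠ 0) : μ = ν := by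
  by_contra hne
  have hind := h (Pi.single μ 1)
  rw [h', Pi.single_eq_same, Pi.single_eq_of_ne (Ne.symm hne), zero_smul, one_smul] at hind
  exact hv hind.symm

lemma IsWeightVector.exists_weight_eq {v : V} {μ} (h : M.IsWeightVector v μ) (hv : v ≠ 0) :
    ∃ k, M.weight k = μ := by
  by_contra! hcon
  have hzero : M.diagonal (Pi.single μ 1) = 0 := M.basis.ext fun k => by simp [hcon k]
  refine hv ?_
  simpa [hzero] using (h (Pi.single μ 1)).symm

lemma isHomogeneous_of_basis {a : Module.End ℂ V} {β}
    (h : ∀ k, M.IsWeightVector (a (M.basis k)) (M.weight k + β)) : M.IsHomogeneous a β :=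
  fun φ => M.basis.ext fun k => by
    rw [Module.End.mul_apply, Module.End.mul_apply, h k, M.diagonal_basis, map_smul]

lemma IsHomogeneous.isWeightVector {a : Module.End ℂ V} {β μ} {v : V} (h : M.IsHomogeneous a β)
    (hv : M.IsWeightVector v μ) : M.IsWeightVector (a v) (μ + β) := by
  intro φ
  rw [← Module.End.mul_apply, h, Module.End.mul_apply, hv, map_smul]

lemma isHomogeneous_of_h {a : Module.End ℂ V} {β : Fin n → ℤ}
    (h : ∀ i, ⁅M.h i, a⁆ = (β i : ℂ) • a) : M.IsHomogeneous a β := by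
  refine isHomogeneous_of_basis fun k => isWeightVector_of_h fun i => ?_
  have hi := LinearMap.congr_fun (h i) (M.basis k)
  simp only [Ring.lie_def, LinearMap.sub_apply, Module.End.mul_apply, LinearMap.smul_apply,
    M.h_basis, map_smul] at hi
  rw [sub_eq_iff_eq_add.mp hi, ← add_smul, Pi.add_apply, Int.cast_add, add_comm]

lemma isHomogeneous_x (i) : M.IsHomogeneous (M.x i) (A i) :=
  isHomogeneous_of_h fun j => M.lie_h_x j i

lemma isHomogeneous_y (i) : M.IsHomogeneous (M.y i) (-A i) :=
  isHomogeneous_of_h fun j => by simp [M.lie_h_y j i]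

lemma isHomogeneous_diagonal (φ) : M.IsHomogeneous (M.diagonal φ) 0 := by
  intro ψ
  simp only [add_zero, ← map_mul, mul_comm]

lemma isHomogeneous_h (i) : M.IsHomogeneous (M.h i) 0 :=
  M.diagonal_eval i ▸ isHomogeneous_diagonal _

lemma IsHomogeneous.lie_h {a : Module.End ℂ V} {β} (ha : M.IsHomogeneous a β) (i : Fin n) :
    ⁅M.h i, a⁆ = (β i : ℂ) • a := by
  rw [Ring.lie_def, ← diagonal_eval, ha, ← mul_sub, ← map_sub]
  have hconst : (fun μ : Fin n → ℤ => (((μ + β) i : ℤ) : ℂ)) - (fun μ => ((μ i : ℤ) : ℂ)) =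
      algebraMap ℂ _ (β i : ℂ) := by
    ext μ
    simp
  rw [hconst, AlgHom.commutes, Algebra.algebraMap_eq_smul_one, mul_smul_comm, mul_one]

lemma IsHomogeneous.sub {a b : Module.End ℂ V} {β} (ha : M.IsHomogeneous a β)
    (hb : M.IsHomogeneous b β) : M.IsHomogeneous (a - b) β := by
  intro φ
  rw [mul_sub, ha, hb, sub_mul]

lemma IsHomogeneous.smul {a : Module.End ℂ V} {β} (c : ℂ) (ha : M.IsHomogeneous a β) :
    M.IsHomogeneous (c • a) β := by
  intro φ
  rw [mul_smul_comm, ha, smul_mul_assoc]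

lemma IsHomogeneous.mul {a b : Module.End ℂ V} {α β} (ha : M.IsHomogeneous a α)
    (hb : M.IsHomogeneous b β) : M.IsHomogeneous (a * b) (α + β) := by
  intro φ
  rw [← mul_assoc, ha, mul_assoc, hb, mul_assoc]
  simp only [add_assoc, add_comm β]

lemma IsHomogeneous.lie {a b : Module.End ℂ V} {α β} (ha : M.IsHomogeneous a α)
    (hb : M.IsHomogeneous b β) : M.IsHomogeneous ⁅a, b⁆ (α + β) :=
  Ring.lie_def a b ▸ (ha.mul hb).sub (add_comm β α ▸ hb.mul ha)

lemma IsHomogeneous.pow {a : Module.End ℂ V} {α} (ha : M.IsHomogeneous a α) (m : ℕ) :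
    M.IsHomogeneous (a ^ m) (m • α) := by
  induction m with
  | zero => simp [IsHomogeneous]
  | succ m ih =>
    rw [pow_succ, succ_nsmul]
    exact ih.mul ha

lemma exists_basis_ne_zero {a : Module.End ℂ V} (ha : a ≠ 0) : ∃ k, a (M.basis k) ≠ 0 := by
  by_contra! hcon
  exact ha (M.basis.ext hcon)

lemma IsHomogeneous.weight_eq {a : Module.End ℂ V} {α β} (ha : M.IsHomogeneous a α)
    (hb : M.IsHomogeneous a β) (h0 : a ≠ 0) : α = β := by
  obtain ⟨k, hk⟩ := exists_basis_ne_zero (M := M) h0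
  exact add_left_cancel ((ha.isWeightVector (M.isWeightVector_basis k)).weight_eq
    (hb.isWeightVector (M.isWeightVector_basis k)) hk)

lemma IsHomogeneous.isNilpotent [Finite ι] {a : Module.End ℂ V} {β} (ha : M.IsHomogeneous a β)
    (hβ : β ≠ 0) : IsNilpotent a := by
  by_contra hnil
  have hmem (m : ℕ) : m • β ∈ Set.range fun p : ι × ι => M.weight p.1 - M.weight p.2 := by
    obtain ⟨k, hk⟩ := exists_basis_ne_zero (M := M) fun h => hnil ⟨m, h⟩
    obtain ⟨l, hl⟩ := ((ha.pow m).isWeightVector (M.isWeightVector_basis k)).exists_weight_eq hk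
    exact ⟨(l, k), sub_eq_of_eq_add' hl⟩
  have hinj : Function.Injective fun m : ℕ => m • β := fun l m hlm =>
    Nat.cast_injective (smul_left_injective ℤ hβ (by simpa using hlm))
  exact Set.infinite_of_injective_forall_mem hinj hmem (Set.finite_range _)

/-- The projection of an operator to its part of weight `β`. -/
def homogeneousPart (M : WeightModule A ι V) (β : Fin n → ℤ) :
    Module.End ℂ V →ₗ[ℂ] Module.End ℂ V :=
  (M.basis.constr ℂ).toLinearMap ∘ₗ LinearMap.pi fun k =>
    M.diagonal (Pi.single (M.weight k + β) 1) ∘ₗ LinearMap.applyₗ (M.basis k)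

lemma IsHomogeneous.homogeneousPart {a : Module.End ℂ V} {α} (ha : M.IsHomogeneous a α) (β) :
    M.homogeneousPart β a = if α = β then a else 0 := by
  refine M.basis.ext fun k => ?_
  have hk := ha.isWeightVector (M.isWeightVector_basis k) (Pi.single (M.weight k + β) 1)
  simp only [Pi.single_apply, add_right_inj] at hk
  simp only [WeightModule.homogeneousPart, LinearMap.comp_apply, LinearEquiv.coe_coe,
    Module.Basis.constr_basis, LinearMap.pi_apply, LinearMap.applyₗ_apply_apply, hk]
  split_ifs <;> simp

lemma mem_span_isHomogeneous {S : Set (Module.End ℂ V)} (hS : ∀ s ∈ S, ∃ β, M.IsHomogeneous s β)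
    {a : Module.End ℂ V} {β} (ha : a ∈ Submodule.span ℂ S) (hβ : M.IsHomogeneous a β) :
    a ∈ Submodule.span ℂ {s ∈ S | M.IsHomogeneous s β} := by
  have hmap := Submodule.mem_map_of_mem (f := M.homogeneousPart β) ha
  rw [hβ.homogeneousPart, if_pos rfl, Submodule.map_span] at hmap
  refine Submodule.span_le.mpr ?_ hmap
  rintro _ ⟨s, hs, rfl⟩
  obtain ⟨γ, hγ⟩ := hS s hs
  rw [hγ.homogeneousPart]
  split_ifs with h
  · exact Submodule.subset_span ⟨hs, h ▸ hγ⟩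
  · exact Submodule.zero_mem _

end Homogeneous

section WeylLift

variable (M : WeightModule A ι V)

/-- The unit `T` of `End V` lifts the Weyl group element `w`: it permutes the weight spaces as `w`
does, and conjugation by it preserves every subspace of `End V` stable under all `ad xᵢ` and
`ad yᵢ`. -/
def IsLift (w : Matrix (Fin n) (Fin n) ℤ) (T : (Module.End ℂ V)ˣ) : Prop :=
  (∀ φ, M.diagonal φ * T = T * M.diagonal fun μ => φ (w *ᵥ μ)) ∧
    ∀ G : Submodule ℂ (Module.End ℂ V), (∀ i, ∀ a ∈ G, ⁅M.x i, a⁆ ∈ G) →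
      (∀ i, ∀ a ∈ G, ⁅M.y i, a⁆ ∈ G) → T ∈ conjStabilizer G

variable {M}

lemma h_mul_exp_mul_exp_mul_exp {i j : Fin n} (hA : A i i = 2) {E F : Module.End ℂ V}
    (hxE : M.x i * E = E * M.x i) (hhE : ∀ j, M.h j * E = E * (M.h j + (A i j : ℂ) • M.x i))
    (hhF : ∀ j, M.h j * F = F * (M.h j + (A i j : ℂ) • M.y i))
    (hxF : M.x i * F = F * (M.x i - M.h i - M.y i)) :
    M.h j * (E * F * E) = E * F * E * (M.h j - (A i j : ℂ) • M.h i) := by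
  have hF : (M.h j + (A i j : ℂ) • M.x i) * F =
      F * (M.h j + (A i j : ℂ) • M.x i - (A i j : ℂ) • M.h i) := by
    rw [add_mul, smul_mul_assoc, hhF, hxF, ← mul_smul_comm, ← mul_add]
    congr 1
    module
  have hE : (M.h j + (A i j : ℂ) • M.x i - (A i j : ℂ) • M.h i) * E =
      E * (M.h j - (A i j : ℂ) • M.h i) := by
    rw [sub_mul, add_mul, smul_mul_assoc, smul_mul_assoc, hhE, hhE, hxE, hA, ← mul_smul_comm,
      ← mul_smul_comm, ← mul_add, ← mul_sub]
    congr 1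
    push_cast
    module
  calc M.h j * (E * F * E) = E * ((M.h j + (A i j : ℂ) • M.x i) * F) * E := by
        rw [← mul_assoc, ← mul_assoc, hhE, mul_assoc E]
    _ = E * F * ((M.h j + (A i j : ℂ) • M.x i - (A i j : ℂ) • M.h i) * E) := by
        rw [hF]; simp only [mul_assoc]
    _ = E * F * E * (M.h j - (A i j : ℂ) • M.h i) := by rw [hE]; simp only [mul_assoc]

lemma diagonal_mul_of_h_mul {i : Fin n} {T : Module.End ℂ V}
    (hT : ∀ j, M.h j * T = T * (M.h j - (A i j : ℂ) • M.h i)) (φ) :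
    M.diagonal φ * T = T * M.diagonal fun μ => φ (CL.refl A i *ᵥ μ) := by
  refine M.basis.ext fun k => ?_
  have hwt : M.IsWeightVector (T (M.basis k)) (CL.refl A i *ᵥ M.weight k) := by
    refine isWeightVector_of_h fun j => ?_
    rw [← Module.End.mul_apply, hT, Module.End.mul_apply, LinearMap.sub_apply,
      LinearMap.smul_apply, M.h_basis, M.h_basis, map_sub, map_smul, map_smul, map_smul,
      smul_smul, ← sub_smul, refl_mulVec]
    simp [mul_comm]
  rw [Module.End.mul_apply, Module.End.mul_apply, hwt, M.diagonal_basis, map_smul]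

/-- The lift is `exp xᵢ · exp (-yᵢ) · exp xᵢ`. -/
lemma exists_isLift_refl [Finite ι] {i : Fin n} (hA : A i i = 2) :
    ∃ T, M.IsLift (CL.refl A i) T := by
  have hAi : A i ≠ 0 := fun h => by simp [h] at hA
  obtain ⟨E, hE, hEG⟩ :=
    exists_unit_conj_of_isNilpotent (K := ℂ) ((isHomogeneous_x (M := M) i).isNilpotent hAi)
  obtain ⟨F, hF, hFG⟩ := exists_unit_conj_of_isNilpotent (K := ℂ)
    ((isHomogeneous_y (M := M) i).isNilpotent (neg_ne_zero.mpr hAi)).neg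
  have hxx : ⁅M.x i, M.x i⁆ = 0 := lie_self _
  have hyy : ⁅M.y i, M.y i⁆ = 0 := lie_self _
  have hxh (j) : ⁅M.x i, M.h j⁆ = -((A i j : ℂ) • M.x i) := by rw [← lie_skew, M.lie_h_x]
  have hyh (j) : ⁅M.y i, M.h j⁆ = (A i j : ℂ) • M.y i := by rw [← lie_skew, M.lie_h_y, neg_neg]
  have hyx : ⁅M.y i, M.x i⁆ = -M.h i := by rw [← lie_skew, M.lie_x_y, if_pos rfl]
  refine ⟨E * F * E, ?_, fun G hx hy => ?_⟩
  · simp only [Units.val_mul]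
    refine diagonal_mul_of_h_mul fun j => h_mul_exp_mul_exp_mul_exp hA ?_ (fun j => ?_)
      (fun j => ?_) ?_
    · simpa [hxx] using hE (M.x i) (by simp)
    · simpa [hxh, hxx, M.lie_h_x] using hE (M.h j) (by simp [hxh])
    · simpa [hyh, hyy, M.lie_h_y] using hF (M.h j) (by simp [hyh])
    · rw [hF (M.x i) (by simp [hyx, hyh])]
      congr 1
      simp only [neg_lie, lie_neg, hyx, hyh, M.lie_x_y, hA, if_true]
      module
  · have hEG' := hEG G (hx i)
    have hFG' := hFG G fun a ha => neg_lie (M.y i) a ▸ G.neg_mem (hy i a ha)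
    exact mul_mem (mul_mem hEG' hFG') hEG'

lemma exists_isLift [Finite ι] (hA : ∀ i, A i i = 2) {w} (hw : w ∈ CL.weyl A) :
    ∃ T, M.IsLift w T := by
  induction hw using weyl_induction with
  | one => exact ⟨1, by simp, fun G _ _ => one_mem _⟩
  | refl_mul i w _ ih =>
    obtain ⟨S, hS, hSG⟩ := ih
    obtain ⟨T, hT, hTG⟩ := exists_isLift_refl (M := M) (hA i)
    refine ⟨T * S, fun φ => ?_, fun G hx hy => mul_mem (hTG G hx hy) (hSG G hx hy)⟩
    rw [Units.val_mul, ← mul_assoc, hT, mul_assoc, hS, mul_assoc]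
    simp only [mulVec_mulVec]

lemma conj_ne_zero (T : (Module.End ℂ V)ˣ) {a : Module.End ℂ V} (ha : a ≠ 0) :
    T * a * (T⁻¹ : (Module.End ℂ V)ˣ) ≠ 0 := by
  rwa [Ne, Units.mul_left_eq_zero, Units.mul_right_eq_zero]

lemma IsLift.isHomogeneous_conj_iff {w T} (hT : M.IsLift w T)
    (hw : Function.Injective (w *ᵥ · : (Fin n → ℤ) → Fin n → ℤ)) {a : Module.End ℂ V} {β} :
    M.IsHomogeneous (T * a * (T⁻¹ : (Module.End ℂ V)ˣ)) (w *ᵥ β) ↔ M.IsHomogeneous a β := by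
  have hleft (φ) : M.diagonal φ * (T * a * (T⁻¹ : (Module.End ℂ V)ˣ)) * T =
      T * (M.diagonal (fun μ => φ (w *ᵥ μ)) * a) := by
    rw [mul_assoc, mul_assoc _ _ (T : Module.End ℂ V), Units.inv_mul, mul_one, ← mul_assoc, hT.1,
      mul_assoc]
  have hright (φ : (Fin n → ℤ) → ℂ) :
      T * a * (T⁻¹ : (Module.End ℂ V)ˣ) * M.diagonal (fun μ => φ (μ + w *ᵥ β)) * T =
        T * (a * M.diagonal fun μ => φ (w *ᵥ (μ + β))) := by
    rw [mul_assoc, hT.1, ← mul_assoc, mul_assoc _ _ (T : Module.End ℂ V), Units.inv_mul, mul_one,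
      mul_assoc]
    simp only [mulVec_add]
  rw [IsHomogeneous, IsHomogeneous,
    (hw.surjective_comp_right (γ := ℂ)).forall (p := fun φ => M.diagonal φ * a = _)]
  refine forall_congr' fun φ => ?_
  rw [← Units.mul_left_inj T, hleft, hright, Units.mul_right_inj]
  rfl

end WeylLift

/-- The module obtained by exchanging the raising and the lowering operators. -/
def opposite (M : WeightModule A ι V) : WeightModule A ι V where
  x := M.y
  y := M.x
  h := -M.h
  lie_x_y i j := by
    rw [← lie_skew, M.lie_x_y]
    simp only [eq_comm (a := j)]
    split_ifs with h <;> simp [h]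
  lie_h_x i j := by rw [Pi.neg_apply, neg_lie, M.lie_h_y, neg_neg]
  lie_h_y i j := by rw [Pi.neg_apply, neg_lie, M.lie_h_x]
  basis := M.basis
  weight := -M.weight
  h_basis i k := by simp [M.h_basis]

section LieImage

/-- The left-normed brackets of entries of the family `z`, where `k i` is the number of times that
`z i` occurs. -/
inductive IteratedBracket {L : Type*} [LieRing L] (z : Fin n → L) : (Fin n → ℤ) → L → Prop
  | base (i : Fin n) : IteratedBracket z (Pi.single i 1) (z i)
  | step (i : Fin n) {k : Fin n → ℤ} {a : L} (ha : IteratedBracket z k a) :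
      IteratedBracket z (k + Pi.single i 1) ⁅z i, a⁆

lemma IteratedBracket.nonneg {L : Type*} [LieRing L] {z : Fin n → L} {k a}
    (ha : IteratedBracket z k a) : 0 ≤ k := by
  induction ha with
  | base i => exact Pi.single_nonneg.mpr zero_le_one
  | step i _ ih => exact add_nonneg ih (Pi.single_nonneg.mpr zero_le_one)

lemma IteratedBracket.eq_of_single {L : Type*} [LieRing L] {z : Fin n → L} {k a}
    (ha : IteratedBracket z k a) {i : Fin n} {m : ℤ} (hk : k = Pi.single i m) :
    (m = 1 ∧ a = z i) ∨ a = 0 := by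
  induction ha generalizing m with
  | base j =>
    have hj := congrFun hk j
    obtain rfl | hji := eq_or_ne j i
    · exact .inl ⟨by simpa using hj.symm, rfl⟩
    · simp [Pi.single_eq_of_ne hji] at hj
  | @step j k a ha ih =>
    right
    have hj := congrFun hk j
    obtain rfl | hji := eq_or_ne j i
    · obtain ⟨-, rfl⟩ | rfl := ih (m := m - 1) (by rw [Pi.single_sub, ← hk, add_sub_cancel_right])
      · exact lie_self _
      · exact lie_zero _
    · have := ha.nonneg j
      simp only [Pi.add_apply, Pi.single_eq_same, Pi.single_eq_of_ne hji, Pi.zero_apply] at *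
      omega

lemma lie_mem_of_mem_span {K L : Type*} [CommRing K] [LieRing L] [LieAlgebra K L] {S : Set L}
    {P : Submodule K L} {c : L} (h : ∀ s ∈ S, ⁅c, s⁆ ∈ P) {a : L} (ha : a ∈ Submodule.span K S) :
    ⁅c, a⁆ ∈ P :=
  (Submodule.span_le (p := P.comap (LieAlgebra.ad K L c : L →ₗ[K] L))).mpr h ha

variable (M : WeightModule A ι V)

/-- The spanning set of `WeightModule.borel` that consists of homogeneous operators. -/
def borelGenerators : Set (Module.End ℂ V) := {a | ∃ k, IteratedBracket M.x k a} ∪ Set.range M.h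

/-- The image in `End V` of the Borel subalgebra generated by the `xᵢ` and the `hᵢ`. -/
def borel : Submodule ℂ (Module.End ℂ V) := Submodule.span ℂ M.borelGenerators

/-- The image in `End V` of the Lie algebra presented by `A`, as a sum of two opposite Borel
subalgebras. -/
def lieImage : Submodule ℂ (Module.End ℂ V) := M.borel ⊔ M.opposite.borel

lemma opposite_opposite_borel : M.opposite.opposite.borel = M.borel := by
  simp [borel, borelGenerators, opposite]

lemma opposite_lieImage : M.opposite.lieImage = M.lieImage := by
  rw [lieImage, opposite_opposite_borel, sup_comm, lieImage]

variable {M}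

lemma opposite_isHomogeneous_iff {a : Module.End ℂ V} {β} :
    M.opposite.IsHomogeneous a β ↔ M.IsHomogeneous a (-β) := by
  have hdiag (φ : (Fin n → ℤ) → ℂ) : M.opposite.diagonal φ = M.diagonal fun μ => φ (-μ) :=
    M.basis.ext fun k =>
      (M.opposite.diagonal_basis φ k).trans (M.diagonal_basis (fun μ => φ (-μ)) k).symm
  rw [IsHomogeneous, IsHomogeneous,
    (Equiv.arrowCongr (Equiv.neg (Fin n → ℤ)) (Equiv.refl ℂ)).forall_congr_left]
  simp only [hdiag]
  refine forall_congr' fun φ => ?_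
  simp [Equiv.arrowCongr, add_comm]

lemma IteratedBracket.isHomogeneous {k a} (ha : IteratedBracket M.x k a) :
    M.IsHomogeneous a (k ᵥ* of A) := by
  induction ha with
  | base i => rw [single_one_vecMul]; exact isHomogeneous_x i
  | step i ha ih =>
    rw [add_vecMul, single_one_vecMul, add_comm]
    exact (isHomogeneous_x i).lie ih

lemma exists_isHomogeneous_of_mem_borelGenerators {a} (ha : a ∈ M.borelGenerators) :
    ∃ β, M.IsHomogeneous a β := by
  obtain ⟨k, hk⟩ | ⟨i, rfl⟩ := ha
  · exact ⟨_, hk.isHomogeneous⟩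
  · exact ⟨0, isHomogeneous_h i⟩

lemma x_mem_borel (i) : M.x i ∈ M.borel := Submodule.subset_span (.inl ⟨_, .base i⟩)

lemma h_mem_borel (i) : M.h i ∈ M.borel := Submodule.subset_span (.inr ⟨i, rfl⟩)

lemma x_mem_lieImage (i) : M.x i ∈ M.lieImage := le_sup_left (a := M.borel) (x_mem_borel i)

lemma y_mem_lieImage (i) : M.y i ∈ M.lieImage :=
  opposite_lieImage M ▸ x_mem_lieImage (M := M.opposite) i

lemma lie_x_mem_borel (i) {a} (ha : a ∈ M.borel) : ⁅M.x i, a⁆ ∈ M.borel := by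
  refine lie_mem_of_mem_span (fun s hs => ?_) ha
  obtain ⟨k, hk⟩ | ⟨j, rfl⟩ := hs
  · exact Submodule.subset_span (.inl ⟨_, hk.step i⟩)
  · rw [← lie_skew, M.lie_h_x]
    exact Submodule.neg_mem _ (Submodule.smul_mem _ _ (x_mem_borel i))

lemma IteratedBracket.lie_y_mem_borel {k a} (ha : IteratedBracket M.x k a) (i) :
    ⁅M.y i, a⁆ ∈ M.borel := by
  have hyx (j) : ⁅M.y i, M.x j⁆ = if j = i then -M.h j else 0 := by
    rw [← lie_skew, M.lie_x_y]
    split_ifs <;> simp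
  induction ha with
  | base j =>
    rw [hyx]
    split_ifs
    · exact Submodule.neg_mem _ (h_mem_borel j)
    · exact Submodule.zero_mem _
  | @step j k a ha ih =>
    rw [leibniz_lie, hyx]
    refine Submodule.add_mem _ ?_ (lie_x_mem_borel j ih)
    split_ifs
    · rw [neg_lie, ha.isHomogeneous.lie_h]
      exact Submodule.neg_mem _ (Submodule.smul_mem _ _ (Submodule.subset_span (.inl ⟨_, ha⟩)))
    · rw [zero_lie]
      exact Submodule.zero_mem _

lemma lie_y_mem_lieImage_of_mem_borel (i) {a} (ha : a ∈ M.borel) : ⁅M.y i, a⁆ ∈ M.lieImage := by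
  refine lie_mem_of_mem_span (fun s hs => ?_) ha
  obtain ⟨k, hk⟩ | ⟨j, rfl⟩ := hs
  · exact le_sup_left (a := M.borel) (hk.lie_y_mem_borel i)
  · rw [← lie_skew, M.lie_h_y, neg_neg]
    exact Submodule.smul_mem _ _ (y_mem_lieImage i)

lemma lie_x_mem_lieImage (i) {a} (ha : a ∈ M.lieImage) : ⁅M.x i, a⁆ ∈ M.lieImage := by
  obtain ⟨b, hb, c, hc, rfl⟩ := Submodule.mem_sup.mp ha
  rw [lie_add]
  exact Submodule.add_mem _ (le_sup_left (a := M.borel) (lie_x_mem_borel i hb))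
    (opposite_lieImage M ▸ lie_y_mem_lieImage_of_mem_borel (M := M.opposite) i hc)

lemma lie_y_mem_lieImage (i) {a} (ha : a ∈ M.lieImage) : ⁅M.y i, a⁆ ∈ M.lieImage := by
  rw [← opposite_lieImage] at ha ⊢
  exact lie_x_mem_lieImage (M := M.opposite) i ha

lemma lie_mem_lieImage_of_mem_borel {c a} (hc : c ∈ M.borel) (ha : a ∈ M.lieImage) :
    ⁅c, a⁆ ∈ M.lieImage := by
  rw [← lie_skew]
  refine Submodule.neg_mem _ (lie_mem_of_mem_span (fun s hs => ?_) hc)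
  rw [← lie_skew]
  refine Submodule.neg_mem _ ?_
  obtain ⟨k, hk⟩ | ⟨j, rfl⟩ := hs
  · induction hk generalizing a with
    | base i => exact lie_x_mem_lieImage i ha
    | step i _ ih =>
      rw [lie_lie]
      exact Submodule.sub_mem _ (lie_x_mem_lieImage i (ih ha)) (ih (lie_x_mem_lieImage i ha))
  · rw [← if_pos (c := j = j) rfl (t := M.h j), ← M.lie_x_y, lie_lie]
    exact Submodule.sub_mem _ (lie_x_mem_lieImage j (lie_y_mem_lieImage j ha))
      (lie_y_mem_lieImage j (lie_x_mem_lieImage j ha))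

lemma lie_mem_lieImage {c a} (hc : c ∈ M.lieImage) (ha : a ∈ M.lieImage) :
    ⁅c, a⁆ ∈ M.lieImage := by
  obtain ⟨b, hb, d, hd, rfl⟩ := Submodule.mem_sup.mp hc
  rw [add_lie]
  refine Submodule.add_mem _ (lie_mem_lieImage_of_mem_borel hb ha) ?_
  rw [← opposite_lieImage] at ha ⊢
  exact lie_mem_lieImage_of_mem_borel hd ha

lemma IsLift.conj_mem_lieImage_iff {w} {T : (Module.End ℂ V)ˣ} (hT : M.IsLift w T) {a} :
    (T * a * (T⁻¹ : (Module.End ℂ V)ˣ) : Module.End ℂ V) ∈ M.lieImage ↔ a ∈ M.lieImage :=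
  conj_mem_iff (hT.2 _ (fun i _ => lie_x_mem_lieImage i) fun i _ => lie_y_mem_lieImage i)

lemma mem_span_generators_of_isHomogeneous {a β} (ha : a ∈ M.lieImage) (hβ : M.IsHomogeneous a β) :
    a ∈ Submodule.span ℂ
      {s ∈ M.borelGenerators ∪ M.opposite.borelGenerators | M.IsHomogeneous s β} := by
  refine mem_span_isHomogeneous (fun s hs => ?_) (by rwa [Submodule.span_union]) hβ
  obtain hs | hs := hs
  · exact exists_isHomogeneous_of_mem_borelGenerators hs
  · obtain ⟨γ, hγ⟩ := exists_isHomogeneous_of_mem_borelGenerators hs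
    exact ⟨-γ, opposite_isHomogeneous_iff.mp hγ⟩

lemma weight_of_mem_generators {s β} (hs : s ∈ M.borelGenerators ∪ M.opposite.borelGenerators)
    (hβ : M.IsHomogeneous s β) (h0 : s ≠ 0) :
    (∃ k, β = k ᵥ* of A ∧ IteratedBracket M.x k s) ∨
      (∃ k, β = (-k) ᵥ* of A ∧ IteratedBracket M.y k s) ∨ β = 0 := by
  obtain (⟨k, hk⟩ | ⟨i, rfl⟩) | ⟨k, hk⟩ | ⟨i, rfl⟩ := hs
  · exact .inl ⟨k, hβ.weight_eq hk.isHomogeneous h0, hk⟩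
  · exact .inr (.inr (hβ.weight_eq (isHomogeneous_h i) h0))
  · refine .inr (.inl ⟨k, hβ.weight_eq ?_ h0, hk⟩)
    rw [neg_vecMul]
    exact opposite_isHomogeneous_iff.mp hk.isHomogeneous
  · refine .inr (.inr (hβ.weight_eq ?_ h0))
    simpa using opposite_isHomogeneous_iff.mp (isHomogeneous_h (M := M.opposite) i)

lemma exists_generator {a β} (ha : a ∈ M.lieImage) (hβ : M.IsHomogeneous a β) (h0 : a ≠ 0) :
    ∃ s ≠ 0, (∃ k, β = k ᵥ* of A ∧ IteratedBracket M.x k s) ∨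
      (∃ k, β = (-k) ᵥ* of A ∧ IteratedBracket M.y k s) ∨ β = 0 := by
  have hmem := mem_span_generators_of_isHomogeneous ha hβ
  contrapose! h0
  rw [Submodule.span_eq_bot.mpr, Submodule.mem_bot] at hmem
  · exact hmem
  · rintro s ⟨hs, hsβ⟩
    by_contra hs0
    rcases weight_of_mem_generators hs hsβ hs0 with ⟨k, h1, h2⟩ | ⟨k, h1, h2⟩ | h
    · exact (h0 s hs0).1 k h1 h2
    · exact (h0 s hs0).2.1 k h1 h2
    · exact (h0 s hs0).2.2 h

lemma exists_signed_weight {a β} (ha : a ∈ M.lieImage) (hβ : M.IsHomogeneous a β) (h0 : a ≠ 0) :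
    ∃ k, (0 ≤ k ∨ k ≤ 0) ∧ β = k ᵥ* of A := by
  obtain ⟨s, -, ⟨k, rfl, hk⟩ | ⟨k, rfl, hk⟩ | rfl⟩ := exists_generator ha hβ h0
  · exact ⟨k, .inl hk.nonneg, rfl⟩
  · exact ⟨-k, .inr (neg_nonpos.mpr hk.nonneg), rfl⟩
  · exact ⟨0, .inl le_rfl, (zero_vecMul _).symm⟩

end LieImage

section Roots

variable {M : WeightModule A ι V} (D : RootGeometry A)

include D

lemma exists_eq_smul_x {a i} (ha : a ∈ M.lieImage) (hi : M.IsHomogeneous a (A i)) :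
    ∃ c : ℂ, a = c • M.x i := by
  simp only [eq_comm (a := a), ← Submodule.mem_span_singleton]
  refine Submodule.span_le.mpr ?_ (mem_span_generators_of_isHomogeneous ha hi)
  rintro s ⟨hs, hsi⟩
  by_cases hs0 : s = 0
  · exact hs0 ▸ Submodule.zero_mem _
  obtain ⟨k, hk, hbr⟩ | ⟨k, hk, hbr⟩ | h := weight_of_mem_generators hs hsi hs0
  · have hk := D.vecMul_injective ((single_one_vecMul i (of A)).trans hk)
    obtain ⟨-, rfl⟩ | h := hbr.eq_of_single hk.symm
    · exact Submodule.mem_span_singleton_self _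
    · exact absurd h hs0
  · have hk := congrFun (D.vecMul_injective ((single_one_vecMul i (of A)).trans hk)) i
    have := hbr.nonneg i
    simp only [Pi.single_eq_same, Pi.neg_apply, Pi.zero_apply] at hk this
    omega
  · exact absurd h (D.linearIndependent.ne_zero i)

lemma exists_eq_smul_y {a i} (ha : a ∈ M.lieImage) (hi : M.IsHomogeneous a (-A i)) :
    ∃ c : ℂ, a = c • M.y i :=
  exists_eq_smul_x (M := M.opposite) D (opposite_lieImage M ▸ ha)
    (opposite_isHomogeneous_iff.mpr hi)

lemma eq_one_of_isHomogeneous_single {a i} {m : ℤ} (ha : a ∈ M.lieImage)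
    (hm : M.IsHomogeneous a (Pi.single i m ᵥ* of A)) (h0 : a ≠ 0) (hpos : 0 < m) : m = 1 := by
  obtain ⟨s, hs0, ⟨k, hk, hbr⟩ | ⟨k, hk, hbr⟩ | h⟩ := exists_generator ha hm h0
  · exact ((hbr.eq_of_single (D.vecMul_injective hk).symm).resolve_right hs0).1
  · have hk := congrFun (D.vecMul_injective hk) i
    have := hbr.nonneg i
    simp only [Pi.single_eq_same, Pi.neg_apply, Pi.zero_apply] at hk this
    omega
  · have hk := congrFun (D.vecMul_injective (h.trans (zero_vecMul (of A)).symm)) i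
    simp only [Pi.single_eq_same, Pi.zero_apply] at hk
    omega

lemma mem_roots_of_nonneg [Finite ι] {k : Fin n → ℤ} (hk : 0 ≤ k) (hk0 : k ≠ 0) {a}
    (ha : a ∈ M.lieImage) (hka : M.IsHomogeneous a (k ᵥ* of A)) (h0 : a ≠ 0) :
    k ᵥ* of A ∈ roots A := by
  induction hN : (∑ i, k i).toNat using Nat.strong_induction_on generalizing k a with
  | _ N ih =>
  obtain ⟨i, hki, hβi⟩ := D.exists_coordinate_pos hk hk0
  by_cases hj : ∃ j, j ≠ i ∧ 0 < k j
  · obtain ⟨j, hji, hkj⟩ := hj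
    obtain ⟨T, hT⟩ := exists_isLift_refl (M := M) (D.diag i)
    set k' := k - Pi.single i ((k ᵥ* of A) i) with hk'
    have hrefl : CL.refl A i *ᵥ (k ᵥ* of A) = k' ᵥ* of A := by
      rw [refl_mulVec, sub_vecMul, single_vecMul]; rfl
    have hTa := (hT.conj_mem_lieImage_iff (a := a)).mpr ha
    have hTk := (hT.isHomogeneous_conj_iff (D.mulVec_injective (refl_mem_weyl i))).mpr hka
    rw [hrefl] at hTk
    obtain ⟨l, hl, hkl⟩ := exists_signed_weight hTa hTk (conj_ne_zero T h0)
    obtain rfl := D.vecMul_injective hkl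
    have hk'j : 0 < k' j := by simpa [hk', Pi.single_eq_of_ne hji] using hkj
    have hk'0 : 0 ≤ k' := hl.resolve_right fun h => (h j).not_gt hk'j
    have hsum : ∑ i, k' i = ∑ i, k i - (k ᵥ* of A) i := by simp [hk', Finset.sum_sub_distrib]
    have hsum0 : 0 ≤ ∑ i, k' i := Finset.sum_nonneg fun i _ => hk'0 i
    have hmem := ih _ (by omega) hk'0 (fun h => hk'j.ne' (congrFun h j)) hTa hTk
      (conj_ne_zero T h0) rfl
    rw [← refl_refl_mulVec (D.diag i) (k ᵥ* of A), hrefl]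
    exact mulVec_mem_roots (refl_mem_weyl i) hmem
  · push Not at hj
    have hsingle : k = Pi.single i (k i) := by
      ext j
      obtain rfl | hji := eq_or_ne j i
      · rw [Pi.single_eq_same]
      · rw [Pi.single_eq_of_ne hji]
        exact le_antisymm (hj j hji) (hk j)
    rw [hsingle] at hka ⊢
    rw [eq_one_of_isHomogeneous_single D ha hka h0 hki, single_one_vecMul]
    exact simple_mem_roots i

lemma mem_roots [Finite ι] {a β} (ha : a ∈ M.lieImage) (hβ : M.IsHomogeneous a β) (h0 : a ≠ 0)
    (hβ0 : β ≠ 0) : β ∈ roots A := by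
  obtain ⟨k, hk, rfl⟩ := exists_signed_weight ha hβ h0
  have hk0 : k ≠ 0 := by
    rintro rfl
    exact hβ0 (zero_vecMul _)
  obtain hk | hk := hk
  · exact mem_roots_of_nonneg D hk hk0 ha hβ h0
  · rw [← neg_neg (k ᵥ* of A), ← neg_vecMul]
    refine D.neg_mem_roots (mem_roots_of_nonneg (M := M.opposite) D (neg_nonneg.mpr hk)
      (neg_ne_zero.mpr hk0) (a := a) ?_ ?_ h0)
    · rwa [opposite_lieImage]
    · rwa [opposite_isHomogeneous_iff, neg_vecMul, neg_neg]

end Roots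

section Casimir

lemma sum_add_sum_eq_zero_of_shift {G B : Type*} [AddGroup G] [AddCommMonoid B] {P : Finset G}
    {γ : G} {F K : G → B} (hF : ∀ α ∈ P, α - γ ∉ P → F α = 0) (hK : ∀ β ∈ P, β + γ ∉ P → K β = 0)
    (hFK : ∀ β ∈ P, β + γ ∈ P → F (β + γ) + K β = 0) : ∑ α ∈ P, F α + ∑ β ∈ P, K β = 0 := by
  have hsumF : ∑ α ∈ P, F α = ∑ β ∈ P with β + γ ∈ P, F (β + γ) := by
    rw [← Finset.sum_filter_of_ne fun α hα h => not_imp_comm.mp (hF α hα) h]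
    exact Finset.sum_nbij' (· - γ) (· + γ) (by simp +contextual) (by simp +contextual) (by simp)
      (by simp) (by simp)
  have hsumK : ∑ β ∈ P, K β = ∑ β ∈ P with β + γ ∈ P, K β :=
    (Finset.sum_filter_of_ne fun β hβ h => not_imp_comm.mp (hK β hβ) h).symm
  rw [hsumF, hsumK, ← Finset.sum_add_distrib]
  refine Finset.sum_eq_zero fun β hβ => ?_
  obtain ⟨hβ, hβγ⟩ := Finset.mem_filter.mp hβ
  exact hFK β hβ hβγ

variable {M : WeightModule A ι V} {D : RootGeometry A}

lemma eq_zero_of_diagonal_eq_zero {φ : (Fin n → ℤ) →+ ℂ} (hφ : M.diagonal φ = 0)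
    {a : Module.End ℂ V} {γ} (ha : M.IsHomogeneous a γ) (h0 : a ≠ 0) : φ γ = 0 := by
  obtain ⟨k, hk⟩ := exists_basis_ne_zero (M := M) h0
  have hwt (l) : φ (M.weight l) = 0 := by
    have := LinearMap.congr_fun hφ (M.basis l)
    rw [diagonal_basis, LinearMap.zero_apply] at this
    exact (smul_eq_zero.mp this).resolve_right (M.basis.ne_zero l)
  obtain ⟨l, hl⟩ := (ha.isWeightVector (M.isWeightVector_basis k)).exists_weight_eq hk
  have hwl := hwt l
  rwa [hl, map_add, hwt, zero_add] at hwl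

/-- Root vectors of the roots `α` and `-α` which span the respective root spaces of `lieImage`,
normalised so that their bracket acts on the weight space of `μ` as the scalar `(μ, α)`. -/
structure IsRootPair (M : WeightModule A ι V) (D : RootGeometry A) (α : Fin n → ℤ)
    (e f : Module.End ℂ V) : Prop where
  e_mem : e ∈ M.lieImage
  f_mem : f ∈ M.lieImage
  e_hom : M.IsHomogeneous e α
  f_hom : M.IsHomogeneous f (-α)
  lie_e_f : ⁅e, f⁆ = M.diagonal fun μ => (D.form μ α : ℂ)
  exists_eq_smul_e : ∀ a ∈ M.lieImage, M.IsHomogeneous a α → ∃ c : ℂ, a = c • e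
  exists_eq_smul_f : ∀ a ∈ M.lieImage, M.IsHomogeneous a (-α) → ∃ c : ℂ, a = c • f

lemma isRootPair_simple (i) :
    IsRootPair M D (A i) ((D.form (A i) (A i) / 2 : ℂ) • M.x i) (M.y i) := by
  have hc : (D.form (A i) (A i) / 2 : ℂ) ≠ 0 := by
    exact_mod_cast (half_pos (D.form_simple_self_pos i)).ne'
  refine ⟨Submodule.smul_mem _ _ (x_mem_lieImage i), y_mem_lieImage i, (isHomogeneous_x i).smul _,
    isHomogeneous_y i, ?_, fun a ha hi => ?_, fun a ha hi => exists_eq_smul_y D ha hi⟩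
  · rw [smul_lie, M.lie_x_y, if_pos rfl, ← diagonal_eval, ← map_smul]
    congr 1
    ext μ
    have := D.form_simple μ i
    simp only [Pi.smul_apply, smul_eq_mul]
    norm_cast
    linarith
  · obtain ⟨c, rfl⟩ := exists_eq_smul_x D ha hi
    exact ⟨c * (D.form (A i) (A i) / 2 : ℂ)⁻¹, by rw [smul_smul, inv_mul_cancel_right₀ hc]⟩

lemma IsRootPair.conj {α e f} (h : IsRootPair M D α e f) {w} (hw : w ∈ CL.weyl A)
    {T : (Module.End ℂ V)ˣ} (hT : M.IsLift w T) :
    IsRootPair M D (w *ᵥ α) (T * e * (T⁻¹ : (Module.End ℂ V)ˣ))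
      (T * f * (T⁻¹ : (Module.End ℂ V)ˣ)) := by
  have hinj := D.mulVec_injective hw
  have hsurj (a : Module.End ℂ V) : ∃ b, a = T * b * (T⁻¹ : (Module.End ℂ V)ˣ) :=
    ⟨(T⁻¹ : (Module.End ℂ V)ˣ) * a * T, by simp [mul_assoc]⟩
  have hspan {β b} (hb : ∀ a ∈ M.lieImage, M.IsHomogeneous a β → ∃ c : ℂ, a = c • b) (a)
      (ha : a ∈ M.lieImage) (hβ : M.IsHomogeneous a (w *ᵥ β)) :
      ∃ c : ℂ, a = c • (T * b * (T⁻¹ : (Module.End ℂ V)ˣ)) := by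
    obtain ⟨a, rfl⟩ := hsurj a
    obtain ⟨c, rfl⟩ :=
      hb a (hT.conj_mem_lieImage_iff.mp ha) ((hT.isHomogeneous_conj_iff hinj).mp hβ)
    exact ⟨c, by rw [mul_smul_comm, smul_mul_assoc]⟩
  have hlie : ⁅(T * e * (T⁻¹ : (Module.End ℂ V)ˣ) : Module.End ℂ V),
      (T * f * (T⁻¹ : (Module.End ℂ V)ˣ) : Module.End ℂ V)⁆ =
        T * ⁅e, f⁆ * (T⁻¹ : (Module.End ℂ V)ˣ) := by
    simp [Ring.lie_def, mul_assoc, mul_sub, sub_mul]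
  refine ⟨hT.conj_mem_lieImage_iff.mpr h.e_mem, hT.conj_mem_lieImage_iff.mpr h.f_mem,
    (hT.isHomogeneous_conj_iff hinj).mpr h.e_hom,
    mulVec_neg α w ▸ (hT.isHomogeneous_conj_iff hinj).mpr h.f_hom, ?_,
    hspan h.exists_eq_smul_e, mulVec_neg α w ▸ hspan h.exists_eq_smul_f⟩
  rw [hlie, h.lie_e_f, Units.mul_inv_eq_iff_eq_mul, hT.1]
  simp only [D.form_mulVec_mulVec hw]

lemma exists_isRootPair [Finite ι] (M : WeightModule A ι V) (D : RootGeometry A) {α}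
    (hα : α ∈ roots A) : ∃ e f, IsRootPair M D α e f := by
  obtain ⟨w, hw, i, rfl⟩ := hα
  obtain ⟨T, hT⟩ := exists_isLift (M := M) D.diag hw
  exact ⟨_, _, (isRootPair_simple i).conj hw hT⟩

lemma IsRootPair.add_eq_zero_of_jacobi {β γ e f e' f' e'' f''} (hα : IsRootPair M D (β + γ) e f)
    (hβ : IsRootPair M D β e' f') (hγ : IsRootPair M D γ e'' f'')
    (hgram : D.form β γ ^ 2 < D.form β β * D.form γ γ) (he' : e' ≠ 0) (hf'' : f'' ≠ 0)
    {N K Q : ℂ} (hjacobi : N • ⁅e', f'⁆ + K • ⁅e, f⁆ - Q • ⁅e'', f''⁆ = 0) : N + K = 0 := by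
  let φ (δ : Fin n → ℤ) : (Fin n → ℤ) →+ ℂ :=
    Complex.ofRealHom.toAddMonoidHom.comp (D.form.flip δ)
  have hφ (δ μ) : φ δ μ = D.form μ δ := rfl
  have hdiag : M.diagonal ((AddMonoidHom.mulLeft (N + K)).comp (φ β) +
      (AddMonoidHom.mulLeft (K - Q)).comp (φ γ) : (Fin n → ℤ) →+ ℂ) = 0 := by
    rw [← hjacobi, hα.lie_e_f, hβ.lie_e_f, hγ.lie_e_f, ← map_smul, ← map_smul, ← map_smul,
      ← map_add, ← map_sub]
    congr 1
    ext μ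
    simp only [AddMonoidHom.add_apply, AddMonoidHom.comp_apply, AddMonoidHom.coe_mulLeft, hφ,
      Pi.add_apply, Pi.sub_apply, Pi.smul_apply, smul_eq_mul, map_add, Complex.ofReal_add]
    ring
  have hβ0 := eq_zero_of_diagonal_eq_zero hdiag hβ.e_hom he'
  have hγ0 := eq_zero_of_diagonal_eq_zero hdiag hγ.f_hom hf''
  have hdet : ((D.form β β * D.form γ γ - D.form β γ ^ 2 : ℝ) : ℂ) ≠ 0 := by
    exact_mod_cast (sub_pos.mpr hgram).ne'
  refine (mul_eq_zero.mp ?_).resolve_right hdet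
  simp only [map_neg, AddMonoidHom.add_apply, AddMonoidHom.comp_apply, AddMonoidHom.coe_mulLeft,
    hφ, D.form_comm γ β] at hβ0 hγ0
  push_cast
  linear_combination (D.form γ γ : ℂ) * hβ0 + (D.form β γ : ℂ) * hγ0

lemma IsRootPair.lie_f_cancel {β γ e f e' f' e'' f''} (hα : IsRootPair M D (β + γ) e f)
    (hβ : IsRootPair M D β e' f') (hγ : IsRootPair M D γ e'' f'')
    (hgram : D.form β γ ^ 2 < D.form β β * D.form γ γ) :
    (⁅e, f''⁆ * f + f * ⁅e, f''⁆) + (e' * ⁅f', f''⁆ + ⁅f', f''⁆ * e') = 0 := by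
  obtain ⟨N, hN⟩ := hβ.exists_eq_smul_e _ (lie_mem_lieImage hα.e_mem hγ.f_mem)
    (by simpa using hα.e_hom.lie hγ.f_hom)
  obtain ⟨K, hK⟩ := hα.exists_eq_smul_f _ (lie_mem_lieImage hβ.f_mem hγ.f_mem)
    (by simpa [add_comm] using hβ.f_hom.lie hγ.f_hom)
  obtain ⟨Q, hQ⟩ := hγ.exists_eq_smul_e _ (lie_mem_lieImage hα.e_mem hβ.f_mem)
    (by simpa using hα.e_hom.lie hβ.f_hom)
  obtain rfl | he' := eq_or_ne e' 0
  · simp [hN]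
  obtain rfl | hf'' := eq_or_ne f'' 0
  · simp
  have hjacobi : N • ⁅e', f'⁆ + K • ⁅e, f⁆ - Q • ⁅e'', f''⁆ = 0 := by
    rw [← smul_lie, ← lie_smul, ← smul_lie, ← hN, ← hK, ← hQ]
    simp only [Ring.lie_def]
    noncomm_ring
  rw [hN, hK]
  calc _ = (N + K) • (e' * f + f * e') := by
        simp only [smul_mul_assoc, mul_smul_comm]
        module
    _ = 0 := by rw [hα.add_eq_zero_of_jacobi hβ hγ hgram he' hf'' hjacobi, zero_smul]

/-- The Casimir operator, given root vectors `e α` and `f α` as in `IsRootPair`. -/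
def casimir (M : WeightModule A ι V) (D : RootGeometry A) (e f : (Fin n → ℤ) → Module.End ℂ V) :
    Module.End ℂ V :=
  M.diagonal (fun μ => (D.form μ μ : ℂ)) + ∑ α ∈ D.posRoots, (e α * f α + f α * e α)

variable {e f : (Fin n → ℤ) → Module.End ℂ V}

lemma lie_diagonal_form_f {α e f} (h : IsRootPair M D α e f) :
    ⁅M.diagonal fun μ => (D.form μ μ : ℂ), f⁆ + (⁅e, f⁆ * f + f * ⁅e, f⁆) = 0 := by
  rw [h.lie_e_f, Ring.lie_def, h.f_hom, h.f_hom, ← mul_add, ← mul_sub, ← mul_add, ← map_add,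
    ← map_sub, ← map_add]
  convert mul_zero f
  convert map_zero M.diagonal
  ext μ
  simp only [D.form_comm α μ, Pi.add_apply, Pi.sub_apply, Pi.zero_apply, map_add, map_neg,
    AddMonoidHom.add_apply, AddMonoidHom.neg_apply, Complex.ofReal_add, Complex.ofReal_neg]
  ring

lemma sum_erase_simple_lie_f [Finite ι] (h : ∀ α ∈ D.posRoots, IsRootPair M D α (e α) (f α))
    (i : Fin n) : ∑ α ∈ D.posRoots.erase (A i), (⁅e α, f (A i)⁆ * f α + f α * ⁅e α, f (A i)⁆) +
      ∑ α ∈ D.posRoots.erase (A i), (e α * ⁅f α, f (A i)⁆ + ⁅f α, f (A i)⁆ * e α) = 0 := by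
  have hγ := h (A i) (D.simple_mem_posRoots i)
  refine sum_add_sum_eq_zero_of_shift (γ := A i) (fun α hα hαγ => ?_) (fun β hβ hβγ => ?_)
    fun β hβ hβγ => (h _ (Finset.mem_of_mem_erase hβγ)).lie_f_cancel
      (h β (Finset.mem_of_mem_erase hβ)) hγ (D.form_simple_sq_lt hβ)
  · have hα' := h α (Finset.mem_of_mem_erase hα)
    suffices ⁅e α, f (A i)⁆ = 0 by simp [this]
    by_contra h0
    have hmem := mem_roots D (lie_mem_lieImage hα'.e_mem hγ.f_mem)
      (sub_eq_add_neg α (A i) ▸ hα'.e_hom.lie hγ.f_hom) h0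
      (sub_ne_zero.mpr (Finset.ne_of_mem_erase hα))
    exact hαγ (D.sub_simple_mem_erase_simple hα hmem)
  · have hβ' := h β (Finset.mem_of_mem_erase hβ)
    suffices ⁅f β, f (A i)⁆ = 0 by simp [this]
    by_contra h0
    have hne : -β + -A i ≠ 0 := fun h0 => D.neg_notMem_posRoots (D.simple_mem_posRoots i) <| by
      rw [← neg_neg β, neg_eq_of_add_eq_zero_right h0] at hβ
      exact Finset.mem_of_mem_erase hβ
    have hmem := D.neg_mem_roots
      (mem_roots D (lie_mem_lieImage hβ'.f_mem hγ.f_mem) (hβ'.f_hom.lie hγ.f_hom) h0 hne)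
    rw [← neg_add, neg_neg, add_comm] at hmem
    exact hβγ (add_comm (A i) β ▸ D.add_mem_erase_simple (D.simple_mem_posRoots i) hβ hmem)

lemma lie_casimir_f [Finite ι] (h : ∀ α ∈ D.posRoots, IsRootPair M D α (e α) (f α)) (i : Fin n) :
    ⁅M.casimir D e f, f (A i)⁆ = 0 := by
  have hγ := D.simple_mem_posRoots i
  have hexpand : ⁅M.casimir D e f, f (A i)⁆ = ⁅M.diagonal fun μ => (D.form μ μ : ℂ), f (A i)⁆ +
      (∑ α ∈ D.posRoots, (⁅e α, f (A i)⁆ * f α + f α * ⁅e α, f (A i)⁆) +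
        ∑ α ∈ D.posRoots, (e α * ⁅f α, f (A i)⁆ + ⁅f α, f (A i)⁆ * e α)) := by
    rw [casimir, add_lie, sum_lie, ← Finset.sum_add_distrib]
    congr 2 with α
    simp only [Ring.lie_def]
    noncomm_ring
  rw [hexpand, ← Finset.add_sum_erase _ _ hγ, ← Finset.add_sum_erase _ _ hγ, lie_self, mul_zero,
    zero_mul, add_zero, zero_add, add_assoc, sum_erase_simple_lie_f h, add_zero]
  exact lie_diagonal_form_f (h _ hγ)

lemma commute_casimir_y [Finite ι] (h : ∀ α ∈ D.posRoots, IsRootPair M D α (e α) (f α))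
    (i : Fin n) : Commute (M.casimir D e f) (M.y i) := by
  obtain ⟨c, hc⟩ := (h _ (D.simple_mem_posRoots i)).exists_eq_smul_f _ (y_mem_lieImage i)
    (isHomogeneous_y i)
  rw [hc]
  exact (commute_iff_lie_eq.mpr (lie_casimir_f h i)).smul_right c

end Casimir

end WeightModule

namespace ChevalleyModule

variable {A : Fin n → Fin n → ℤ} {V : Type*} [AddCommGroup V] [Module ℂ V]

/-- The subspace `U` is a submodule. -/
def IsInvariant (C : ChevalleyModule A V) (U : Submodule ℂ V) : Prop :=
  ∀ i, ∀ v ∈ U, C.x i v ∈ U ∧ C.y i v ∈ U ∧ C.h i v ∈ U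

/-- The nonzero vector `v₀` of weight `lam` is annihilated by the raising operators. -/
structure IsHighestWeightVector (C : ChevalleyModule A V) (v₀ : V) (lam : Fin n → ℤ) : Prop where
  ne_zero : v₀ ≠ 0
  h_apply : ∀ i, C.h i v₀ = (lam i : ℂ) • v₀
  x_apply : ∀ i, C.x i v₀ = 0

/-- The module is generated by the highest weight vector `v₀` of weight `lam`. -/
structure IsCyclicHighestWeight (C : ChevalleyModule A V) (v₀ : V) (lam : Fin n → ℤ) : Prop
    extends C.IsHighestWeightVector v₀ lam where
  eq_top : ∀ U, C.IsInvariant U → v₀ ∈ U → U = ⊤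

/-- `C.LoweringMonomial v₀ k v` means that `v` arises from `v₀` by successively applying `k i` many
operators `C.y i`, in some order. -/
inductive LoweringMonomial (C : ChevalleyModule A V) (v₀ : V) : (Fin n → ℤ) → V → Prop
  | base : C.LoweringMonomial v₀ 0 v₀
  | step {k v} (i : Fin n) : C.LoweringMonomial v₀ k v →
      C.LoweringMonomial v₀ (k + Pi.single i 1) (C.y i v)

variable {C : ChevalleyModule A V} {v₀ : V} {lam : Fin n → ℤ}

namespace LoweringMonomial

lemma nonneg {k v} (hv : C.LoweringMonomial v₀ k v) : 0 ≤ k := by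
  induction hv with
  | base => exact le_rfl
  | step i _ ih => exact add_nonneg ih (Pi.single_nonneg.mpr zero_le_one)

lemma eq_of_zero {v} (hv : C.LoweringMonomial v₀ 0 v) : v = v₀ := by
  generalize hk : (0 : Fin n → ℤ) = k at hv
  cases hv with
  | base => rfl
  | @step k v i hv =>
    have hi := congrFun hk i
    have hnonneg := hv.nonneg i
    rw [Pi.add_apply, Pi.single_eq_same] at hi
    simp only [Pi.zero_apply] at hi hnonneg
    omega

lemma h_apply (h₀ : ∀ i, C.h i v₀ = (lam i : ℂ) • v₀) {k v} (hv : C.LoweringMonomial v₀ k v)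
    (i : Fin n) : C.h i v = (((lam - k ᵥ* of A) i : ℤ) : ℂ) • v := by
  induction hv with
  | base => simpa using h₀ i
  | @step k v j _ ih =>
    have hlie := LinearMap.congr_fun (C.lie_h_y i j) v
    simp only [Ring.lie_def, LinearMap.sub_apply, Module.End.mul_apply, LinearMap.neg_apply,
      LinearMap.smul_apply, ih, map_smul, sub_eq_iff_eq_add] at hlie
    rw [hlie, add_vecMul, single_one_vecMul, ← neg_smul, ← add_smul]
    congr 1
    simp only [Pi.sub_apply, Pi.add_apply, row_apply, of_apply]
    push_cast
    ring

end LoweringMonomial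

namespace IsCyclicHighestWeight

variable (H : C.IsCyclicHighestWeight v₀ lam)
include H

lemma span_loweringMonomial : Submodule.span ℂ {v | ∃ k, C.LoweringMonomial v₀ k v} = ⊤ := by
  set S := Submodule.span ℂ {v | ∃ k, C.LoweringMonomial v₀ k v}
  have hmap {a : Module.End ℂ V} (ha : ∀ k v, C.LoweringMonomial v₀ k v → a v ∈ S) :
      S ≤ S.comap a :=
    Submodule.span_le.mpr fun v ⟨k, hv⟩ => ha k v hv
  have hh (i k v) (hv : C.LoweringMonomial v₀ k v) : C.h i v ∈ S := by
    rw [hv.h_apply H.h_apply]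
    exact S.smul_mem _ (Submodule.subset_span ⟨k, hv⟩)
  have hy (i) : S ≤ S.comap (C.y i) := hmap fun k v hv => Submodule.subset_span ⟨_, hv.step i⟩
  have hx (i k v) (hv : C.LoweringMonomial v₀ k v) : C.x i v ∈ S := by
    induction hv with
    | base => exact H.x_apply i ▸ S.zero_mem
    | @step k v j hv ih =>
      have hlie := LinearMap.congr_fun (C.lie_x_y i j) v
      rw [Ring.lie_def, LinearMap.sub_apply, Module.End.mul_apply, sub_eq_iff_eq_add] at hlie
      rw [hlie]
      refine S.add_mem ?_ (hy j ih)
      split_ifs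
      · exact hh i k v hv
      · exact S.zero_mem
  exact H.eq_top S (fun i v hv => ⟨hmap (hx i) hv, hy i hv, hmap (hh i) hv⟩)
    (Submodule.subset_span ⟨0, .base⟩)

lemma exists_weightModule [FiniteDimensional ℂ V] :
    ∃ M : WeightModule A (Fin (Module.finrank ℂ V)) V, M.toChevalleyModule = C := by
  have hspan := H.span_loweringMonomial
  let b := Module.Basis.ofSpan hspan.ge
  have := Module.Finite.finite_basis b
  have := Fintype.ofFinite ((linearIndepOn_empty ℂ id).extend
    (Set.empty_subset {v | ∃ k, C.LoweringMonomial v₀ k v}))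
  let c := b.reindex (Fintype.equivFinOfCardEq (Module.finrank_eq_card_basis b).symm)
  have hc (l) : ∃ k, C.LoweringMonomial v₀ k (c l) := by
    rw [Module.Basis.reindex_apply]
    exact Module.Basis.ofSpan_subset hspan.ge ⟨_, rfl⟩
  choose k hk using hc
  exact ⟨{ C with
    basis := c
    weight := fun l => lam - k l ᵥ* of A
    h_basis := fun i l => (hk l).h_apply H.h_apply i }, rfl⟩

lemma end_ext {a b : Module.End ℂ V} (h : ∀ k v, C.LoweringMonomial v₀ k v → a v = b v) : a = b :=
  LinearMap.ext_on H.span_loweringMonomial fun v ⟨k, hv⟩ => h k v hv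

end IsCyclicHighestWeight

end ChevalleyModule

namespace WeightModule

variable {A : Fin n → Fin n → ℤ} {ι V : Type*} [AddCommGroup V] [Module ℂ V]

lemma exists_weight_eq_refl_mulVec [Finite ι] (M : WeightModule A ι V) {i} (hi : A i i = 2)
    (k : ι) : ∃ l, M.weight l = CL.refl A i *ᵥ M.weight k := by
  obtain ⟨T, hT⟩ := exists_isLift_refl (M := M) hi
  have hwt : M.IsWeightVector (T.1 (M.basis k)) (CL.refl A i *ᵥ M.weight k) := fun φ => by
    rw [← Module.End.mul_apply, hT.1, Module.End.mul_apply, diagonal_basis, map_smul]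
  refine hwt.exists_weight_eq fun h0 => M.basis.ne_zero k ?_
  rw [← Module.End.one_apply (R := ℂ) (M.basis k), ← T.inv_mul, Module.End.mul_apply, h0, map_zero]

section HighestWeight

variable {M : WeightModule A ι V} (D : RootGeometry A) {v₀ : V} {lam : Fin n → ℤ}
  (H : M.IsCyclicHighestWeight v₀ lam)
include H

lemma isWeightVector_highest : M.IsWeightVector v₀ lam := isWeightVector_of_h H.h_apply

lemma isWeightVector_loweringMonomial {k v} (hv : M.LoweringMonomial v₀ k v) :
    M.IsWeightVector v (lam - k ᵥ* of A) :=
  isWeightVector_of_h (hv.h_apply H.h_apply)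

lemma exists_weight_eq_highest_sub (l : ι) : ∃ k, 0 ≤ k ∧ M.weight l = lam - k ᵥ* of A := by
  by_contra! hcon
  have hzero : M.diagonal (Pi.single (M.weight l) 1) = 0 := H.end_ext fun k v hv => by
    rw [isWeightVector_loweringMonomial H hv, Pi.single_eq_of_ne (hcon k hv.nonneg).symm, zero_smul,
      LinearMap.zero_apply]
  have := M.diagonal_basis (Pi.single (M.weight l) 1) l
  rw [hzero, Pi.single_eq_same, one_smul] at this
  exact M.basis.ne_zero l this.symm

lemma exists_weight_eq_highest : ∃ k, M.weight k = lam :=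
  (isWeightVector_highest H).exists_weight_eq H.ne_zero

include D in
lemma basis_mem_span_highest {k} (hk : M.weight k = lam) :
    M.basis k ∈ Submodule.span ℂ {v₀} := by
  have hle : (⊤ : Submodule ℂ V) ≤
      (Submodule.span ℂ {v₀}).comap (M.diagonal (Pi.single lam 1)) := by
    rw [← H.span_loweringMonomial, Submodule.span_le]
    rintro v ⟨m, hv⟩
    rw [SetLike.mem_coe, Submodule.mem_comap, isWeightVector_loweringMonomial H hv]
    obtain rfl | hm := eq_or_ne m 0
    · exact Submodule.smul_mem _ _ (hv.eq_of_zero ▸ Submodule.mem_span_singleton_self _)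
    · have hne : lam - m ᵥ* of A ≠ lam := fun h => hm <| D.vecMul_injective <| by
        simpa using h
      rw [Pi.single_eq_of_ne hne, zero_smul]
      exact Submodule.zero_mem _
  have hmem := hle (Submodule.mem_top (x := M.basis k))
  rwa [Submodule.mem_comap, diagonal_basis, hk, Pi.single_eq_same, one_smul] at hmem

include D in
lemma eq_of_weight_eq_highest {k l} (hk : M.weight k = lam) (hl : M.weight l = lam) : k = l := by
  obtain ⟨a, ha⟩ := Submodule.mem_span_singleton.mp (basis_mem_span_highest D H hk)
  obtain ⟨c, hc⟩ := Submodule.mem_span_singleton.mp (basis_mem_span_highest D H hl)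
  have hdep : c • M.basis k = a • M.basis l := by rw [← ha, ← hc, smul_comm]
  by_contra hne
  have hrepr := congrArg (M.basis.repr · k) hdep
  have hc0 : c = 0 := by simpa [Finsupp.single_apply, Ne.symm hne] using hrepr
  exact M.basis.ne_zero l (by rw [← hc, hc0, zero_smul])

include D in
lemma highest_nonneg [Finite ι] : 0 ≤ lam := by
  intro i
  obtain ⟨k, hk⟩ := exists_weight_eq_highest H
  obtain ⟨l, hl⟩ := M.exists_weight_eq_refl_mulVec (D.diag i) k
  obtain ⟨m, hm, hm'⟩ := exists_weight_eq_highest_sub H l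
  have hvec : (lam i • Pi.single i 1 : Fin n → ℤ) ᵥ* of A = m ᵥ* of A := by
    rw [hl, hk, refl_mulVec, sub_right_inj] at hm'
    rw [smul_vecMul, single_one_vecMul, ← hm']
    rfl
  rw [← D.vecMul_injective hvec] at hm
  simpa using hm i

lemma apply_highest_eq_zero {α} (hα : α ∈ D.posRoots) {a} (ha : M.IsHomogeneous a α) :
    a v₀ = 0 := by
  by_contra h0
  obtain ⟨l, hl⟩ := (ha.isWeightVector (isWeightVector_highest H)).exists_weight_eq h0
  obtain ⟨k, hk, hlk⟩ := exists_weight_eq_highest_sub H l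
  have hneg : -α = k ᵥ* of A := by
    rw [hl, sub_eq_add_neg, add_right_inj] at hlk
    rw [hlk, neg_neg]
  have hroot := D.neg_mem_roots (D.mem_posRoots.mp hα).1
  exact D.neg_notMem_posRoots hα (D.mem_posRoots.mpr ⟨hroot, k, hk, hneg⟩)

lemma casimir_eq_smul_one [Finite ι] {e f : (Fin n → ℤ) → Module.End ℂ V}
    (h : ∀ α ∈ D.posRoots, IsRootPair M D α (e α) (f α)) :
    M.casimir D e f = ((D.form lam lam + D.form lam 2 : ℝ) : ℂ) • 1 := by
  refine H.end_ext fun k v hv => ?_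
  rw [LinearMap.smul_apply, Module.End.one_apply]
  induction hv with
  | base =>
    have hef (α) (hα : α ∈ D.posRoots) :
        (e α * f α + f α * e α) v₀ = (D.form lam α : ℂ) • v₀ := by
      have hlie := LinearMap.congr_fun (h α hα).lie_e_f v₀
      rw [isWeightVector_highest H, Ring.lie_def, LinearMap.sub_apply] at hlie
      rw [← hlie, LinearMap.add_apply, Module.End.mul_apply (f α),
        apply_highest_eq_zero D H hα (h α hα).e_hom, map_zero, add_zero, sub_zero]
    rw [casimir, LinearMap.add_apply, isWeightVector_highest H, LinearMap.sum_apply,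
      Finset.sum_congr rfl hef, ← Finset.sum_smul, ← add_smul, ← D.sum_posRoots, map_sum]
    push_cast
    rfl
  | @step k v i _ ih =>
    rw [← Module.End.mul_apply, commute_casimir_y h i, Module.End.mul_apply, ih, map_smul]

end HighestWeight

section TraceCharacter

open AddMonoidAlgebra
open scoped AddMonoidAlgebra

variable [Fintype ι] (M : WeightModule A ι V)

/-- The generating function of the traces of an operator on the weight spaces. -/
def traceCharacter : Module.End ℂ V →ₗ[ℂ] ℂ[Fin n → ℤ] :=
  ∑ k, lsingle (M.weight k) ∘ₗ M.basis.coord k ∘ₗ LinearMap.applyₗ (M.basis k)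

lemma traceCharacter_one : M.traceCharacter 1 = ∑ k, single (M.weight k) 1 := by
  simp [traceCharacter]

lemma coeff_traceCharacter (a : Module.End ℂ V) (μ) :
    (M.traceCharacter a).coeff μ = LinearMap.trace ℂ V (M.diagonal (Pi.single μ 1) * a) := by
  rw [LinearMap.trace_eq_matrix_trace ℂ M.basis, Matrix.trace, traceCharacter, LinearMap.sum_apply,
    coeff_sum, Finsupp.finsetSum_apply]
  refine Finset.sum_congr rfl fun k _ => ?_
  rw [Matrix.diag_apply, LinearMap.toMatrix_apply, Module.End.mul_apply, repr_diagonal]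
  simp [Finsupp.single_apply, Pi.single_apply]

lemma traceCharacter_diagonal (φ) :
    M.traceCharacter (M.diagonal φ) = coeffMul φ (M.traceCharacter 1) := by
  ext μ
  have hmul : Pi.single μ 1 * φ = φ μ • Pi.single μ (1 : ℂ) := by
    ext ν
    obtain rfl | h := eq_or_ne ν μ <;> simp [*]
  rw [coeff_coeffMul, coeff_traceCharacter, coeff_traceCharacter, ← map_mul, hmul, map_smul,
    map_smul, mul_one, smul_eq_mul]

lemma traceCharacter_mul {M : WeightModule A ι V} {a : Module.End ℂ V} {β}
    (ha : M.IsHomogeneous a β) (c : Module.End ℂ V) :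
    M.traceCharacter (a * c) = single β 1 * M.traceCharacter (c * a) := by
  ext μ
  have hshift : (fun ν => Pi.single (M := fun _ => ℂ) μ 1 (ν + β)) = Pi.single (-β + μ) 1 := by
    ext ν
    simp only [Pi.single_apply, eq_neg_add_iff_add_eq, add_comm β]
  rw [coeff_single_mul_apply, one_mul, coeff_traceCharacter, coeff_traceCharacter, ← mul_assoc, ha,
    hshift, mul_assoc, LinearMap.trace_mul_comm, mul_assoc]

lemma reflHom_traceCharacter_one {i} (hi : A i i = 2) :
    RootGeometry.reflHom A i (M.traceCharacter 1) = M.traceCharacter 1 := by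
  obtain ⟨T, hT, -⟩ := exists_isLift_refl (M := M) hi
  ext μ
  obtain ⟨ν, rfl⟩ : ∃ ν, CL.refl A i *ᵥ ν = μ := ⟨_, refl_refl_mulVec hi μ⟩
  have hsingle : (fun κ => Pi.single (M := fun _ => ℂ) (CL.refl A i *ᵥ ν) 1 (CL.refl A i *ᵥ κ)) =
      Pi.single ν 1 := by
    ext κ
    simp only [Pi.single_apply, (Function.LeftInverse.injective (refl_refl_mulVec hi)).eq_iff]
  have hconj : M.diagonal (Pi.single (CL.refl A i *ᵥ ν) 1) =
      T * M.diagonal (Pi.single ν 1) * ↑T⁻¹ := by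
    rw [Units.eq_mul_inv_iff_mul_eq, hT, hsingle]
  rw [RootGeometry.coeff_reflHom hi, coeff_traceCharacter, coeff_traceCharacter, mul_one, mul_one,
    hconj, LinearMap.trace_mul_comm, ← mul_assoc, T.inv_mul, one_mul]

variable {M} (D : RootGeometry A) {v₀ : V} {lam : Fin n → ℤ} (H : M.IsCyclicHighestWeight v₀ lam)

include D H in
lemma hasHighestTerm_traceCharacter_one :
    RootGeometry.HasHighestTerm A lam (M.traceCharacter 1) where
  coeff_eq_one := by
    obtain ⟨k, hk⟩ := exists_weight_eq_highest H
    rw [traceCharacter_one, coeff_sum, Finsupp.finsetSum_apply, Finset.sum_eq_single k]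
    · simp [hk]
    · exact fun l _ hl => by
        simpa [Finsupp.single_apply] using fun h => hl (eq_of_weight_eq_highest D H h hk)
    · simp
  exists_eq_sub ν hν := by
    rw [traceCharacter_one, coeff_sum, Finsupp.finsetSum_apply] at hν
    obtain ⟨l, -, hl⟩ := Finset.exists_ne_zero_of_sum_ne_zero hν
    obtain rfl : M.weight l = ν := by
      by_contra h
      exact hl (by simp [h])
    exact exists_weight_eq_highest_sub H l

include H in
theorem alternant_mul_traceCharacter_one :
    D.alternant 1 * M.traceCharacter 1 = D.alternant (lam + 1) := by
  have hex : ∀ α : Fin n → ℤ, ∃ e f, α ∈ D.posRoots → IsRootPair M D α e f := by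
    intro α
    by_cases hα : α ∈ D.posRoots
    · obtain ⟨e, f, h⟩ := exists_isRootPair M D (D.mem_posRoots.mp hα).1
      exact ⟨e, f, fun _ => h⟩
    · exact ⟨0, 0, fun h => absurd h hα⟩
  choose e f h using hex
  have hfe (α) (hα : α ∈ D.posRoots) : M.traceCharacter (f α * e α) =
      single (-α) 1 * M.traceCharacter (e α * f α) := traceCharacter_mul (h α hα).f_hom _
  refine D.alternant_mul_eq (highest_nonneg D H) (hasHighestTerm_traceCharacter_one D H)
    (fun i => M.reflHom_traceCharacter_one (D.diag i))
    (N := fun α => M.traceCharacter (e α * f α)) (fun α hα => ?_) ?_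
  · rw [sub_mul, one_mul, ← hfe α hα, ← map_sub, ← Ring.lie_def, (h α hα).lie_e_f,
      traceCharacter_diagonal, RootGeometry.deriv]
  · have hcas := congrArg M.traceCharacter (casimir_eq_smul_one D H h)
    rw [casimir, map_add, map_sum, traceCharacter_diagonal, map_smul] at hcas
    rw [← hcas, RootGeometry.laplacian, add_right_inj]
    exact Finset.sum_congr rfl fun α hα => by rw [add_mul, one_mul, map_add, hfe α hα]

end TraceCharacter

end WeightModule

section Dimension

open AddMonoidAlgebra
open scoped AddMonoidAlgebra

variable {A : Fin n → Fin n → ℤ} (D : RootGeometry A) {V : Type*} [AddCommGroup V] [Module ℂ V]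
  {C : ChevalleyModule A V} {v₀ : V} {lam : Fin n → ℤ}

lemma RootGeometry.alternant_one_ne_zero : D.alternant 1 ≠ 0 := by
  intro h
  have hone := D.coeff_alternant_of_strictlyDominant (κ := 1) (μ := 1) (fun _ => one_pos)
    fun _ => one_pos
  simp [h] at hone

lemma RootGeometry.card_eq_of_alternant_one_mul_eq {ι κ : Type*} [Fintype ι] [Fintype κ]
    {w : ι → Fin n → ℤ} {w' : κ → Fin n → ℤ} (h : D.alternant 1 * ∑ k, single (w k) 1 =
      D.alternant 1 * ∑ k, single (w' k) 1) : Fintype.card ι = Fintype.card κ := by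
  have hsum := mul_left_cancel₀ D.alternant_one_ne_zero h
  have haug := congrArg (AddMonoidAlgebra.lift ℂ ℂ (Fin n → ℤ) 1) hsum
  simpa only [map_sum, lift_single, MonoidHom.one_apply, smul_eq_mul, mul_one, Finset.sum_const,
    Finset.card_univ, nsmul_eq_mul, Nat.cast_inj] using haug

namespace ChevalleyModule

lemma IsCyclicHighestWeight.finrank_eq [FiniteDimensional ℂ V] (H : C.IsCyclicHighestWeight v₀ lam)
    {κ : Type*} [Fintype κ] {w : κ → Fin n → ℤ}
    (hw : D.alternant 1 * ∑ k, single (w k) 1 = D.alternant (lam + 1)) :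
    Module.finrank ℂ V = Fintype.card κ := by
  obtain ⟨M, rfl⟩ := H.exists_weightModule
  have hM := WeightModule.alternant_mul_traceCharacter_one D H
  rw [WeightModule.traceCharacter_one] at hM
  simpa only [Fintype.card_fin] using D.card_eq_of_alternant_one_mul_eq (hM.trans hw.symm)

end ChevalleyModule

end Dimension

namespace ChevalleyModule

variable {A : Fin n → Fin n → ℤ} {V : Type*} [AddCommGroup V] [Module ℂ V]
  {C : ChevalleyModule A V} {U : Submodule ℂ V} {v₀ : V} {lam : Fin n → ℤ}

/-- The submodule on an invariant subspace. -/
@[simps]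
def IsInvariant.restrict (hU : C.IsInvariant U) : ChevalleyModule A U where
  x i := (C.x i).restrict fun v hv => (hU i v hv).1
  y i := (C.y i).restrict fun v hv => (hU i v hv).2.1
  h i := (C.h i).restrict fun v hv => (hU i v hv).2.2
  lie_x_y i j := LinearMap.ext fun v => Subtype.ext <| by
    have hv := LinearMap.congr_fun (C.lie_x_y i j) v
    split_ifs at hv ⊢ <;> simpa [Ring.lie_def] using hv
  lie_h_x i j := LinearMap.ext fun v => Subtype.ext <| by
    simpa [Ring.lie_def] using LinearMap.congr_fun (C.lie_h_x i j) v
  lie_h_y i j := LinearMap.ext fun v => Subtype.ext <| by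
    simpa [Ring.lie_def] using LinearMap.congr_fun (C.lie_h_y i j) v

/-- The quotient module by an invariant subspace. -/
@[simps]
def IsInvariant.quotient (hU : C.IsInvariant U) : ChevalleyModule A (V ⧸ U) where
  x i := U.mapQ U (C.x i) fun v hv => (hU i v hv).1
  y i := U.mapQ U (C.y i) fun v hv => (hU i v hv).2.1
  h i := U.mapQ U (C.h i) fun v hv => (hU i v hv).2.2
  lie_x_y i j := U.linearMap_qext <| LinearMap.ext fun v => by
    have hv := congrArg U.mkQ (LinearMap.congr_fun (C.lie_x_y i j) v)
    split_ifs at hv ⊢ <;> simpa [Ring.lie_def] using hv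
  lie_h_x i j := U.linearMap_qext <| LinearMap.ext fun v => by
    simpa [Ring.lie_def] using congrArg U.mkQ (LinearMap.congr_fun (C.lie_h_x i j) v)
  lie_h_y i j := U.linearMap_qext <| LinearMap.ext fun v => by
    simpa [Ring.lie_def] using congrArg U.mkQ (LinearMap.congr_fun (C.lie_h_y i j) v)

/-- The submodule generated by a vector. -/
def generate (C : ChevalleyModule A V) (v₀ : V) : Submodule ℂ V :=
  sInf {U | C.IsInvariant U ∧ v₀ ∈ U}

lemma generate_le (hU : C.IsInvariant U) (hv : v₀ ∈ U) : C.generate v₀ ≤ U := sInf_le ⟨hU, hv⟩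

lemma mem_generate : v₀ ∈ C.generate v₀ := Submodule.mem_sInf.mpr fun _ hU => hU.2

lemma isInvariant_generate : C.IsInvariant (C.generate v₀) := fun i v hv =>
  ⟨Submodule.mem_sInf.mpr fun _ hU => (hU.1 i v (generate_le hU.1 hU.2 hv)).1,
    Submodule.mem_sInf.mpr fun _ hU => (hU.1 i v (generate_le hU.1 hU.2 hv)).2.1,
    Submodule.mem_sInf.mpr fun _ hU => (hU.1 i v (generate_le hU.1 hU.2 hv)).2.2⟩

lemma IsInvariant.map_subtype (hU : C.IsInvariant U) {W : Submodule ℂ U}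
    (hW : hU.restrict.IsInvariant W) : C.IsInvariant (W.map U.subtype) := by
  rintro i _ ⟨w, hw, rfl⟩
  obtain ⟨hx, hy, hh⟩ := hW i w hw
  exact ⟨⟨_, hx, rfl⟩, ⟨_, hy, rfl⟩, ⟨_, hh, rfl⟩⟩

lemma IsHighestWeightVector.isCyclicHighestWeight_generate (H : C.IsHighestWeightVector v₀ lam) :
    (isInvariant_generate (C := C) (v₀ := v₀)).restrict.IsCyclicHighestWeight
      ⟨v₀, mem_generate⟩ lam where
  ne_zero h := H.ne_zero (congrArg Subtype.val h)
  h_apply i := Subtype.ext (H.h_apply i)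
  x_apply i := Subtype.ext (H.x_apply i)
  eq_top W hW hv := by
    have hle := generate_le (isInvariant_generate.map_subtype hW) ⟨_, hv, rfl⟩
    refine eq_top_iff.mpr fun v _ => ?_
    obtain ⟨w, hw, hwv⟩ := hle v.2
    rwa [← Subtype.ext hwv]

lemma IsCyclicHighestWeight.quotient (H : C.IsCyclicHighestWeight v₀ lam)
    (hU : C.IsInvariant U) (hne : U ≠ ⊤) :
    hU.quotient.IsCyclicHighestWeight (U.mkQ v₀) lam where
  ne_zero h := hne (H.eq_top U hU ((Submodule.Quotient.mk_eq_zero U).mp h))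
  h_apply i := congrArg U.mkQ (H.h_apply i)
  x_apply i := (congrArg U.mkQ (H.x_apply i)).trans U.mkQ.map_zero
  eq_top W hW hv := by
    have htop := H.eq_top (W.comap U.mkQ) (fun i v hv => hW i _ hv) hv
    rw [← W.map_comap_eq_of_surjective U.mkQ_surjective, htop, Submodule.map_top, U.range_mkQ]

end ChevalleyModule

namespace WeightModule

variable {A : Fin n → Fin n → ℤ} {ι V : Type*} [AddCommGroup V] [Module ℂ V] [Fintype ι]
  {M : WeightModule A ι V} (D : RootGeometry A) {v₀ : V} {lam : Fin n → ℤ}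
  (H : M.IsHighestWeightVector v₀ lam)
include H

lemma isCyclicHighestWeight_of_alternant_mul
    (h : D.alternant 1 * M.traceCharacter 1 = D.alternant (lam + 1)) :
    M.IsCyclicHighestWeight v₀ lam := by
  have : FiniteDimensional ℂ V := Module.Finite.of_basis M.basis
  rw [traceCharacter_one] at h
  have htop : M.generate v₀ = ⊤ := Submodule.eq_top_of_finrank_eq <| by
    rw [H.isCyclicHighestWeight_generate.finrank_eq D h, Module.finrank_eq_card_basis M.basis]
  exact ⟨H, fun U hU hv => top_le_iff.mp (htop ▸ ChevalleyModule.generate_le hU hv)⟩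

theorem forall_isInvariant_eq_bot_or_eq_top_iff :
    (∀ U, M.IsInvariant U → U = ⊥ ∨ U = ⊤) ↔
      D.alternant 1 * M.traceCharacter 1 = D.alternant (lam + 1) := by
  refine ⟨fun hirr => alternant_mul_traceCharacter_one D ⟨H, fun U hU hv => ?_⟩, fun h U hU => ?_⟩
  · exact (hirr U hU).resolve_left fun hbot => H.ne_zero ((Submodule.mem_bot ℂ).mp (hbot ▸ hv))
  · refine or_iff_not_imp_right.mpr fun hne => ?_
    have : FiniteDimensional ℂ V := Module.Finite.of_basis M.basis
    have hcyc := isCyclicHighestWeight_of_alternant_mul D H h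
    rw [traceCharacter_one] at h
    have hquot := (hcyc.quotient hU hne).finrank_eq D h
    rw [← Module.finrank_eq_card_basis M.basis, ← U.finrank_quotient_add_finrank] at hquot
    exact Submodule.finrank_eq_zero.mp (Nat.left_eq_add.mp hquot)

end WeightModule

lemma lie_mulVecLin {R m : Type*} [CommRing R] [Fintype m] (P Q : Matrix m m R) :
    ⁅P.mulVecLin, Q.mulVecLin⁆ = (P * Q - Q * P).mulVecLin :=
  LinearMap.ext fun v => by simp [Ring.lie_def]

section EdgeColoredLattice

variable {A : Fin n → Fin n → ℤ} {L : Type} [Fintype L] [Lattice L]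
  {γ : L → L → Fin n} {ρ : L → ℕ} {X Y : L → L → ℂ}

/-- The matrix of `EL.opX γ X i`. -/
def raising (γ : L → L → Fin n) (X : L → L → ℂ) (i : Fin n) : Matrix L L ℂ :=
  fun s r => if EL.ced γ i r s then X r s else 0

/-- The matrix of `EL.opY γ Y i`. -/
def lowering (γ : L → L → Fin n) (Y : L → L → ℂ) (i : Fin n) : Matrix L L ℂ :=
  fun r s => if EL.ced γ i r s then Y r s else 0

/-- The matrix of `EL.opH γ ρ i`. -/
def weightMatrix (γ : L → L → Fin n) (ρ : L → ℕ) (i : Fin n) : Matrix L L ℂ :=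
  Matrix.diagonal fun t => ((EL.mwt γ ρ i t : ℤ) : ℂ)

lemma raising_mul_lowering_apply (i j s t) : (raising γ X i * lowering γ Y j) t s =
    ∑ q, if EL.ced γ i q t ∧ EL.ced γ j q s then X q t * Y q s else 0 := by
  simp only [mul_apply, raising, lowering, ite_zero_mul_ite_zero]

lemma lowering_mul_raising_apply (i j s t) : (lowering γ Y j * raising γ X i) t s =
    ∑ u, if EL.ced γ i s u ∧ EL.ced γ j t u then X s u * Y t u else 0 := by
  simp only [mul_apply, raising, lowering, ite_zero_mul_ite_zero, mul_comm (Y _ _), and_comm]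

lemma commutator_apply_self (i j t) :
    (raising γ X i * lowering γ Y j - lowering γ Y j * raising γ X i) t t =
      if i = j then (∑ q, if EL.ced γ i q t then X q t * Y q t else 0) -
        ∑ u, if EL.ced γ i t u then X t u * Y t u else 0 else 0 := by
  rw [Matrix.sub_apply, raising_mul_lowering_apply, lowering_mul_raising_apply]
  split_ifs with hij
  · simp only [hij, and_self]
  · have hced (q u) : ¬(EL.ced γ i q u ∧ EL.ced γ j q u) := fun h => hij (h.1.2.symm.trans h.2.2)
    simp only [hced, if_false, Finset.sum_const_zero, sub_zero]

lemma raising_mul_lowering_apply_of_ne (i j) {s t : L} (hst : s ≠ t) :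
    (raising γ X i * lowering γ Y j) t s = if EL.ced γ i (s ⊓ t) t ∧ EL.ced γ j (s ⊓ t) s then
      X (s ⊓ t) t * Y (s ⊓ t) s else 0 := by
  rw [raising_mul_lowering_apply]
  refine Finset.sum_eq_single _ (fun q _ hq => if_neg fun h => hq ?_) (by simp)
  exact (WCovBy.inf_eq h.2.1.wcovBy h.1.1.wcovBy hst).symm

lemma lowering_mul_raising_apply_of_ne (i j) {s t : L} (hst : s ≠ t) :
    (lowering γ Y j * raising γ X i) t s = if EL.ced γ i s (s ⊔ t) ∧ EL.ced γ j t (s ⊔ t) then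
      X s (s ⊔ t) * Y t (s ⊔ t) else 0 := by
  rw [lowering_mul_raising_apply]
  refine Finset.sum_eq_single _ (fun u _ hu => if_neg fun h => hu ?_) (by simp)
  exact (WCovBy.sup_eq h.1.1.wcovBy h.2.1.wcovBy hst).symm

lemma commutator_apply_of_ne [IsModularLattice L]
    (hdc : ∀ q r s t : L, q ⋖ r → q ⋖ s → r ⋖ t → s ⋖ t → r ≠ s →
      γ q r = γ s t ∧ γ q s = γ r t)
    (hdiam : ∀ q r s t : L, q ⋖ r → q ⋖ s → r ⋖ t → s ⋖ t → r ≠ s →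
      Y s t * X r t = X q s * Y q r) (i j) {s t : L} (hst : s ≠ t) :
    (raising γ X i * lowering γ Y j - lowering γ Y j * raising γ X i) t s = 0 := by
  rw [Matrix.sub_apply, raising_mul_lowering_apply_of_ne i j hst,
    lowering_mul_raising_apply_of_ne i j hst, sub_eq_zero]
  by_cases hinf : s ⊓ t ⋖ s ∧ s ⊓ t ⋖ t
  · obtain ⟨hs, ht⟩ := hinf
    have hs' : s ⋖ s ⊔ t := covBy_sup_of_inf_covBy_right ht
    have ht' : t ⋖ s ⊔ t := covBy_sup_of_inf_covBy_left hs
    obtain ⟨hγs, hγt⟩ := hdc _ _ _ _ hs ht hs' ht' hst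
    simp only [EL.ced, hs, ht, hs', ht', hγs, hγt, true_and]
    rw [← hdiam _ _ _ _ hs ht hs' ht' hst, mul_comm]
  · rw [if_neg fun h => hinf ⟨h.2.1, h.1.1⟩, if_neg fun h => hinf
      ⟨inf_covBy_of_covBy_sup_right h.2.1, inf_covBy_of_covBy_sup_left h.1.1⟩]

lemma commutator_weightMatrix_raising (hstr : ∀ r s : L, r ⋖ s → ∀ j : Fin n,
      EL.mwt γ ρ j s = EL.mwt γ ρ j r + A (γ r s) j) (i j) :
    weightMatrix γ ρ i * raising γ X j - raising γ X j * weightMatrix γ ρ i =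
      (A j i : ℂ) • raising γ X j := by
  ext t r
  rw [Matrix.sub_apply, weightMatrix, diagonal_mul, mul_diagonal, Matrix.smul_apply, smul_eq_mul,
    raising]
  split_ifs with h
  · rw [hstr r t h.1 i, h.2]
    push_cast
    ring
  · simp

lemma commutator_weightMatrix_lowering (hstr : ∀ r s : L, r ⋖ s → ∀ j : Fin n,
      EL.mwt γ ρ j s = EL.mwt γ ρ j r + A (γ r s) j) (i j) :
    weightMatrix γ ρ i * lowering γ Y j - lowering γ Y j * weightMatrix γ ρ i =
      -((A j i : ℂ) • lowering γ Y j) := by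
  ext t s
  rw [Matrix.sub_apply, weightMatrix, diagonal_mul, mul_diagonal, Matrix.neg_apply,
    Matrix.smul_apply, smul_eq_mul, lowering]
  split_ifs with h
  · rw [hstr t s h.1 i, h.2]
    push_cast
    ring
  · simp

/-- The module `V[L]`, with the basis `v_t` indexed by the lattice elements. -/
def latticeModule [IsModularLattice L]
    (hdc : ∀ q r s t : L, q ⋖ r → q ⋖ s → r ⋖ t → s ⋖ t → r ≠ s →
      γ q r = γ s t ∧ γ q s = γ r t)
    (hstr : ∀ r s : L, r ⋖ s → ∀ j : Fin n, EL.mwt γ ρ j s = EL.mwt γ ρ j r + A (γ r s) j)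
    (hdiam : ∀ q r s t : L, q ⋖ r → q ⋖ s → r ⋖ t → s ⋖ t → r ≠ s →
      Y s t * X r t = X q s * Y q r)
    (hcross : ∀ (i : Fin n) (t : L), ((EL.mwt γ ρ i t : ℤ) : ℂ) =
      (∑ q : L, if EL.ced γ i q t then X q t * Y q t else 0) -
      (∑ s : L, if EL.ced γ i t s then X t s * Y t s else 0)) : WeightModule A L (L → ℂ) where
  x := EL.opX γ X
  y := EL.opY γ Y
  h := EL.opH γ ρ
  lie_x_y i j := by
    have hcomm : raising γ X i * lowering γ Y j - lowering γ Y j * raising γ X i =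
        if i = j then weightMatrix γ ρ i else 0 := by
      ext t s
      obtain rfl | hst := eq_or_ne s t
      · rw [commutator_apply_self, ← hcross]
        split_ifs <;> simp [weightMatrix]
      · rw [commutator_apply_of_ne hdc hdiam i j hst]
        split_ifs <;> simp [weightMatrix, hst.symm]
    refine (lie_mulVecLin (raising γ X i) (lowering γ Y j)).trans ?_
    rw [hcomm, apply_ite mulVecLin, mulVecLin_zero]
    rfl
  lie_h_x i j := by
    refine (lie_mulVecLin (weightMatrix γ ρ i) (raising γ X j)).trans ?_
    rw [commutator_weightMatrix_raising hstr]
    exact map_smul (mulVecBilin ℂ ℂ) _ _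
  lie_h_y i j := by
    refine (lie_mulVecLin (weightMatrix γ ρ i) (lowering γ Y j)).trans ?_
    rw [commutator_weightMatrix_lowering hstr]
    exact (map_neg (mulVecBilin ℂ ℂ) _).trans (congrArg _ (map_smul (mulVecBilin ℂ ℂ) _ _))
  basis := Pi.basisFun ℂ L
  weight t i := EL.mwt γ ρ i t
  h_basis i k := by
    rw [Pi.basisFun_apply, EL.opH, mulVecLin_apply, diagonal_mulVec_single, mul_one]
    simp [← Pi.single_smul]

lemma opX_basisFun_eq_zero {t : L} (ht : ∀ s, s ≤ t) (i : Fin n) :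
    EL.opX γ X i (Pi.basisFun ℂ L t) = 0 := by
  rw [Pi.basisFun_apply]
  refine (mulVec_single_one (raising γ X i) t).trans (funext fun s => if_neg fun h => ?_)
  exact h.1.lt.not_ge (ht s)

end EdgeColoredLattice

open AddMonoidAlgebra in
lemma mapRingHom_alt {A : Fin n → Fin n → ℤ} (D : RootGeometry A) (ν : Fin n → ℤ) :
    mapRingHom (Fin n → ℤ) (Int.castRingHom ℂ) (CL.alt A ν) = D.alternant ν := by
  rw [CL.alt, finsum_mem_eq_finite_toFinset_sum _ D.finite_weyl, map_sum]
  exact Finset.sum_congr rfl fun w _ => mapRingHom_single ..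

end WeylCharacter

/-- assuming the equivalent conditions of Proposition 2.1 hold, the Weyl
group `W` is finite and the module `V[L]` is irreducible if and only if
`𝒜(Z^ϱ)·WGF(L;Z) = 𝒜(Z^{λ+ϱ})` in the group algebra `ℤ[ℤ^n]`, where `λ = wt(t_max)`. -/
theorem statement_1 {n : ℕ} (hn : 1 ≤ n) (A : Fin n → Fin n → ℤ)
    (hA : IsCartanMatrixOfRootSystem n A)
    (L : Type) [Fintype L] [Lattice L] [IsModularLattice L]
    (γ : L → L → Fin n)
    (hdc : ∀ q r s t : L, q ⋖ r → q ⋖ s → r ⋖ t → s ⋖ t → r ≠ s →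
      γ q r = γ s t ∧ γ q s = γ r t)
    (ρ : L → ℕ) (hρ : ∀ r s : L, r ⋖ s → ρ s = ρ r + 1)
    (X Y : L → L → ℂ) (hXY : ∀ r s : L, r ⋖ s → ¬(X r s = 0 ∧ Y r s = 0))
    (hstr : ∀ r s : L, r ⋖ s → ∀ j : Fin n, EL.mwt γ ρ j s = EL.mwt γ ρ j r + A (γ r s) j)
    (hdiam : ∀ q r s t : L, q ⋖ r → q ⋖ s → r ⋖ t → s ⋖ t → r ≠ s →
      Y s t * X r t = X q s * Y q r)
    (hcross : ∀ (i : Fin n) (t : L), ((EL.mwt γ ρ i t : ℤ) : ℂ) =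
      (∑ q : L, if EL.ced γ i q t then X q t * Y q t else 0) -
      (∑ s : L, if EL.ced γ i t s then X t s * Y t s else 0))
    (tmax : L) (htmax : ∀ t : L, t ≤ tmax) :
    ((CL.weyl A : Set (Matrix (Fin n) (Fin n) ℤ)).Finite) ∧
    ((∀ U : Submodule ℂ (L → ℂ),
        (∀ i : Fin n, ∀ v ∈ U, EL.opX γ X i v ∈ U ∧ EL.opY γ Y i v ∈ U ∧
          EL.opH γ ρ i v ∈ U) → U = ⊥ ∨ U = ⊤) ↔
      CL.alt A (fun _ => 1) *
          (∑ t : L, AddMonoidAlgebra.single (fun i => EL.mwt γ ρ i t) (1 : ℤ)) =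
        CL.alt A (fun i => EL.mwt γ ρ i tmax + 1)) := by
  obtain ⟨D⟩ := WeylCharacter.exists_rootGeometry hA
  let M := WeylCharacter.latticeModule (A := A) hdc hstr hdiam hcross
  have hmax : M.IsHighestWeightVector (Pi.basisFun ℂ L tmax) fun i => EL.mwt γ ρ i tmax :=
    { ne_zero := (Pi.basisFun ℂ L).ne_zero tmax
      h_apply := fun i => M.h_basis i tmax
      x_apply := WeylCharacter.opX_basisFun_eq_zero htmax }
  refine ⟨D.finite_weyl, (M.forall_isInvariant_eq_bot_or_eq_top_iff D hmax).trans ?_⟩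
  have hinj : Function.Injective (AddMonoidAlgebra.mapRingHom (Fin n → ℤ) (Int.castRingHom ℂ)) :=
    AddMonoidAlgebra.map_injective _ Int.cast_injective
  rw [← hinj.eq_iff, map_mul, WeylCharacter.mapRingHom_alt D, WeylCharacter.mapRingHom_alt D,
    map_sum, M.traceCharacter_one]
  simp only [AddMonoidAlgebra.mapRingHom_single, map_one]
  rfl

end
end
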